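/- arXiv:2402.09829 — 3 statements merged into one kernel-verified Lean document; each statement's English description precedes it below -/
import Mathlib

section
/- Fix c with 1/2 ≤ c < 1. There exists a constant C > 0 such that for all sufficiently large x and every even integer h with 2 ≤ h < x^{1−c}: #{q : 2 < q < x/h, q prime, qh + 1 prime} ≤ 16·𝔖·∏_{p | h, p > 2}(1 + 1/(p − 2)) · (x/h)/(log(x/h))² · (1 + C·log log x/log x), where the product over p | h, p > 2 is 1 if h has no odd prime divisor. -/
open Real Finset

attribute [local instance] Classical.propDecidable

/-- The twin-prime constant `𝔖 = ∏_{p > 2 prime} (1 − 1/(p−1)²)`. -/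
noncomputable def twinConst : ℝ :=
  ∏' p : Nat.Primes, if 2 < (p : ℕ) then 1 - 1 / ((p : ℕ) - 1 : ℝ) ^ 2 else 1

section



noncomputable def gm (v : ℕ → ℝ) (n : ℕ) : ℝ := ∏ p ∈ n.primeFactors, v p

def Dz (z : ℕ) : Finset ℕ := (Finset.Icc 1 z).filter Squarefree

lemma mem_Dz {z d : ℕ} : d ∈ Dz z ↔ (1 ≤ d ∧ d ≤ z) ∧ Squarefree d := by
  simp [Dz]

lemma Dz_dvd {z d e : ℕ} (hd : d ∈ Dz z) (h : e ∣ d) : e ∈ Dz z := by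
  rw [mem_Dz] at *
  exact ⟨⟨Nat.pos_of_dvd_of_pos h hd.1.1, (Nat.le_of_dvd hd.1.1 h).trans hd.1.2⟩,
    hd.2.squarefree_of_dvd h⟩

lemma gm_one (v : ℕ → ℝ) : gm v 1 = 1 := by simp [gm]

lemma gm_pos {v : ℕ → ℝ} (hv : ∀ p, p.Prime → 0 < v p) (n : ℕ) : 0 < gm v n :=
  Finset.prod_pos fun p hp => hv p (Nat.prime_of_mem_primeFactors hp)

lemma gm_mul {v : ℕ → ℝ} {a b : ℕ} (h : a.Coprime b) : gm v (a * b) = gm v a * gm v b := by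
  unfold gm
  rw [h.primeFactors_mul, Finset.prod_union h.disjoint_primeFactors]

lemma gm_prime {v : ℕ → ℝ} {p : ℕ} (h : p.Prime) : gm v p = v p := by
  simp [gm, h.primeFactors]

lemma gm_mul_fun (v w : ℕ → ℝ) (n : ℕ) : gm (fun p => v p * w p) n = gm v n * gm w n := by
  simp [gm, Finset.prod_mul_distrib]

lemma gm_inv (v : ℕ → ℝ) (n : ℕ) : gm (fun p => (v p)⁻¹) n = (gm v n)⁻¹ := by
  simp [gm]

lemma gm_div_of_dvd {v : ℕ → ℝ} (hv : ∀ p, p.Prime → 0 < v p) {d n : ℕ} (hn : Squarefree n)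
    (h : d ∣ n) : gm v (n / d) = gm v n * (gm v d)⁻¹ := by
  obtain ⟨m, rfl⟩ := h
  have hc := Nat.coprime_of_squarefree_mul hn
  have hd : 0 < d := Nat.pos_of_ne_zero (by rintro rfl; simp at hn)
  rw [Nat.mul_div_cancel_left _ hd, gm_mul hc]
  have := (gm_pos hv d).ne'
  field_simp

noncomputable def gmA (v : ℕ → ℝ) : ArithmeticFunction ℝ := ⟨fun n => if n = 0 then 0 else gm v n, by simp⟩

lemma gm_one_add {v : ℕ → ℝ} {n : ℕ} (hn : Squarefree n) :
    gm (fun p => 1 + v p) n = ∑ d ∈ n.divisors, gm v d := by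
  have hm : (gmA v).IsMultiplicative := by
    rw [ArithmeticFunction.IsMultiplicative.iff_ne_zero]
    refine ⟨by simp [gmA, gm], ?_⟩
    intro a b ha hb hab
    simp [gmA, ha, hb, gm_mul hab]
  have := hm.prodPrimeFactors_one_add_of_squarefree hn
  rw [gm]
  convert this using 1
  · refine Finset.prod_congr rfl fun p hp => ?_
    have hp' := (Nat.prime_of_mem_primeFactors hp)
    simp [gmA, hp'.ne_zero, gm_prime hp']
  · refine Finset.sum_congr rfl fun d hd => ?_
    have : d ≠ 0 := (Nat.pos_of_mem_divisors hd).ne'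
    simp [gmA, this]

/-- `gm v (lcm) * gm v (gcd) = gm v a * gm v b`. -/
lemma gm_lcm {v : ℕ → ℝ} {a b : ℕ} (ha : a ≠ 0) (hb : b ≠ 0) :
    gm v (a.lcm b) * gm v (a.gcd b) = gm v a * gm v b := by
  have hl : (a.lcm b).primeFactors = a.primeFactors ∪ b.primeFactors := by
    ext p
    simp only [Nat.mem_primeFactors, Finset.mem_union]
    constructor
    · rintro ⟨hp, h, _⟩
      rcases hp.dvd_mul.1 (h.trans (Nat.lcm_dvd_mul a b)) with h | h
      · exact Or.inl ⟨hp, h, ha⟩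
      · exact Or.inr ⟨hp, h, hb⟩
    · rintro (⟨hp, h, _⟩ | ⟨hp, h, _⟩)
      · exact ⟨hp, h.trans (Nat.dvd_lcm_left a b), Nat.lcm_ne_zero ha hb⟩
      · exact ⟨hp, h.trans (Nat.dvd_lcm_right a b), Nat.lcm_ne_zero ha hb⟩
  unfold gm
  rw [Nat.primeFactors_gcd ha hb, hl, Finset.prod_union_inter]

open ArithmeticFunction in
lemma moebius_interval {l k : ℕ} (hk : Squarefree k) :
    ∑ d ∈ k.divisors with l ∣ d, (moebius d : ℝ) = if l = k then (moebius l : ℝ) else 0 := by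
  by_cases hlk : l ∣ k
  · obtain ⟨m, rfl⟩ := hlk
    have hc := Nat.coprime_of_squarefree_mul hk
    have hl : l ≠ 0 := by rintro rfl; simp at hk
    have hm : m ≠ 0 := by rintro rfl; simp at hk
    have h1 : ∑ d ∈ (l * m).divisors with l ∣ d, (moebius d : ℝ)
        = ∑ e ∈ m.divisors, (moebius l : ℝ) * (moebius e : ℝ) := by
      symm
      refine Finset.sum_bij (fun e _ => l * e) ?_ ?_ ?_ ?_
      · intro e he
        simp only [Finset.mem_filter, Nat.mem_divisors] at he ⊢
        exact ⟨⟨Nat.mul_dvd_mul_left l he.1, by positivity⟩, dvd_mul_right _ _⟩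
      · intro a _ b _ h
        exact Nat.eq_of_mul_eq_mul_left (Nat.pos_of_ne_zero hl) h
      · intro d hd
        simp only [Finset.mem_filter, Nat.mem_divisors] at hd
        obtain ⟨e, rfl⟩ := hd.2
        exact ⟨e, by simp [hm, Nat.dvd_of_mul_dvd_mul_left (Nat.pos_of_ne_zero hl) hd.1.1], rfl⟩
      · intro e he
        have : l.Coprime e := hc.coprime_dvd_right (Nat.dvd_of_mem_divisors he)
        rw [isMultiplicative_moebius.map_mul_of_coprime this]
        push_cast; ring
    rw [h1, ← Finset.mul_sum]
    have h2 : ∑ e ∈ m.divisors, (moebius e : ℝ) = if m = 1 then 1 else 0 := by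
      have := congrArg (fun f : ArithmeticFunction ℤ => f m) (moebius_mul_coe_zeta)
      simp only [coe_mul_zeta_apply, one_apply] at this
      exact_mod_cast this
    rw [h2]
    by_cases h : m = 1
    · simp [h]
    · have : ¬ (l = l * m) := by
        intro hh
        apply h
        have : l * m = l * 1 := by omega
        exact Nat.eq_of_mul_eq_mul_left (Nat.pos_of_ne_zero hl) this
      simp [h, hl]
  · rw [if_neg (by rintro rfl; exact hlk dvd_rfl)]
    apply Finset.sum_eq_zero
    intro d hd
    simp only [Finset.mem_filter, Nat.mem_divisors] at hd
    exact absurd (hd.2.trans hd.1.1) hlk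

noncomputable def selLam (z : ℕ) (v : ℕ → ℝ) (d : ℕ) : ℝ :=
  (ArithmeticFunction.moebius d : ℝ) * gm (fun p => 1 + (v p)⁻¹) d *
    (∑ l ∈ Dz z with d ∣ l, gm v l) / ∑ l ∈ Dz z, gm v l


lemma G_pos {z : ℕ} {v : ℕ → ℝ} (hz : 1 ≤ z) (hv : ∀ p, p.Prime → 0 < v p) : 0 < ∑ l ∈ Dz z, gm v l :=
  Finset.sum_pos (fun l _ => gm_pos hv l) ⟨1, by simp [mem_Dz, hz]⟩

lemma selLam_one {z : ℕ} {v : ℕ → ℝ} (hz : 1 ≤ z) (hv : ∀ p, p.Prime → 0 < v p) : selLam z v 1 = 1 := by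
  have := (G_pos hz hv).ne'
  simp [selLam, gm_one, this]

lemma selLam_abs {z : ℕ} {v : ℕ → ℝ} (hz : 1 ≤ z) (hv : ∀ p, p.Prime → 0 < v p) {d : ℕ} (hd : d ∈ Dz z) : |selLam z v d| ≤ 1 := by
  have hG := G_pos hz hv
  have hf : 0 < gm (fun p => 1 + (v p)⁻¹) d :=
    gm_pos (fun p hp => by have := hv p hp; positivity) d
  have hS : 0 ≤ ∑ l ∈ Dz z with d ∣ l, gm v l := Finset.sum_nonneg fun l _ => (gm_pos hv l).le
  unfold selLam
  rw [abs_div, abs_mul, abs_mul, abs_of_pos hG, abs_of_pos hf, abs_of_nonneg hS, div_le_one hG]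
  have hmu : |(ArithmeticFunction.moebius d : ℝ)| ≤ 1 := by
    exact_mod_cast ArithmeticFunction.abs_moebius_le_one
  have hdz := mem_Dz.1 hd
  have key : gm (fun p => 1 + (v p)⁻¹) d * (∑ l ∈ Dz z with d ∣ l, gm v l) ≤ ∑ l ∈ Dz z, gm v l := by
    rw [gm_one_add hdz.2, Finset.sum_mul_sum, ← Finset.sum_product']
    have : ∀ x ∈ d.divisors ×ˢ (Dz z).filter (fun l => d ∣ l),
        gm (fun p => (v p)⁻¹) x.1 * gm v x.2 = gm v (x.2 / x.1) := by
      rintro ⟨e, l⟩ hx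
      simp only [Finset.mem_product, Finset.mem_filter, Nat.mem_divisors, mem_Dz] at hx
      simp only
      rw [gm_div_of_dvd hv hx.2.1.2 (hx.1.1.trans hx.2.2), gm_inv, mul_comm]
    rw [Finset.sum_congr rfl this]
    rw [← Finset.sum_image (s := d.divisors ×ˢ (Dz z).filter (fun l => d ∣ l))
      (g := fun x : ℕ × ℕ => x.2 / x.1) (f := fun k => gm v k)]
    · apply Finset.sum_le_sum_of_subset_of_nonneg
      · intro k hk
        simp only [Finset.mem_image, Finset.mem_product, Finset.mem_filter, Nat.mem_divisors] at hk
        obtain ⟨⟨e, l⟩, h, rfl⟩ := hk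
        exact Dz_dvd h.2.1 (Nat.div_dvd_of_dvd (h.1.1.trans h.2.2))
      · intro k _ _; exact (gm_pos hv k).le
    · rintro ⟨e, l⟩ h ⟨e', l'⟩ h' heq
      simp only [Finset.coe_product, Set.mem_prod, Finset.mem_coe, Finset.mem_filter,
        Nat.mem_divisors, mem_Dz] at h h'
      simp only at heq
      have aux : ∀ e l : ℕ, e ∣ d → d ∣ l → Squarefree l → (l / e).gcd d = d / e := by
        rintro e l ⟨a, rfl⟩ ⟨b, rfl⟩ hsq
        have he : 0 < e := Nat.pos_of_ne_zero (by rintro rfl; simp at hsq)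
        rw [mul_assoc, Nat.mul_div_cancel_left _ he, Nat.mul_div_cancel_left _ he, mul_comm e a,
          Nat.gcd_mul_left]
        have : b.Coprime e := by
          have h3 : Squarefree (e * b) := hsq.squarefree_of_dvd ⟨a, by ring⟩
          exact (Nat.coprime_of_squarefree_mul h3).symm
        rw [this, mul_one]
      have h1 := aux e l h.1.1 h.2.2 h.2.1.2
      have h2 := aux e' l' h'.1.1 h'.2.2 h'.2.1.2
      have hee : e = e' := by
        have h3 : d / e = d / e' := by rw [← h1, ← h2, heq]
        have hd0 : d ≠ 0 := h.1.2
        rw [← Nat.div_div_self h.1.1 hd0, ← Nat.div_div_self h'.1.1 hd0, h3]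
      subst hee
      have : l = l' := by
        rw [← Nat.div_mul_cancel (h.1.1.trans h.2.2), ← Nat.div_mul_cancel (h'.1.1.trans h'.2.2), heq]
      rw [this]
  calc _ ≤ 1 * gm (fun p => 1 + (v p)⁻¹) d * (∑ l ∈ Dz z with d ∣ l, gm v l) := by gcongr
    _ ≤ _ := by rw [one_mul]; exact key

lemma selLam_y {z : ℕ} {v : ℕ → ℝ} (hz : 1 ≤ z) (hv : ∀ p, p.Prime → 0 < v p) {l : ℕ} (hl : l ∈ Dz z) :
    ∑ d ∈ Dz z with l ∣ d, selLam z v d * (gm (fun p => 1 + (v p)⁻¹) d)⁻¹ =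
      (ArithmeticFunction.moebius l : ℝ) * gm v l / ∑ l ∈ Dz z, gm v l := by
  have hG := G_pos hz hv
  have h1 : ∀ d, selLam z v d * (gm (fun p => 1 + (v p)⁻¹) d)⁻¹ =
      (∑ k ∈ Dz z with d ∣ k, (ArithmeticFunction.moebius d : ℝ) * gm v k) / ∑ l ∈ Dz z, gm v l := by
    intro d
    have hf : 0 < gm (fun p => 1 + (v p)⁻¹) d :=
      gm_pos (fun p hp => by have := hv p hp; positivity) d
    rw [← Finset.mul_sum, selLam]
    generalize gm (fun p => 1 + (v p)⁻¹) d = F at hf ⊢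
    field_simp
  simp_rw [h1]
  rw [← Finset.sum_div]
  congr 1
  have h2 : ∑ d ∈ Dz z with l ∣ d, ∑ k ∈ Dz z with d ∣ k, (ArithmeticFunction.moebius d : ℝ) * gm v k
      = ∑ k ∈ Dz z, ∑ d ∈ k.divisors with l ∣ d, (ArithmeticFunction.moebius d : ℝ) * gm v k := by
    apply Finset.sum_comm'
    intro d k
    simp only [Finset.mem_filter, Nat.mem_divisors]
    constructor
    · rintro ⟨⟨a, b⟩, c, e⟩
      exact ⟨⟨⟨e, by have := (mem_Dz.1 c).1; omega⟩, b⟩, c⟩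
    · rintro ⟨⟨⟨a, b⟩, c⟩, e⟩
      exact ⟨⟨Dz_dvd e a, c⟩, e, a⟩
  rw [h2]
  have h3 : ∀ k ∈ Dz z, ∑ d ∈ k.divisors with l ∣ d, (ArithmeticFunction.moebius d : ℝ) * gm v k
      = if l = k then (ArithmeticFunction.moebius l : ℝ) * gm v l else 0 := by
    intro k hk
    rw [← Finset.sum_mul, moebius_interval (mem_Dz.1 hk).2]
    split_ifs with h
    · rw [h]
    · simp
  rw [Finset.sum_congr rfl h3]
  simp [hl]

lemma selLam_quad {z : ℕ} {v : ℕ → ℝ} (hz : 1 ≤ z) (hv : ∀ p, p.Prime → 0 < v p) :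
    ∑ d ∈ Dz z, ∑ e ∈ Dz z, selLam z v d * selLam z v e * (gm (fun p => 1 + (v p)⁻¹) (d.lcm e))⁻¹
      = (∑ l ∈ Dz z, gm v l)⁻¹ := by
  have hG := G_pos hz hv
  set f := gm (fun p => 1 + (v p)⁻¹) with hf
  have hfpos : ∀ d, 0 < f d := gm_pos (fun p hp => by have := hv p hp; positivity)
  have h1 : ∀ d ∈ Dz z, ∀ e ∈ Dz z, selLam z v d * selLam z v e * (f (d.lcm e))⁻¹
      = ∑ l ∈ Dz z, if l ∣ d ∧ l ∣ e then
        (gm v l)⁻¹ * (selLam z v d * (f d)⁻¹) * (selLam z v e * (f e)⁻¹) else 0 := by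
    intro d hd e he
    have hd' := mem_Dz.1 hd
    have he' := mem_Dz.1 he
    have h2 : (f (d.lcm e))⁻¹ = f (d.gcd e) * (f d)⁻¹ * (f e)⁻¹ := by
      have := gm_lcm (v := fun p => 1 + (v p)⁻¹) (a := d) (b := e) (by omega) (by omega)
      rw [← hf] at this
      have a1 := (hfpos d).ne'
      have a2 := (hfpos e).ne'
      have a3 := (hfpos (d.lcm e)).ne'
      field_simp
      linarith
    have h3 : f (d.gcd e) = ∑ l ∈ Dz z with l ∣ d ∧ l ∣ e, (gm v l)⁻¹ := by
      rw [hf, gm_one_add (hd'.2.squarefree_of_dvd (Nat.gcd_dvd_left d e))]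
      simp_rw [gm_inv]
      apply Finset.sum_congr _ (fun _ _ => rfl)
      ext l
      simp only [Nat.mem_divisors, Finset.mem_filter, Nat.dvd_gcd_iff]
      constructor
      · rintro ⟨h, _⟩; exact ⟨Dz_dvd hd h.1, h⟩
      · rintro ⟨_, h⟩; exact ⟨h, Nat.gcd_ne_zero_left (by omega)⟩
    rw [h2, h3, ← Finset.sum_filter]
    simp only [Finset.sum_mul, Finset.mul_sum]
    apply Finset.sum_congr rfl
    intro l _
    ring
  rw [Finset.sum_congr rfl fun d hd => Finset.sum_congr rfl (h1 d hd)]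
  have h4 : ∑ d ∈ Dz z, ∑ e ∈ Dz z, ∑ l ∈ Dz z, (if l ∣ d ∧ l ∣ e then
        (gm v l)⁻¹ * (selLam z v d * (f d)⁻¹) * (selLam z v e * (f e)⁻¹) else 0)
      = ∑ l ∈ Dz z, (gm v l)⁻¹ * (∑ d ∈ Dz z with l ∣ d, selLam z v d * (f d)⁻¹) ^ 2 := by
    rw [Finset.sum_congr rfl fun d _ => Finset.sum_comm, Finset.sum_comm]
    apply Finset.sum_congr rfl
    intro l _
    rw [sq, Finset.sum_mul_sum, Finset.mul_sum, Finset.sum_filter]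
    apply Finset.sum_congr rfl
    intro d _
    rw [Finset.mul_sum]
    by_cases hld : l ∣ d
    · simp only [hld, true_and, if_true]
      rw [Finset.sum_filter]
      apply Finset.sum_congr rfl
      intro e _
      split_ifs
      · ring
      · rfl
    · simp [hld]
  rw [h4]
  have h5 : ∀ l ∈ Dz z, (gm v l)⁻¹ * (∑ d ∈ Dz z with l ∣ d, selLam z v d * (f d)⁻¹) ^ 2
      = gm v l / (∑ l ∈ Dz z, gm v l) ^ 2 := by
    intro l hl
    rw [selLam_y hz hv hl]
    have hmu : (ArithmeticFunction.moebius l : ℝ) ^ 2 = 1 := by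
      have := ArithmeticFunction.moebius_sq_eq_one_of_squarefree (mem_Dz.1 hl).2
      exact_mod_cast this
    have hp := (gm_pos hv l).ne'
    rw [div_pow, mul_pow, hmu]
    field_simp
  rw [Finset.sum_congr rfl h5, ← Finset.sum_div]
  field_simp
noncomputable def rhoP (h : ℕ) (p : ℕ) : ℝ := if p ∣ h then 1 else 2

lemma rhoP_one_le (h p : ℕ) : 1 ≤ rhoP h p := by unfold rhoP; split_ifs <;> norm_num

lemma gm_rho_eq {h d : ℕ} (hd : Squarefree d) :
    gm (rhoP h) d = ((d.divisors.filter (fun b => b.Coprime h)).card : ℝ) := by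
  have h1 : gm (rhoP h) d = gm (fun p => 1 + (if p ∣ h then 0 else 1)) d := by
    unfold gm
    apply Finset.prod_congr rfl
    intro p _
    unfold rhoP
    by_cases hph : p ∣ h
    · simp [hph]
    · simp only [hph, if_false]; norm_num
  rw [h1, gm_one_add hd, Finset.card_filter]
  push_cast
  apply Finset.sum_congr rfl
  intro b hb
  have hb0 : b ≠ 0 := (Nat.pos_of_mem_divisors hb).ne'
  unfold gm
  split_ifs with hc
  · apply Finset.prod_eq_one
    intro p hp
    rw [if_neg]
    intro hph
    have := Nat.dvd_gcd (Nat.dvd_of_mem_primeFactors hp) hph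
    rw [hc] at this
    exact (Nat.prime_of_mem_primeFactors hp).one_lt.ne' (Nat.dvd_one.1 this)
  · obtain ⟨p, hp, hpb, hph⟩ := Nat.Prime.not_coprime_iff_dvd.1 hc
    exact Finset.prod_eq_zero (Nat.mem_primeFactors.2 ⟨hp, hpb, hb0⟩) (by simp [hph])

lemma count_class (M d r : ℕ) (hd : 0 < d) :
    |(((Finset.Ioc 0 M).filter (fun n => n ≡ r [MOD d])).card : ℝ) - (M : ℝ) / d| ≤ 1 := by
  have := Nat.Ioc_filter_modEq_card 0 M hd r
  have hd' : (0:ℝ) < d := by exact_mod_cast hd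
  have h1 : (((Finset.Ioc 0 M).filter (fun n => n ≡ r [MOD d])).card : ℚ) =
    (max (⌊((M:ℚ) - r) / d⌋ - ⌊(((0:ℕ):ℚ) - r) / d⌋) 0 : ℤ) := by exact_mod_cast this
  set N := ((Finset.Ioc 0 M).filter (fun n => n ≡ r [MOD d])).card
  have a1 := Int.floor_le (((M:ℚ) - r) / d)
  have a2 := Int.lt_floor_add_one (((M:ℚ) - r) / d)
  have a3 := Int.floor_le ((((0:ℕ):ℚ) - r) / d)
  have a4 := Int.lt_floor_add_one ((((0:ℕ):ℚ) - r) / d)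
  have a5 : ((M:ℚ) - r) / d - (((0:ℕ):ℚ) - r) / d = M / d := by push_cast; ring
  have a6 : (0:ℚ) ≤ M / d := by positivity
  have goal : |(N : ℚ) - (M : ℚ) / d| ≤ 1 := by
    rw [h1]
    push_cast
    push_cast at a3 a4 a5
    rw [abs_le]
    constructor
    · have := le_max_left ((⌊((M:ℚ) - r) / d⌋:ℚ) - (⌊((0:ℚ) - r) / d⌋ : ℚ)) 0
      linarith
    · have : max ((⌊((M:ℚ) - r) / d⌋:ℚ) - (⌊((0:ℚ) - r) / d⌋ : ℚ)) 0 ≤ M / d + 1 := by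
        apply max_le <;> linarith
      linarith
  have goal' : ((|(N : ℚ) - (M : ℚ) / d| : ℚ) : ℝ) ≤ ((1 : ℚ) : ℝ) := Rat.cast_le.2 goal
  push_cast at goal'
  exact goal'

lemma count_fibre {M d h b : ℕ} (hd : Squarefree d) (hb : b ∣ d) (hbh : b.Coprime h) :
    |(((Finset.Ioc 0 M).filter (fun n => d / b ∣ n ∧ b ∣ n * h + 1)).card : ℝ) - (M : ℝ) / d| ≤ 1 := by
  obtain ⟨a, rfl⟩ := hb
  have hab : b.Coprime a := Nat.coprime_of_squarefree_mul hd
  have hb0 : 0 < b := Nat.pos_of_ne_zero (by rintro rfl; simp at hd)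
  have ha0 : 0 < a := Nat.pos_of_ne_zero (by rintro rfl; simp at hd)
  rw [Nat.mul_div_cancel_left _ hb0]
  have : ∃ r0 : ℕ, b ∣ r0 * h + 1 := by
    have hu : IsUnit (h : ZMod b) := (ZMod.isUnit_iff_coprime h b).2 hbh.symm
    obtain ⟨u, hu⟩ := hu
    have : NeZero b := ⟨hb0.ne'⟩
    refine ⟨((-(↑u⁻¹ : ZMod b))).val, ?_⟩
    rw [← ZMod.natCast_eq_zero_iff]
    push_cast
    rw [ZMod.natCast_zmod_val, ← hu]
    simp
  obtain ⟨r0, hr0⟩ := this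
  obtain ⟨r, hr1, hr2⟩ := Nat.chineseRemainder hab r0 0
  have hset : (Finset.Ioc 0 M).filter (fun n => a ∣ n ∧ b ∣ n * h + 1)
      = (Finset.Ioc 0 M).filter (fun n => n ≡ r [MOD (b * a)]) := by
    apply Finset.filter_congr
    intro n _
    rw [← Nat.modEq_and_modEq_iff_modEq_mul hab]
    have e1 : b ∣ n * h + 1 ↔ n ≡ r [MOD b] := by
      constructor
      · intro hn
        have h1 : n * h + 1 ≡ r0 * h + 1 [MOD b] :=
          ((Nat.modEq_zero_iff_dvd).2 hn).trans ((Nat.modEq_zero_iff_dvd).2 hr0).symm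
        have h2 : n * h ≡ r0 * h [MOD b] := Nat.ModEq.add_right_cancel' 1 h1
        exact (Nat.ModEq.cancel_right_of_coprime hbh h2).trans hr1.symm
      · intro hn
        have h1 : n * h + 1 ≡ r0 * h + 1 [MOD b] := ((hn.trans hr1).mul_right h).add_right 1
        exact (Nat.modEq_zero_iff_dvd).1 (h1.trans ((Nat.modEq_zero_iff_dvd).2 hr0))
    have e2 : a ∣ n ↔ n ≡ r [MOD a] := by
      rw [← Nat.modEq_zero_iff_dvd]
      exact ⟨fun h => h.trans hr2.symm, fun h => h.trans hr2⟩
    rw [e1, e2, and_comm]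
  rw [hset]
  exact count_class M (b * a) r (by positivity)

lemma count_dvd {M d h : ℕ} (hd : Squarefree d) :
    |(((Finset.Ioc 0 M).filter (fun n => d ∣ n * (n * h + 1))).card : ℝ) - (M : ℝ) * (gm (rhoP h) d / d)|
      ≤ gm (rhoP h) d := by
  have hd0 : d ≠ 0 := hd.ne_zero
  have hcard : ((Finset.Ioc 0 M).filter (fun n => d ∣ n * (n * h + 1))).card
      = ∑ b ∈ d.divisors.filter (fun b => b.Coprime h),
        ((Finset.Ioc 0 M).filter (fun n => d / b ∣ n ∧ b ∣ n * h + 1)).card := by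
    rw [Finset.card_eq_sum_card_fiberwise (f := fun n => d.gcd (n * h + 1))
      (t := d.divisors.filter (fun b => b.Coprime h))]
    · apply Finset.sum_congr rfl
      intro b hb
      rw [Finset.filter_filter]
      congr 1
      apply Finset.filter_congr
      intro n _
      simp only [Finset.mem_filter, Nat.mem_divisors] at hb
      obtain ⟨⟨hbd, -⟩, hbh⟩ := hb
      obtain ⟨a, rfl⟩ := hbd
      have hb0 : 0 < b := Nat.pos_of_ne_zero (by rintro rfl; simp at hd)
      rw [Nat.mul_div_cancel_left _ hb0]
      have hcop : n.Coprime (n * h + 1) := by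
        rw [Nat.coprime_mul_left_add_right]; exact Nat.coprime_one_right n
      constructor
      · rintro ⟨h1, h2⟩
        have hbn : b ∣ n * h + 1 := h2 ▸ Nat.gcd_dvd_right _ _
        refine ⟨?_, hbn⟩
        obtain ⟨k, hk⟩ := hbn
        rw [hk, Nat.gcd_mul_left] at h2
        have h3 : a.gcd k = 1 := Nat.eq_of_mul_eq_mul_left hb0 (by omega)
        rw [hk] at h1
        have h4 : b * a ∣ b * (n * k) := by convert h1 using 1; ring
        exact Nat.Coprime.dvd_of_dvd_mul_right h3 (Nat.dvd_of_mul_dvd_mul_left hb0 h4)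
      · rintro ⟨h1, h2⟩
        refine ⟨by rw [mul_comm]; exact Nat.mul_dvd_mul h1 h2, ?_⟩
        have h3 : a.Coprime (n * h + 1) := hcop.coprime_dvd_left h1
        rw [mul_comm b a, h3.gcd_mul_left_cancel b]
        exact Nat.gcd_eq_left h2
    · intro n _
      simp only [Finset.coe_filter, Set.mem_ofPred_eq, Nat.mem_divisors]
      refine ⟨⟨Nat.gcd_dvd_left _ _, hd0⟩, ?_⟩
      apply Nat.Coprime.coprime_dvd_left (Nat.gcd_dvd_right _ _)
      rw [Nat.coprime_comm, Nat.coprime_mul_right_add_right]; exact Nat.coprime_one_right h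
  rw [hcard, gm_rho_eq hd]
  push_cast
  set T := d.divisors.filter (fun b => b.Coprime h)
  have h1 : (M : ℝ) * ((T.card : ℝ) / d) = ∑ b ∈ T, (M : ℝ) / d := by
    rw [Finset.sum_const, nsmul_eq_mul]; ring
  rw [h1, ← Finset.sum_sub_distrib]
  refine (Finset.abs_sum_le_sum_abs _ _).trans ?_
  calc _ ≤ ∑ b ∈ T, (1:ℝ) := by
        apply Finset.sum_le_sum
        intro b hb
        simp only [T, Finset.mem_filter, Nat.mem_divisors] at hb
        exact count_fibre hd hb.1.1 hb.2
    _ = _ := by simp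

noncomputable def vh (h : ℕ) (p : ℕ) : ℝ := rhoP h p / (p - rhoP h p)

lemma rhoP_lt {h p : ℕ} (hh : 2 ∣ h) (hp : p.Prime) : rhoP h p < p := by
  unfold rhoP
  split_ifs with hd
  · exact_mod_cast hp.one_lt
  · have : p ≠ 2 := by rintro rfl; exact hd hh
    exact_mod_cast lt_of_le_of_ne hp.two_le this.symm

lemma vh_pos {h p : ℕ} (hh : 2 ∣ h) (hp : p.Prime) : 0 < vh h p := by
  have h1 := rhoP_lt hh hp
  have h2 := rhoP_one_le h p
  unfold vh
  apply div_pos <;> linarith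

lemma gm_vh {h d : ℕ} (hh : 2 ∣ h) (hd : Squarefree d) :
    gm (rhoP h) d / d = (gm (fun p => 1 + (vh h p)⁻¹) d)⁻¹ := by
  have h1 : (d : ℝ) = ∏ p ∈ d.primeFactors, (p:ℝ) := by
    have := congrArg (Nat.cast : ℕ → ℝ) (Nat.prod_primeFactors_of_squarefree hd).symm
    push_cast at this
    exact this
  rw [← gm_inv]
  conv_lhs => rw [h1]
  unfold gm
  rw [← Finset.prod_div_distrib]
  apply Finset.prod_congr rfl
  intro p hp
  have hp := Nat.prime_of_mem_primeFactors hp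
  have h2 := rhoP_lt hh hp
  have h3 := rhoP_one_le h p
  have h4 : (0:ℝ) < p := by linarith
  unfold vh
  have h5 : rhoP h p ≠ 0 := by linarith
  have h6 : (p:ℝ) - rhoP h p ≠ 0 := by linarith
  have : 1 + (rhoP h p / (↑p - rhoP h p))⁻¹ = p / rhoP h p := by field_simp; ring
  beta_reduce
  rw [this, inv_div]

lemma gm_rho_lcm_le {h d e : ℕ} (hd : d ≠ 0) (he : e ≠ 0) :
    gm (rhoP h) (d.lcm e) ≤ gm (rhoP h) d * gm (rhoP h) e := by
  rw [← gm_lcm hd he]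
  have h1 : 1 ≤ gm (rhoP h) (d.gcd e) := Finset.one_le_prod (fun p _ => rhoP_one_le h p)
  have h2 : 0 < gm (rhoP h) (d.lcm e) := gm_pos (fun p _ => by linarith [rhoP_one_le h p]) _
  nlinarith

lemma sum_rho_le {z h : ℕ} (hz : 1 ≤ z) :
    ∑ d ∈ Dz z, gm (rhoP h) d ≤ z * (1 + Real.log z) := by
  have h1 : ∑ d ∈ Dz z, gm (rhoP h) d ≤ ∑ d ∈ Finset.Ioc 0 z, (d.divisors.card : ℝ) := by
    calc ∑ d ∈ Dz z, gm (rhoP h) d ≤ ∑ d ∈ Dz z, (d.divisors.card : ℝ) := by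
          apply Finset.sum_le_sum
          intro d hd
          rw [gm_rho_eq (mem_Dz.1 hd).2]
          exact_mod_cast Finset.card_filter_le _ _
      _ ≤ _ := by
          apply Finset.sum_le_sum_of_subset_of_nonneg
          · intro d hd
            have := (mem_Dz.1 hd).1
            simp only [Finset.mem_Ioc]; omega
          · intros; positivity
  have h2 : ∑ d ∈ Finset.Ioc 0 z, (d.divisors.card : ℝ) = ∑ a ∈ Finset.Ioc 0 z, ((z / a : ℕ) : ℝ) := by
    have : ∀ d ∈ Finset.Ioc 0 z, (d.divisors.card : ℝ)
        = ∑ a ∈ Finset.Ioc 0 z, if a ∣ d then (1:ℝ) else 0 := by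
      intro d hd
      rw [Finset.mem_Ioc] at hd
      rw [← Finset.sum_filter, Finset.sum_const, nsmul_eq_mul, mul_one]
      congr 2
      ext a
      simp only [Nat.mem_divisors, Finset.mem_filter, Finset.mem_Ioc]
      constructor
      · rintro ⟨h1, h2⟩
        have := Nat.le_of_dvd (by omega) h1
        have := Nat.pos_of_dvd_of_pos h1 (by omega)
        exact ⟨⟨by omega, by omega⟩, h1⟩
      · rintro ⟨h1, h2⟩; exact ⟨h2, by omega⟩
    rw [Finset.sum_congr rfl this, Finset.sum_comm]
    apply Finset.sum_congr rfl
    intro a _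
    rw [← Finset.sum_filter, Finset.sum_const, nsmul_eq_mul, mul_one, Nat.Ioc_filter_dvd_card_eq_div]
  have h3 : ∑ a ∈ Finset.Ioc 0 z, ((z / a : ℕ) : ℝ) ≤ z * (harmonic z : ℝ) := by
    rw [harmonic_eq_sum_Icc]
    push_cast
    rw [Finset.mul_sum]
    have : Finset.Ioc 0 z = Finset.Icc 1 z := by ext; simp [Nat.lt_iff_add_one_le]
    rw [this]
    apply Finset.sum_le_sum
    intro a _
    rw [← div_eq_mul_inv]
    exact Nat.cast_div_le
  have h4 : (harmonic z : ℝ) ≤ 1 + Real.log z := by exact_mod_cast harmonic_le_one_add_log z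
  calc _ ≤ _ := h1
    _ = _ := h2
    _ ≤ _ := h3
    _ ≤ _ := by gcongr

lemma sieve_main {M z h : ℕ} (hz : 1 ≤ z) (hh : 2 ∣ h) (S : Finset ℕ) (hS : S ⊆ Finset.Ioc 0 M)
    (hp : ∀ q ∈ S, q.Prime ∧ (q * h + 1).Prime) (hh0 : 0 < h) :
    (S.card : ℝ) ≤ z + M / (∑ l ∈ Dz z, gm (vh h) l) + (z * (1 + Real.log z)) ^ 2 := by
  have hv : ∀ p, p.Prime → 0 < vh h p := fun p hp => vh_pos hh hp
  set lam := selLam z (vh h) with hlam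
  set W : ℕ → ℝ := fun n => ∑ d ∈ Dz z with d ∣ n * (n * h + 1), lam d with hW
  have h1 : (S.card : ℝ) ≤ z + ∑ n ∈ Finset.Ioc 0 M, W n ^ 2 := by
    have e1 : S.card ≤ z + (S.filter (fun q => z < q)).card := by
      rw [← Finset.card_filter_add_card_filter_not (s := S) (fun q => z < q), add_comm]
      gcongr
      calc _ ≤ (Finset.Ioc 0 z).card := by
            apply Finset.card_le_card
            intro q hq
            simp only [Finset.mem_filter, not_lt] at hq
            have := Finset.mem_Ioc.1 (hS hq.1)
            simp only [Finset.mem_Ioc]; omega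
        _ = z := by simp
    have e2 : ((S.filter (fun q => z < q)).card : ℝ) ≤ ∑ n ∈ S.filter (fun q => z < q), W n ^ 2 := by
      rw [Finset.card_eq_sum_ones]
      push_cast
      apply Finset.sum_le_sum
      intro n hn
      rw [Finset.mem_filter] at hn
      have hW1 : W n = 1 := by
        have : (Dz z).filter (fun d => d ∣ n * (n * h + 1)) = {1} := by
          ext d
          simp only [Finset.mem_filter, Finset.mem_singleton]
          constructor
          · rintro ⟨hd, hdn⟩
            by_contra hd1
            obtain ⟨p, pp, hpd⟩ := Nat.exists_prime_and_dvd hd1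
            have hpz : p ≤ z := (mem_Dz.1 (Dz_dvd hd hpd)).1.2
            have hq := hp n hn.1
            rcases (pp.dvd_mul).1 (hpd.trans hdn) with h' | h'
            · have := (Nat.prime_dvd_prime_iff_eq pp hq.1).1 h'
              omega
            · have := (Nat.prime_dvd_prime_iff_eq pp hq.2).1 h'
              nlinarith
          · rintro rfl; exact ⟨by simp [mem_Dz, hz], one_dvd _⟩
        simp only [hW, this, Finset.sum_singleton]
        exact selLam_one hz hv
      rw [hW1]; norm_num
    have e3 : ∑ n ∈ S.filter (fun q => z < q), W n ^ 2 ≤ ∑ n ∈ Finset.Ioc 0 M, W n ^ 2 :=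
      Finset.sum_le_sum_of_subset_of_nonneg ((Finset.filter_subset _ _).trans hS)
        (fun _ _ _ => sq_nonneg _)
    have e1' : (S.card : ℝ) ≤ z + ((S.filter (fun q => z < q)).card : ℝ) := by exact_mod_cast e1
    linarith
  have h2 : ∑ n ∈ Finset.Ioc 0 M, W n ^ 2 = ∑ d ∈ Dz z, ∑ e ∈ Dz z, lam d * lam e *
      (((Finset.Ioc 0 M).filter (fun n => d.lcm e ∣ n * (n * h + 1))).card : ℝ) := by
    have : ∀ n, W n ^ 2 = ∑ d ∈ Dz z, ∑ e ∈ Dz z,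
        if d.lcm e ∣ n * (n * h + 1) then lam d * lam e else 0 := by
      intro n
      rw [sq]
      simp only [hW, Finset.sum_filter]
      rw [Finset.sum_mul_sum]
      apply Finset.sum_congr rfl
      intro d _
      apply Finset.sum_congr rfl
      intro e _
      simp only [Nat.lcm_dvd_iff]
      by_cases a : d ∣ n * (n * h + 1) <;> by_cases b : e ∣ n * (n * h + 1) <;> simp [a, b]
    simp_rw [this]
    rw [Finset.sum_comm]
    apply Finset.sum_congr rfl
    intro d _
    rw [Finset.sum_comm]
    apply Finset.sum_congr rfl
    intro e _
    rw [← Finset.sum_filter, Finset.sum_const, nsmul_eq_mul, mul_comm]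
  have h3 : ∀ d ∈ Dz z, ∀ e ∈ Dz z, lam d * lam e *
      (((Finset.Ioc 0 M).filter (fun n => d.lcm e ∣ n * (n * h + 1))).card : ℝ) ≤
      M * (lam d * lam e * (gm (fun p => 1 + (vh h p)⁻¹) (d.lcm e))⁻¹) +
        gm (rhoP h) d * gm (rhoP h) e := by
    intro d hd e he
    have hd' := mem_Dz.1 hd
    have he' := mem_Dz.1 he
    have hsq : Squarefree (d.lcm e) := by
      rw [Nat.squarefree_iff_factorization_le_one (Nat.lcm_ne_zero (by omega) (by omega))]
      intro p
      rw [Nat.factorization_lcm (by omega) (by omega)]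
      simp only [Finsupp.sup_apply]
      exact sup_le (hd'.2.natFactorization_le_one p) (he'.2.natFactorization_le_one p)
    have hc := count_dvd (M := M) (h := h) hsq
    rw [gm_vh hh hsq] at hc
    set N : ℝ := (((Finset.Ioc 0 M).filter (fun n => d.lcm e ∣ n * (n * h + 1))).card : ℝ)
    set f := (gm (fun p => 1 + (vh h p)⁻¹) (d.lcm e))⁻¹
    have hl : |lam d * lam e| ≤ 1 := by
      rw [abs_mul]
      exact mul_le_one₀ (selLam_abs hz hv hd) (abs_nonneg _) (selLam_abs hz hv he)
    have h5 : lam d * lam e * (N - M * f) ≤ gm (rhoP h) d * gm (rhoP h) e := by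
      calc _ ≤ |lam d * lam e * (N - M * f)| := le_abs_self _
        _ = |lam d * lam e| * |N - M * f| := abs_mul _ _
        _ ≤ 1 * gm (rhoP h) (d.lcm e) := by gcongr
        _ ≤ _ := by rw [one_mul]; exact gm_rho_lcm_le (by omega) (by omega)
    linarith
  have h4 : ∑ n ∈ Finset.Ioc 0 M, W n ^ 2 ≤ M / (∑ l ∈ Dz z, gm (vh h) l) +
      (∑ d ∈ Dz z, gm (rhoP h) d) ^ 2 := by
    rw [h2]
    refine (Finset.sum_le_sum fun d hd => Finset.sum_le_sum (h3 d hd)).trans ?_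
    simp only [Finset.sum_add_distrib, ← Finset.mul_sum]
    rw [selLam_quad hz hv, ← Finset.sum_mul, sq, div_eq_mul_inv]
  have h5 := sum_rho_le (z := z) (h := h) hz
  have h6 : 0 ≤ ∑ d ∈ Dz z, gm (rhoP h) d :=
    Finset.sum_nonneg fun d _ => (gm_pos (fun p _ => by linarith [rhoP_one_le h p]) _).le
  have h7 := pow_le_pow_left₀ h6 h5 2
  linarith

lemma G_split (z : ℕ) (v : ℕ → ℝ) {p : ℕ} (hp : p.Prime) :
    ∑ d ∈ Dz z, gm v d = ∑ d ∈ Dz z with ¬ p ∣ d, gm v d +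
      v p * ∑ d ∈ Dz z with (¬ p ∣ d ∧ p * d ≤ z), gm v d := by
  rw [← Finset.sum_filter_add_sum_filter_not (Dz z) (fun d => ¬ p ∣ d)]
  congr 1
  rw [Finset.mul_sum]
  symm
  refine Finset.sum_bij (fun d _ => p * d) ?_ ?_ ?_ ?_
  · intro d hd
    simp only [Finset.mem_filter, mem_Dz, not_not] at hd ⊢
    refine ⟨⟨⟨Nat.mul_pos hp.pos (by omega), hd.2.2⟩, ?_⟩, dvd_mul_right _ _⟩
    rw [Nat.squarefree_mul ((Nat.Prime.coprime_iff_not_dvd hp).2 hd.2.1)]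
    exact ⟨hp.prime.squarefree, hd.1.2⟩
  · intro a _ b _ h
    exact Nat.eq_of_mul_eq_mul_left hp.pos h
  · intro d hd
    simp only [Finset.mem_filter, mem_Dz, not_not] at hd
    obtain ⟨⟨h1, h2⟩, ⟨k, rfl⟩⟩ := hd
    have hc := Nat.coprime_of_squarefree_mul h2
    have hk : 0 < k := Nat.pos_of_ne_zero (by rintro rfl; simp at h1)
    refine ⟨k, ?_, rfl⟩
    simp only [Finset.mem_filter, mem_Dz]
    refine ⟨⟨⟨hk, ?_⟩, h2.squarefree_of_dvd (dvd_mul_left _ _)⟩,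
      (Nat.Prime.coprime_iff_not_dvd hp).1 hc, h1.2⟩
    nlinarith [hp.pos]
  · intro d hd
    simp only [Finset.mem_filter] at hd
    rw [gm_mul ((Nat.Prime.coprime_iff_not_dvd hp).2 hd.2.1), gm_prime hp]

lemma G_step (z : ℕ) {v v' : ℕ → ℝ} (hv : ∀ p, p.Prime → 0 < v p) {p : ℕ} (hp : p.Prime)
    (hvv : ∀ q, q ≠ p → v q = v' q) (hle : v p ≤ v' p) :
    (∑ d ∈ Dz z, gm v' d) * (1 + v p) ≤ (∑ d ∈ Dz z, gm v d) * (1 + v' p) := by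
  have e : ∀ d, ¬ p ∣ d → gm v' d = gm v d := by
    intro d hd
    unfold gm
    apply Finset.prod_congr rfl
    intro q hq
    rw [hvv]
    rintro rfl
    exact hd (Nat.dvd_of_mem_primeFactors hq)
  rw [G_split z v hp, G_split z v' hp]
  have e1 : ∑ d ∈ Dz z with ¬ p ∣ d, gm v' d = ∑ d ∈ Dz z with ¬ p ∣ d, gm v d := by
    apply Finset.sum_congr rfl
    intro d hd
    exact e d (Finset.mem_filter.1 hd).2
  have e2 : ∑ d ∈ Dz z with (¬ p ∣ d ∧ p * d ≤ z), gm v' d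
      = ∑ d ∈ Dz z with (¬ p ∣ d ∧ p * d ≤ z), gm v d := by
    apply Finset.sum_congr rfl
    intro d hd
    exact e d (Finset.mem_filter.1 hd).2.1
  rw [e1, e2]
  have h3 : ∑ d ∈ Dz z with (¬ p ∣ d ∧ p * d ≤ z), gm v d ≤ ∑ d ∈ Dz z with ¬ p ∣ d, gm v d := by
    apply Finset.sum_le_sum_of_subset_of_nonneg
    · intro d hd
      simp only [Finset.mem_filter] at hd ⊢
      exact ⟨hd.1, hd.2.1⟩
    · intro d _ _; exact (gm_pos hv d).le
  nlinarith [mul_nonneg (sub_nonneg.2 h3) (sub_nonneg.2 hle)]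

lemma G_compare (z : ℕ) {a b : ℕ → ℝ} (ha : ∀ p, p.Prime → 0 < a p)
    (hab : ∀ p, p.Prime → a p ≤ b p) (S : Finset ℕ) (hS : ∀ p ∈ S, p.Prime) :
    (∑ d ∈ Dz z, gm b d) * ∏ p ∈ S, (1 + a p) ≤
      (∑ d ∈ Dz z, gm (fun p => if p ∈ S then a p else b p) d) * ∏ p ∈ S, (1 + b p) := by
  induction S using Finset.induction_on with
  | empty => simp
  | insert p S hpS ih =>
    have hp := hS p (Finset.mem_insert_self p S)
    have ih := ih (fun q hq => hS q (Finset.mem_insert_of_mem hq))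
    rw [Finset.prod_insert hpS, Finset.prod_insert hpS]
    have step := G_step z (v := fun q => if q ∈ insert p S then a q else b q)
      (v' := fun q => if q ∈ S then a q else b q)
      (by intro q hq; split_ifs; exacts [ha q hq, (ha q hq).trans_le (hab q hq)]) hp
      (by intro q hq; simp [hq]) (by simp [hpS, hab p hp])
    simp only [Finset.mem_insert_self, if_true, hpS, if_false] at step
    have hP : 0 ≤ ∏ q ∈ S, (1 + b q) := Finset.prod_nonneg fun q hq => by
      have hq := hS q (Finset.mem_insert_of_mem hq)
      linarith [ha q hq, hab q hq]
    have h1 : 0 ≤ 1 + a p := by linarith [ha p hp]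
    have := mul_le_mul_of_nonneg_left ih h1
    have := mul_le_mul_of_nonneg_right step hP
    linarith

noncomputable def v1 (p : ℕ) : ℝ := if p = 2 then 1 else 2 / (p - 2)

lemma G_h_ge {h : ℕ} (z : ℕ) (hh : 2 ∣ h) (hh0 : 0 < h) :
    ∑ d ∈ Dz z, gm v1 d ≤ (∑ d ∈ Dz z, gm (vh h) d) *
      ∏ p ∈ h.primeFactors.filter (fun p => 2 < p), (1 + 1 / ((p : ℝ) - 2)) := by
  set S := h.primeFactors.filter (fun p => 2 < p) with hS
  have hS' : ∀ p ∈ S, p.Prime ∧ (2:ℝ) < p ∧ p ∣ h ∧ p ≠ 2 := by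
    intro p hp
    rw [hS, Finset.mem_filter] at hp
    exact ⟨Nat.prime_of_mem_primeFactors hp.1, by exact_mod_cast hp.2, Nat.dvd_of_mem_primeFactors hp.1, by omega⟩
  have key := G_compare z (a := vh h) (b := v1) (fun p hp => vh_pos hh hp) (by
    intro p hp
    unfold vh v1 rhoP
    by_cases h2 : p = 2
    · subst h2; simp [hh]; norm_num
    · have : (2:ℝ) < p := by exact_mod_cast lt_of_le_of_ne hp.two_le (Ne.symm h2)
      simp only [h2, if_false]
      split_ifs
      · rw [div_le_div_iff₀ (by linarith) (by linarith)]; linarith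
      · exact le_rfl) S (fun p hp => (hS' p hp).1)
  have e : ∑ d ∈ Dz z, gm (fun p => if p ∈ S then vh h p else v1 p) d = ∑ d ∈ Dz z, gm (vh h) d := by
    apply Finset.sum_congr rfl
    intro d _
    unfold gm
    apply Finset.prod_congr rfl
    intro p hp
    have hp := Nat.prime_of_mem_primeFactors hp
    beta_reduce
    split_ifs with hpS
    · rfl
    · unfold v1 vh rhoP
      by_cases h2 : p = 2
      · subst h2; simp [hh]; norm_num
      · have : 2 < p := lt_of_le_of_ne hp.two_le (Ne.symm h2)
        have : ¬ p ∣ h := by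
          intro hd
          apply hpS
          rw [hS, Finset.mem_filter, Nat.mem_primeFactors]
          exact ⟨⟨hp, hd, hh0.ne'⟩, this⟩
        simp [h2, this]
  rw [e] at key
  have hpos : 0 < ∏ p ∈ S, (1 + vh h p) := Finset.prod_pos fun p hp => by
    linarith [vh_pos hh (hS' p hp).1]
  have e2 : ∏ p ∈ S, (1 + v1 p) = (∏ p ∈ S, (1 + 1 / ((p : ℝ) - 2))) * ∏ p ∈ S, (1 + vh h p) := by
    rw [← Finset.prod_mul_distrib]
    apply Finset.prod_congr rfl
    intro p hp
    obtain ⟨_, h1, h2, h3⟩ := hS' p hp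
    have h4 : (p:ℝ) - 2 ≠ 0 := by linarith
    have h5 : (p:ℝ) - 1 ≠ 0 := by linarith
    simp only [v1, vh, rhoP, h2, h3, if_true, if_false]
    field_simp
    ring
  rw [e2, ← mul_assoc] at key
  exact le_of_mul_le_mul_right key hpos

noncomputable def Fp (p : ℕ) : ℝ := if p = 2 then 1 else 2

noncomputable def Ff (n : ℕ) : ℝ := n.factorization.prod (fun p k => Fp p ^ k)

lemma Ff_mul {a b : ℕ} (ha : a ≠ 0) (hb : b ≠ 0) : Ff (a * b) = Ff a * Ff b := by
  unfold Ff
  rw [Nat.factorization_mul ha hb, Finsupp.prod_add_index' (by simp) (by intros; rw [pow_add])]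

lemma Ff_prime_pow {p : ℕ} (hp : p.Prime) (k : ℕ) : Ff (p ^ k) = Fp p ^ k := by
  unfold Ff
  rw [hp.factorization_pow, Finsupp.prod_single_index (by simp)]

lemma Ff_one : Ff 1 = 1 := by simp [Ff]

lemma Fp_pos (p : ℕ) : 0 < Fp p := by unfold Fp; split_ifs <;> norm_num

lemma Ff_pos (n : ℕ) : 0 < Ff n := by
  unfold Ff Finsupp.prod
  exact Finset.prod_pos fun p _ => pow_pos (Fp_pos p) _

noncomputable def wf : ℕ →* ℝ where
  toFun n := Ff n / n
  map_one' := by simp [Ff_one]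
  map_mul' a b := by
    by_cases ha : a = 0
    · simp [ha]
    by_cases hb : b = 0
    · simp [hb]
    rw [Ff_mul ha hb]; push_cast; field_simp

lemma wf_apply (n : ℕ) : wf n = Ff n / n := rfl

lemma wf_nonneg (n : ℕ) : 0 ≤ wf n := by
  rw [wf_apply]; have := Ff_pos n; positivity

lemma wf_prime {p : ℕ} (hp : p.Prime) : wf p = Fp p / p := by
  rw [wf_apply]
  have := Ff_prime_pow hp 1
  simp only [pow_one] at this
  rw [this]

lemma Fp_lt {p : ℕ} (hp : p.Prime) : Fp p < p := by
  unfold Fp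
  split_ifs with h
  · exact_mod_cast hp.one_lt
  · exact_mod_cast lt_of_le_of_ne hp.two_le (Ne.symm h)

lemma v1_eq {p : ℕ} (hp : p.Prime) : v1 p = wf p * (1 - wf p)⁻¹ := by
  have h1 := Fp_lt hp
  have h0 := Fp_pos p
  have h2 : (0:ℝ) < p := h0.trans h1
  have h3 : (p:ℝ) - Fp p ≠ 0 := by linarith
  have : 1 - wf p = (p - Fp p) / p := by rw [wf_prime hp]; field_simp
  rw [this, wf_prime hp, inv_div]
  have e : Fp p / p * (p / (p - Fp p)) = Fp p / (p - Fp p) := by field_simp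
  rw [e]
  unfold v1 Fp
  split_ifs with h
  · subst h; norm_num
  · rfl

lemma sum_wf_le (z : ℕ) : ∑ n ∈ Finset.Ioc 0 z, wf n ≤ ∑ d ∈ Dz z, gm v1 d := by
  set rad : ℕ → ℕ := fun n => ∏ p ∈ n.primeFactors, p with hrad
  have hradd : ∀ n, rad n ∣ n := fun n => Nat.prod_primeFactors_dvd n
  have hradp : ∀ n, (rad n).primeFactors = n.primeFactors := fun n =>
    Nat.primeFactors_prod (fun p hp => Nat.prime_of_mem_primeFactors hp)
  have hradsq : ∀ n, Squarefree (rad n) := by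
    intro n
    rw [hrad]
    apply Finset.squarefree_prod_of_pairwise_isCoprime
    · intro p hp q hq hpq
      have := (Nat.coprime_primes (Nat.prime_of_mem_primeFactors hp)
        (Nat.prime_of_mem_primeFactors hq)).2 hpq
      exact Nat.coprime_iff_isRelPrime.1 this
    · intro p hp
      exact (Nat.prime_of_mem_primeFactors hp).prime.squarefree
  have hmaps : ∀ n ∈ Finset.Ioc 0 z, rad n ∈ Dz z := by
    intro n hn
    rw [Finset.mem_Ioc] at hn
    have := Nat.le_of_dvd hn.1 (hradd n)
    have := Nat.pos_of_dvd_of_pos (hradd n) hn.1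
    exact mem_Dz.2 ⟨⟨by omega, by omega⟩, hradsq n⟩
  rw [← Finset.sum_fiberwise_of_maps_to hmaps]
  apply Finset.sum_le_sum
  intro d hd
  have hdz := mem_Dz.1 hd
  have hd0 : 0 < d := hdz.1.1
  have hw1 : ∀ {p : ℕ}, p.Prime → ‖wf p‖ < 1 := by
    intro p hp
    rw [Real.norm_of_nonneg (wf_nonneg p), wf_prime hp]
    have h0 := Fp_pos p
    have h1 := Fp_lt hp
    rw [div_lt_one (h0.trans h1)]; exact h1
  have hs := (EulerProduct.summable_and_hasSum_factoredNumbers_prod_filter_prime_geometric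
    (f := wf) hw1 d.primeFactors).2
  have hs' : HasSum (Set.indicator (Nat.factoredNumbers d.primeFactors) wf)
      (∏ p ∈ d.primeFactors with p.Prime, (1 - wf p)⁻¹) := hasSum_subtype_iff_indicator.1 hs
  have e1 : gm v1 d = wf d * ∏ p ∈ d.primeFactors with p.Prime, (1 - wf p)⁻¹ := by
    rw [Finset.filter_true_of_mem (fun p hp => Nat.prime_of_mem_primeFactors hp)]
    have : wf d = ∏ p ∈ d.primeFactors, wf p := by
      conv_lhs => rw [← Nat.prod_primeFactors_of_squarefree hdz.2]
      rw [map_prod]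
    rw [this, ← Finset.prod_mul_distrib]
    exact Finset.prod_congr rfl fun p hp => v1_eq (Nat.prime_of_mem_primeFactors hp)
  have hdvd : ∀ n ∈ (Finset.Ioc 0 z).filter (fun n => rad n = d), d ∣ n := by
    intro n hn
    rw [Finset.mem_filter] at hn
    exact hn.2 ▸ hradd n
  rw [e1]
  have e2 : ∑ n ∈ Finset.Ioc 0 z with rad n = d, wf n
      = wf d * ∑ n ∈ Finset.Ioc 0 z with rad n = d,
        Set.indicator (Nat.factoredNumbers d.primeFactors) wf (n / d) := by
    rw [Finset.mul_sum]
    apply Finset.sum_congr rfl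
    intro n hn
    obtain ⟨m, rfl⟩ := hdvd n hn
    rw [Finset.mem_filter, Finset.mem_Ioc] at hn
    have hm : m ≠ 0 := by rintro rfl; simp at hn
    rw [Nat.mul_div_cancel_left _ hd0, Set.indicator_of_mem, map_mul]
    apply Nat.mem_factoredNumbers_of_primeFactors_subset hm
    have := hradp (d * m)
    rw [hn.2] at this
    rw [this]
    exact Nat.primeFactors_mono (dvd_mul_left _ _) (by positivity)
  rw [e2]
  apply mul_le_mul_of_nonneg_left _ (wf_nonneg d)
  rw [← Finset.sum_image (s := (Finset.Ioc 0 z).filter (fun n => rad n = d))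
      (g := fun n => n / d) (f := Set.indicator (Nat.factoredNumbers d.primeFactors) wf)]
  · apply sum_le_hasSum _ _ hs'
    intro i _
    exact Set.indicator_nonneg (fun n _ => wf_nonneg n) i
  · intro a ha b hb hab
    simp only at hab
    rw [← Nat.div_mul_cancel (hdvd a ha), ← Nat.div_mul_cancel (hdvd b hb), hab]

section

noncomputable def locb (p k : ℕ) : ℝ :=
  if k = 0 then 1 else if p = 2 ∨ k = 1 then 0 else 2 ^ (k - 2)

lemma locb_nonneg (p k : ℕ) : 0 ≤ locb p k := by
  unfold locb; split_ifs <;> positivity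

noncomputable def bf (n : ℕ) : ℝ := if n = 0 then 0 else n.factorization.prod locb

lemma bf_nonneg (n : ℕ) : 0 ≤ bf n := by
  unfold bf
  split_ifs
  · exact le_rfl
  · unfold Finsupp.prod
    exact Finset.prod_nonneg fun p _ => locb_nonneg p _

lemma bf_one : bf 1 = 1 := by simp [bf]

lemma bf_prime_pow {p : ℕ} (hp : p.Prime) (k : ℕ) : bf (p ^ k) = locb p k := by
  unfold bf
  rw [if_neg (pow_ne_zero _ hp.ne_zero), hp.factorization_pow,
    Finsupp.prod_single_index (by simp [locb])]

lemma bf_mul {a b : ℕ} (h : a.Coprime b) : bf (a * b) = bf a * bf b := by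
  by_cases ha : a = 0
  · simp [ha, bf]
  by_cases hb : b = 0
  · simp [hb, bf]
  unfold bf
  rw [if_neg (mul_ne_zero ha hb), if_neg ha, if_neg hb, Nat.factorization_mul ha hb]
  apply Finsupp.prod_add_index_of_disjoint
  simpa using h.disjoint_primeFactors

open ArithmeticFunction

noncomputable def bA : ArithmeticFunction ℝ := ⟨bf, by simp [bf]⟩
noncomputable def oA : ArithmeticFunction ℝ := ⟨fun n => if Odd n then 1 else 0, by simp⟩
noncomputable def FA : ArithmeticFunction ℝ := ⟨fun n => if n = 0 then 0 else Ff n, by simp⟩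

lemma bA_mult : bA.IsMultiplicative := ⟨bf_one, fun h => bf_mul h⟩
lemma oA_mult : oA.IsMultiplicative := by
  refine ⟨by simp [oA], ?_⟩
  intro m n _
  simp only [oA, ArithmeticFunction.coe_mk, Nat.odd_mul]
  by_cases h1 : Odd m <;> by_cases h2 : Odd n <;> simp [h1, h2]
lemma FA_mult : FA.IsMultiplicative := by
  rw [IsMultiplicative.iff_ne_zero]
  refine ⟨by simp [FA, Ff_one], ?_⟩
  intro m n hm hn _
  simp [FA, hm, hn, Ff_mul hm hn]

lemma bo_two (k : ℕ) : (bA * oA) (2 ^ k) = if k = 0 then 1 else 0 := by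
  rw [mul_apply, Nat.sum_divisorsAntidiagonal (fun a b => bA a * oA b),
    Nat.sum_divisors_prime_pow Nat.prime_two]
  rw [Finset.sum_range_succ', Finset.sum_eq_zero]
  · simp only [pow_zero, Nat.div_one, zero_add]
    simp only [bA, oA, ArithmeticFunction.coe_mk, bf_one, one_mul]
    rcases k with _ | k
    · simp
    · have : ¬ Odd (2 ^ (k + 1)) := by rw [Nat.not_odd_iff_even]; exact ⟨2 ^ k, by ring⟩
      simp [this]
  · intro i _
    simp only [bA, ArithmeticFunction.coe_mk, bf_prime_pow Nat.prime_two, locb]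
    simp

lemma sum_locb {p : ℕ} (hp2 : p ≠ 2) (k : ℕ) :
    ∑ j ∈ Finset.range (k + 2), locb p j = 2 ^ k := by
  induction k with
  | zero => simp [Finset.sum_range_succ, locb]
  | succ k ih =>
    rw [Finset.sum_range_succ, ih]
    simp [locb, hp2]; ring

lemma bo_odd {p : ℕ} (hp : p.Prime) (hp2 : p ≠ 2) (k : ℕ) :
    (bA * oA) (p ^ k) = if k = 0 then 1 else 2 ^ (k - 1) := by
  have hodd : Odd p := hp.odd_of_ne_two hp2
  rw [mul_apply, Nat.sum_divisorsAntidiagonal (fun a b => bA a * oA b),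
    Nat.sum_divisors_prime_pow hp]
  have : ∀ j ∈ Finset.range (k + 1), bA (p ^ j) * oA (p ^ k / p ^ j) = locb p j := by
    intro j hj
    rw [Finset.mem_range] at hj
    rw [Nat.pow_div (by omega) hp.pos]
    have : Odd (p ^ (k - j)) := hodd.pow
    simp only [bA, oA, ArithmeticFunction.coe_mk, bf_prime_pow hp, this, if_true, mul_one]
  rw [Finset.sum_congr rfl this]
  rcases k with _ | k
  · simp [locb]
  · rw [sum_locb hp2]; simp

lemma FA_eq : FA = bA * oA * (zeta : ArithmeticFunction ℝ) := by
  rw [IsMultiplicative.eq_iff_eq_on_prime_powers _ FA_mult _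
    ((bA_mult.mul oA_mult).mul isMultiplicative_zeta.natCast)]
  intro p k hp
  rw [coe_mul_zeta_apply, Nat.sum_divisors_prime_pow hp]
  have h0 : FA (p ^ k) = Fp p ^ k := by
    simp [FA, hp.ne_zero, Ff_prime_pow hp]
  rw [h0]
  by_cases h2 : p = 2
  · subst h2
    simp only [bo_two]
    simp [Fp]
  · simp only [bo_odd hp h2, Fp, h2, if_false]
    induction k with
    | zero => simp
    | succ k ih =>
      rw [Finset.sum_range_succ, ← ih (by simp [FA, hp.ne_zero, Ff_prime_pow hp, Fp, h2])]
      simp; ring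

noncomputable def dv (f : ArithmeticFunction ℝ) : ArithmeticFunction ℝ := ⟨fun n => f n / n, by simp⟩

lemma dv_mul (f g : ArithmeticFunction ℝ) : dv (f * g) = dv f * dv g := by
  ext n
  simp only [dv, ArithmeticFunction.coe_mk, mul_apply, Finset.sum_div]
  apply Finset.sum_congr rfl
  intro x hx
  rw [Nat.mem_divisorsAntidiagonal] at hx
  rw [← hx.1]
  push_cast
  rw [mul_div_mul_comm]
  rfl

lemma odd_log_sum {Y : ℝ} (hY : 1 ≤ Y) :
    Real.log Y ^ 2 / 4 ≤ ∑ r ∈ Finset.Ioc 0 ⌊Y⌋₊, dv oA r * Real.log (Y / r) := by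
  set φ : ℕ → ℝ := fun r => (max (Real.log (Y / r)) 0) ^ 2 with hφ
  have hstep : ∀ r : ℕ, 1 ≤ r → (r:ℝ) ≤ Y → φ r - φ (r + 2) ≤ 4 * ((1 / r) * Real.log (Y / r)) := by
    intro r hr hrY
    have hr0 : (0:ℝ) < r := by exact_mod_cast hr
    have hY0 : 0 < Y := by linarith
    have ha : 0 ≤ Real.log (Y / r) := Real.log_nonneg (by rw [le_div_iff₀ hr0]; linarith)
    simp only [hφ]
    rw [max_eq_left ha]
    set a := Real.log (Y / r)
    set b := max (Real.log (Y / ((r + 2 : ℕ) : ℝ))) 0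
    have hb0 : 0 ≤ b := le_max_right _ _
    have hab : a - 2 / r ≤ b := by
      refine le_trans ?_ (le_max_left _ _)
      push_cast
      have h1 : Real.log (Y / (r + 2)) = a - Real.log ((r + 2) / r) := by
        rw [← Real.log_div (by positivity) (by positivity)]
        congr 1
        field_simp
      have h2 : Real.log ((r + 2) / r) ≤ 2 / r := by
        have := Real.log_le_sub_one_of_pos (show (0:ℝ) < (r + 2) / r by positivity)
        have e : ((r:ℝ) + 2) / r - 1 = 2 / r := by field_simp; ring
        linarith
      linarith
    have hba : b ≤ a := by
      apply max_le _ ha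
      apply Real.log_le_log (by positivity)
      push_cast
      gcongr
      linarith
    have h3 : (a - b) * (a + b) ≤ (2 / r) * (2 * a) := by
      apply mul_le_mul <;> linarith
    calc a ^ 2 - b ^ 2 = (a - b) * (a + b) := by ring
      _ ≤ _ := h3
      _ = _ := by ring
  set ψ : ℕ → ℝ := fun r => if Odd r then φ r else φ (r + 1) with hψ
  have hind : ∀ N : ℕ, (N:ℝ) ≤ Y → φ 1 - ψ (N + 1) ≤
      4 * ∑ r ∈ Finset.Ioc 0 N, dv oA r * Real.log (Y / r) := by
    intro N
    induction N with
    | zero => intro _; simp [hψ]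
    | succ N ih =>
      intro hN
      have hN' : (N:ℝ) ≤ Y := by push_cast at hN; linarith
      have ih := ih hN'
      rw [Finset.sum_Ioc_succ_top (by omega)]
      by_cases ho : Odd (N + 1)
      · have h2 : ¬ Odd (N + 1 + 1) := by rw [Nat.not_odd_iff_even]; exact ho.add_one
        have := hstep (N + 1) (by omega) hN
        simp only [hψ, ho, h2, if_true, if_false] at ih ⊢
        have e : dv oA (N + 1) = 1 / ((N + 1 : ℕ) : ℝ) := by simp [dv, oA, ho]
        rw [e]
        linarith
      · have h2 : Odd (N + 1 + 1) := by rw [Nat.not_odd_iff_even] at ho; exact ho.add_one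
        simp only [hψ, ho, h2, if_true, if_false] at ih ⊢
        have e : dv oA (N + 1) = 0 := by simp [dv, oA, ho]
        rw [e]
        linarith
  have h1 := hind ⌊Y⌋₊ (Nat.floor_le (by linarith))
  have h2 : φ 1 = Real.log Y ^ 2 := by
    simp [hφ, Real.log_nonneg hY]
  have hz : ∀ r : ℕ, Y < r → φ r = 0 := by
    intro r hr
    have hr0 : (0:ℝ) < r := by linarith
    have : Real.log (Y / r) ≤ 0 := by
      apply Real.log_nonpos (by positivity)
      rw [div_le_one hr0]; exact hr.le
    simp [hφ, max_eq_right this]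
  have hf := Nat.lt_floor_add_one Y
  have h3 : ψ (⌊Y⌋₊ + 1) = 0 := by
    simp only [hψ]
    split_ifs
    · apply hz; push_cast; exact hf
    · apply hz; push_cast; linarith
  rw [h2, h3] at h1
  linarith

lemma sum_wf_ge {y : ℝ} (hy : 1 ≤ y) :
    ∑ m ∈ Finset.Ioc 0 ⌊y⌋₊, bf m / m * (Real.log (y / m) ^ 2 / 4) ≤ ∑ n ∈ Finset.Ioc 0 ⌊y⌋₊, wf n := by
  have h1 : ∑ n ∈ Finset.Ioc 0 ⌊y⌋₊, wf n = ∑ n ∈ Finset.Ioc 0 ⌊y⌋₊, dv FA n := by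
    apply Finset.sum_congr rfl
    intro n hn
    rw [Finset.mem_Ioc] at hn
    simp [dv, FA, wf_apply, hn.1.ne']
  rw [h1, FA_eq, mul_assoc, dv_mul, sum_Ioc_mul_eq_sum_sum, dv_mul]
  apply Finset.sum_le_sum
  intro m hm
  rw [Finset.mem_Ioc] at hm
  have hm0 : (0:ℝ) < m := by exact_mod_cast hm.1
  have hmy : (m:ℝ) ≤ y := (Nat.le_floor_iff (by linarith)).1 hm.2
  have e : dv bA m = bf m / m := rfl
  rw [e]
  apply mul_le_mul_of_nonneg_left _ (div_nonneg (bf_nonneg m) hm0.le)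
  rw [sum_Ioc_mul_eq_sum_sum, ← Nat.floor_div_natCast]
  refine (odd_log_sum (Y := y / m) (by rw [le_div_iff₀ hm0]; linarith)).trans ?_
  apply Finset.sum_le_sum
  intro r hr
  rw [Finset.mem_Ioc] at hr
  have hr0 : (0:ℝ) < r := by exact_mod_cast hr.1
  apply mul_le_mul_of_nonneg_left
  · rw [← Nat.floor_div_natCast]
    set T := y / m / r
    have hT : 0 < T := by have : 0 < y := by linarith
                          positivity
    have h2 : ∑ a ∈ Finset.Ioc 0 ⌊T⌋₊, dv (zeta : ArithmeticFunction ℝ) a = (harmonic ⌊T⌋₊ : ℝ) := by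
      rw [harmonic_eq_sum_Icc]
      push_cast
      have : Finset.Ioc 0 ⌊T⌋₊ = Finset.Icc 1 ⌊T⌋₊ := by ext; simp [Nat.lt_iff_add_one_le]
      rw [this]
      apply Finset.sum_congr rfl
      intro a ha
      rw [Finset.mem_Icc] at ha
      have : a ≠ 0 := by omega
      simp [dv, natCoe_apply, zeta_apply, this]
    rw [h2]
    refine le_trans ?_ (log_add_one_le_harmonic _)
    apply Real.log_le_log hT
    push_cast
    exact (Nat.lt_floor_add_one T).le
  · simp only [dv, oA, ArithmeticFunction.coe_mk]
    split_ifs <;> positivity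

end

lemma hasSum_locb_odd {p : ℕ} (hp2 : p ≠ 2) {u : ℝ} (hu0 : 0 ≤ u) (hu : u < 1 / 2) :
    HasSum (fun k => locb p k * u ^ k) (1 + u ^ 2 / (1 - 2 * u)) := by
  have h1 : HasSum (fun k => (2 * u) ^ k) (1 - 2 * u)⁻¹ :=
    hasSum_geometric_of_lt_one (by linarith) (by linarith)
  have h2 : HasSum (fun k => locb p (k + 2) * u ^ (k + 2)) (u ^ 2 / (1 - 2 * u)) := by
    have := h1.mul_left (u ^ 2)
    rw [div_eq_mul_inv]
    have e : (fun k => locb p (k + 2) * u ^ (k + 2)) = fun k => u ^ 2 * (2 * u) ^ k := by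
      funext k
      simp [locb, hp2]
      ring
    rw [e]
    exact this
  have h3 := (hasSum_nat_add_iff (f := fun k => locb p k * u ^ k) 2).1 h2
  have e : u ^ 2 / (1 - 2 * u) + ∑ i ∈ Finset.range 2, locb p i * u ^ i = 1 + u ^ 2 / (1 - 2 * u) := by
    simp [Finset.sum_range_succ, locb]
    ring
  rw [e] at h3
  exact h3

lemma hasSum_locb_two (u : ℝ) :
    HasSum (fun k => locb 2 k * u ^ k) 1 := by
  have := hasSum_single (f := fun k => locb 2 k * u ^ k) 0 (by
    intro k hk; simp [locb, hk])
  simpa [locb] using this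

lemma three_rpow_le {p : ℕ} (hp : 3 ≤ p) : (p:ℝ) ^ (-(3/4 : ℝ)) ≤ 4 / 9 := by
  have h1 : (9/4 : ℝ) ≤ (3:ℝ) ^ (3/4 : ℝ) := by
    have : (9/4 : ℝ) = ((9/4 : ℝ) ^ (4:ℝ)) ^ (1/4 : ℝ) := by
      rw [← Real.rpow_mul (by norm_num)]; norm_num
    rw [this]
    have h2 : (3:ℝ) ^ (3/4 : ℝ) = ((3:ℝ) ^ (3:ℝ)) ^ (1/4 : ℝ) := by
      rw [← Real.rpow_mul (by norm_num)]; norm_num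
    rw [h2]
    apply Real.rpow_le_rpow (by positivity) _ (by norm_num)
    norm_num
  have h2 : (3:ℝ) ^ (3/4 : ℝ) ≤ (p:ℝ) ^ (3/4 : ℝ) := by
    apply Real.rpow_le_rpow (by norm_num) _ (by norm_num)
    exact_mod_cast hp
  rw [Real.rpow_neg (by positivity)]
  rw [show (4/9:ℝ) = (9/4)⁻¹ by norm_num]
  exact inv_anti₀ (by norm_num) (h1.trans h2)

noncomputable def bs (n : ℕ) : ℝ := bf n * (n:ℝ) ^ (-(3/4 : ℝ))

lemma bs_nonneg (n : ℕ) : 0 ≤ bs n := mul_nonneg (bf_nonneg n) (by positivity)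

lemma bs_prime_pow {p : ℕ} (hp : p.Prime) (k : ℕ) :
    bs (p ^ k) = locb p k * ((p:ℝ) ^ (-(3/4 : ℝ))) ^ k := by
  unfold bs
  rw [bf_prime_pow hp]
  push_cast
  rw [← Real.rpow_natCast, ← Real.rpow_natCast, ← Real.rpow_mul (by positivity),
    ← Real.rpow_mul (by positivity), mul_comm (k:ℝ)]

lemma bs_local {p : ℕ} (hp : p.Prime) :
    Summable (fun k => bs (p ^ k)) ∧ ∑' k, bs (p ^ k) ≤ 1 + 9 * (p:ℝ) ^ (-(3/2 : ℝ)) := by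
  simp only [bs_prime_pow hp]
  by_cases h2 : p = 2
  · subst h2
    have := hasSum_locb_two (((2:ℕ):ℝ) ^ (-(3/4 : ℝ)))
    refine ⟨this.summable, ?_⟩
    rw [this.tsum_eq]
    have : (0:ℝ) ≤ ((2:ℕ):ℝ) ^ (-(3/2 : ℝ)) := by positivity
    linarith
  · have h3 : 3 ≤ p := by have := hp.two_le; omega
    have hu := three_rpow_le h3
    have e : (p:ℝ) ^ (-(3/2 : ℝ)) = ((p:ℝ) ^ (-(3/4 : ℝ))) ^ 2 := by
      rw [← Real.rpow_natCast, ← Real.rpow_mul (by positivity)]; norm_num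
    rw [e]
    have hu0 : 0 ≤ (p:ℝ) ^ (-(3/4 : ℝ)) := by positivity
    set u := (p:ℝ) ^ (-(3/4 : ℝ))
    have := hasSum_locb_odd (p := p) h2 hu0 (by linarith)
    refine ⟨this.summable, ?_⟩
    rw [this.tsum_eq]
    have : u ^ 2 / (1 - 2 * u) ≤ 9 * u ^ 2 := by
      rw [div_le_iff₀ (by linarith)]
      nlinarith [sq_nonneg u]
    linarith

lemma bs_summable : Summable bs := by
  have hS : Summable (fun n : ℕ => 9 * (n:ℝ) ^ (-(3/2 : ℝ))) :=
    (Real.summable_nat_rpow.2 (by norm_num)).mul_left 9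
  apply summable_of_sum_le (c := Real.exp (∑' n : ℕ, 9 * (n:ℝ) ^ (-(3/2 : ℝ)))) bs_nonneg
  intro s
  obtain ⟨N, hN⟩ : ∃ N, ∀ n ∈ s, n < N := ⟨s.sup id + 1, fun n hn =>
    Nat.lt_succ_of_le (Finset.le_sup (f := id) hn)⟩
  have key := EulerProduct.summable_and_hasSum_smoothNumbers_prod_primesBelow_tsum
    (f := bs) (by simp [bs, bf_one]) (by
      intro m n hmn
      unfold bs
      rw [bf_mul hmn]
      push_cast
      rw [Real.mul_rpow (by positivity) (by positivity)]
      ring) (by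
      intro p hp
      exact (bs_local hp).1.norm) N
  have h1 : ∑ n ∈ s, bs n ≤ ∏ p ∈ N.primesBelow, ∑' k, bs (p ^ k) := by
    have hz : bs 0 = 0 := by simp [bs, bf]
    have h2 : HasSum (Set.indicator (N.smoothNumbers) bs) (∏ p ∈ N.primesBelow, ∑' k, bs (p ^ k)) :=
      (hasSum_subtype_iff_indicator).1 key.2
    refine le_trans (Finset.sum_le_sum ?_) (sum_le_hasSum s (fun i _ => Set.indicator_nonneg (fun x _ => bs_nonneg x) i) h2)
    intro n hn
    by_cases h0 : n = 0
    · subst h0; rw [hz]; exact Set.indicator_nonneg (fun x _ => bs_nonneg x) 0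
    · rw [Set.indicator_of_mem (Nat.mem_smoothNumbers_of_lt (Nat.pos_of_ne_zero h0) (hN n hn))]
  refine h1.trans ?_
  calc ∏ p ∈ N.primesBelow, ∑' k, bs (p ^ k)
      ≤ ∏ p ∈ N.primesBelow, Real.exp (9 * (p:ℝ) ^ (-(3/2 : ℝ))) := by
        apply Finset.prod_le_prod
        · intro p _; exact tsum_nonneg fun k => bs_nonneg _
        · intro p hp
          refine (bs_local (Nat.prime_of_mem_primesBelow hp)).2.trans ?_
          rw [add_comm]
          exact Real.add_one_le_exp _
    _ = Real.exp (∑ p ∈ N.primesBelow, 9 * (p:ℝ) ^ (-(3/2 : ℝ))) := (Real.exp_sum _ _).symm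
    _ ≤ _ := by
        apply Real.exp_le_exp.2
        exact hS.sum_le_tsum _ (fun i _ => by positivity)

lemma bs_div (n : ℕ) : bf n / n ≤ bs n := by
  unfold bs
  rcases Nat.eq_zero_or_pos n with h | h
  · simp [h, bf]
  rw [div_eq_mul_inv]
  apply mul_le_mul_of_nonneg_left _ (bf_nonneg n)
  rw [← Real.rpow_neg_one]
  apply Real.rpow_le_rpow_of_exponent_le
  · exact_mod_cast h
  · norm_num

lemma bs_div_log (n : ℕ) : bf n / n * Real.log n ≤ 4 * bs n := by
  unfold bs
  rcases Nat.eq_zero_or_pos n with h | h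
  · simp [h, bf]
  have hn : (0:ℝ) < n := by exact_mod_cast h
  have h1 := Real.log_le_rpow_div hn.le (show (0:ℝ) < 1/4 by norm_num)
  have h2 : (n:ℝ) ^ (-(3/4 : ℝ)) = (n:ℝ)⁻¹ * (n:ℝ) ^ (1/4 : ℝ) := by
    rw [← Real.rpow_neg_one, ← Real.rpow_add hn]; norm_num
  rw [h2]
  have h3 : 0 ≤ bf n / n := div_nonneg (bf_nonneg n) hn.le
  have := mul_le_mul_of_nonneg_left h1 h3
  refine this.trans (le_of_eq ?_)
  field_simp

lemma bd_nonneg (n : ℕ) : 0 ≤ bf n / n := div_nonneg (bf_nonneg n) (by positivity)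

lemma bd_summable : Summable (fun n : ℕ => bf n / n) :=
  Summable.of_nonneg_of_le bd_nonneg bs_div bs_summable

lemma bl_nonneg (n : ℕ) : 0 ≤ bf n / n * Real.log n :=
  mul_nonneg (bd_nonneg n) (Real.log_natCast_nonneg n)

lemma bl_summable : Summable (fun n : ℕ => bf n / n * Real.log n) :=
  Summable.of_nonneg_of_le bl_nonneg bs_div_log (bs_summable.mul_left 4)

noncomputable def Bc : ℝ := ∑' n : ℕ, bf n / n
noncomputable def Bl : ℝ := ∑' n : ℕ, bf n / n * Real.log n

lemma Bl_nonneg : 0 ≤ Bl := tsum_nonneg bl_nonneg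

lemma G_lower {y : ℝ} (hy : 1 ≤ y) :
    (Bc * Real.log y ^ 2 - 2 * Real.log y * Bl) / 4 ≤ ∑ d ∈ Dz ⌊y⌋₊, gm v1 d := by
  refine le_trans ?_ ((sum_wf_ge hy).trans (sum_wf_le _))
  set L := Real.log y with hL
  have hL0 : 0 ≤ L := Real.log_nonneg hy
  have hy0 : 0 < y := by linarith
  have h1 : HasSum (fun n : ℕ => bf n / n * ((L ^ 2 - 2 * L * Real.log n) / 4))
      ((Bc * L ^ 2 - 2 * L * Bl) / 4) := by
    have ha := bd_summable.hasSum.mul_right (L ^ 2 / 4)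
    have hb := bl_summable.hasSum.mul_right (2 * L / 4)
    have hc := ha.sub hb
    have e1 : (fun n : ℕ => bf n / n * ((L ^ 2 - 2 * L * Real.log n) / 4)) =
        fun n : ℕ => bf n / n * (L ^ 2 / 4) - bf n / n * Real.log n * (2 * L / 4) := by
      funext n; ring
    have e2 : (Bc * L ^ 2 - 2 * L * Bl) / 4 = (∑' n : ℕ, bf n / n) * (L ^ 2 / 4) -
        (∑' n : ℕ, bf n / n * Real.log n) * (2 * L / 4) := by
      unfold Bc Bl; ring
    rw [e1, e2]
    exact hc
  have h2 : (Bc * L ^ 2 - 2 * L * Bl) / 4 ≤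
      ∑ n ∈ Finset.Ioc 0 ⌊y⌋₊, bf n / n * ((L ^ 2 - 2 * L * Real.log n) / 4) := by
    have h3 := h1.sub (hasSum_sum_of_ne_finset_zero (f := fun n : ℕ => if n ∈ Finset.Ioc 0 ⌊y⌋₊ then
      bf n / n * ((L ^ 2 - 2 * L * Real.log n) / 4) else 0) (s := Finset.Ioc 0 ⌊y⌋₊)
      (fun b hb => by simp only [hb, if_false]))
    have h4 := hasSum_le (fun n => ?_) h3 hasSum_zero
    · rw [Finset.sum_congr rfl (fun n hn => if_pos hn)] at h4
      linarith
    · split_ifs with hn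
      · simp
      · rw [sub_zero]
        rcases Nat.eq_zero_or_pos n with h | h
        · simp [h]
        have hn' : ⌊y⌋₊ < n := by
          by_contra hc
          exact hn (Finset.mem_Ioc.2 ⟨h, by omega⟩)
        have hlt : y < n := (Nat.floor_lt hy0.le).1 hn'
        have hlog : L ≤ Real.log n := Real.log_le_log hy0 hlt.le
        apply mul_nonpos_of_nonneg_of_nonpos (bd_nonneg n)
        nlinarith
  refine h2.trans ?_
  apply Finset.sum_le_sum
  intro n hn
  rw [Finset.mem_Ioc] at hn
  apply mul_le_mul_of_nonneg_left _ (bd_nonneg n)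
  have hn0 : (0:ℝ) < n := by exact_mod_cast hn.1
  rw [Real.log_div hy0.ne' hn0.ne']
  nlinarith [sq_nonneg (Real.log n)]

lemma twin_mul (tw : ℝ) (htw : tw = ∏' p : Nat.Primes, if 2 < (p : ℕ) then 1 - 1 / ((p : ℕ) - 1 : ℝ) ^ 2 else 1) :
    Bc * tw = 1 := by
  have hf := EulerProduct.eulerProduct_hasProd (f := fun n : ℕ => bf n / n) (by simp [bf_one]) (by
      intro m n hmn
      rw [bf_mul hmn]
      push_cast
      rw [mul_div_mul_comm]) bd_summable.norm (by simp)
  have hm : Multipliable (fun p : Nat.Primes => if 2 < (p : ℕ) then 1 - 1 / ((p : ℕ) - 1 : ℝ) ^ 2 else 1) := by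
    have hs : Summable (fun p : Nat.Primes => if 2 < (p : ℕ) then - (1 / ((p : ℕ) - 1 : ℝ) ^ 2) else 0) := by
      have h0 : Summable (fun n : ℕ => 4 * (n:ℝ) ^ (-(2:ℝ))) :=
        (Real.summable_nat_rpow.2 (by norm_num)).mul_left 4
      have h1 : Summable (fun p : Nat.Primes => 4 * ((p:ℕ):ℝ) ^ (-(2:ℝ))) :=
        h0.comp_injective (i := fun p : Nat.Primes => (p:ℕ)) Subtype.val_injective
      refine Summable.of_norm_bounded h1 ?_
      intro p
      have hp : (2:ℝ) ≤ ((p:ℕ):ℝ) := by exact_mod_cast p.2.two_le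
      split_ifs
      · rw [norm_neg, Real.norm_of_nonneg (by positivity), Real.rpow_neg (by linarith)]
        have : (((p:ℕ):ℝ)) ^ (2:ℝ) = ((p:ℕ):ℝ) ^ 2 := Real.rpow_two _
        rw [this, ← div_eq_mul_inv, div_le_div_iff₀ (by nlinarith) (by positivity)]
        nlinarith
      · simp
    have := Real.multipliable_one_add_of_summable hs
    convert this using 2 with p
    split_ifs <;> ring
  have h := hf.mul hm.hasProd
  rw [← htw] at h
  have h1 : (fun p : Nat.Primes => (∑' e, (bf (p ^ e) / ((p ^ e : ℕ) : ℝ))) *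
      (if 2 < (p : ℕ) then 1 - 1 / ((p : ℕ) - 1 : ℝ) ^ 2 else 1)) = fun _ => 1 := by
    funext p
    have hp := p.2
    have e : ∀ k, bf ((p:ℕ) ^ k) / (((p:ℕ) ^ k : ℕ) : ℝ) = locb p k * ((((p:ℕ):ℝ))⁻¹) ^ k := by
      intro k
      rw [bf_prime_pow hp]
      push_cast
      rw [inv_pow, div_eq_mul_inv]
    simp only [e]
    by_cases h2 : (p:ℕ) = 2
    · simp only [h2]
      rw [(hasSum_locb_two _).tsum_eq]; simp
    · have h3 : 3 ≤ (p:ℕ) := by have := hp.two_le; omega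
      have h3' : (3:ℝ) ≤ ((p:ℕ):ℝ) := by exact_mod_cast h3
      rw [(hasSum_locb_odd h2 (by positivity) (by
        rw [inv_lt_comm₀ (by linarith) (by norm_num)]; norm_num; linarith)).tsum_eq, if_pos (by omega)]
      set q := ((p:ℕ):ℝ)
      have a1 : q ≠ 0 := by linarith
      have a2 : q - 1 ≠ 0 := by linarith
      have a3 : q - 2 ≠ 0 := by linarith
      have a4 : 1 - 2 * q⁻¹ = (q - 2) / q := by field_simp
      rw [a4]
      field_simp
      ring
  rw [h1] at h
  exact h.unique hasProd_one

lemma Bc_nonneg : 0 ≤ Bc := tsum_nonneg bd_nonneg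

lemma log_eventually (k : ℝ) (hk : 0 < k) :
    ∃ L0 : ℝ, 3 ≤ L0 ∧ ∀ L ≥ L0, 1 ≤ Real.log L ∧ k * Real.log L ≤ L / 2 := by
  have h1 := Real.isLittleO_log_id_atTop.bound (show (0:ℝ) < 1 / (2 * k) by positivity)
  obtain ⟨a, ha⟩ := Filter.eventually_atTop.1 h1
  refine ⟨max a 3, le_max_right _ _, ?_⟩
  intro L hL
  have hL3 : 3 ≤ L := (le_max_right _ _).trans hL
  have h2 := ha L ((le_max_left _ _).trans hL)
  have hl : 1 ≤ Real.log L := by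
    rw [Real.le_log_iff_exp_le (by linarith)]
    have := Real.exp_one_lt_d9
    linarith
  refine ⟨hl, ?_⟩
  rw [Real.norm_of_nonneg (by linarith), id, Real.norm_of_nonneg (by linarith)] at h2
  have := mul_le_mul_of_nonneg_left h2 hk.le
  refine this.trans (le_of_eq ?_)
  field_simp

lemma inv_sq_bound {s : ℝ} (h0 : 0 ≤ s) (h1 : s ≤ 1 / 2) : 1 ≤ (1 + 6 * s) * (1 - s) ^ 2 := by
  have : (1 + 6 * s) * (1 - s) ^ 2 - 1 = s * ((1 - 2 * s) * (4 - 3 * s)) := by ring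
  have h2 : 0 ≤ s * ((1 - 2 * s) * (4 - 3 * s)) :=
    mul_nonneg h0 (mul_nonneg (by linarith) (by linarith))
  linarith

set_option maxHeartbeats 1000000 in
lemma H_bound (tw : ℝ) (htw : Bc * tw = 1) :
    0 < tw ∧ ∃ K : ℝ, 0 < K ∧ ∃ L0 : ℝ, 3 ≤ L0 ∧ ∀ (X : ℝ) (h : ℕ), 0 < X → L0 ≤ Real.log X → 2 ∣ h → 0 < h →
      ∀ S : Finset ℕ, S ⊆ Finset.Ioc 0 ⌊X⌋₊ → (∀ q ∈ S, q.Prime ∧ (q*h+1).Prime) →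
      (S.card : ℝ) ≤ 16 * tw * (∏ p ∈ h.primeFactors.filter (fun p => 2 < p), (1 + 1 / ((p : ℝ) - 2))) *
        (X / Real.log X ^ 2) * (1 + K * (Real.log (Real.log X) / Real.log X)) := by
  have hB : 0 < Bc := by
    rcases Bc_nonneg.lt_or_eq with h | h
    · exact h
    · rw [← h] at htw; simp at htw
  have ht : 0 < tw := by
    by_contra hc
    have := mul_nonpos_of_nonneg_of_nonpos hB.le (not_lt.1 hc)
    linarith
  refine ⟨ht, ?_⟩
  set D := 2 * Bl * tw with hD
  have hD0 : 0 ≤ D := by have := Bl_nonneg; positivity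
  set k := 6 + 2 * D with hk
  have hk0 : 0 < k := by linarith
  obtain ⟨L0, hL03, hL0⟩ := log_eventually k hk0
  refine ⟨6 * k + 1 / (8 * tw), by positivity, L0, hL03, ?_⟩
  intro X h hX hXL hh hh0 S hS hp
  obtain ⟨hl1, hkl⟩ := hL0 _ hXL
  set L := Real.log X with hL
  set l := Real.log L with hl
  have hL3 : 3 ≤ L := hL03.trans hXL
  have hLpos : 0 < L := by linarith
  set P := ∏ p ∈ h.primeFactors.filter (fun p => 2 < p), (1 + 1 / ((p : ℝ) - 2)) with hP
  have hP1 : 1 ≤ P := by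
    rw [hP]
    refine le_trans (le_of_eq (Finset.prod_const_one
      (s := h.primeFactors.filter (fun p => 2 < p))).symm) ?_
    apply Finset.prod_le_prod (fun _ _ => zero_le_one)
    intro p hp
    have h2 : 2 < p := (Finset.mem_filter.1 hp).2
    have h2' : (2:ℝ) < p := by exact_mod_cast h2
    have : 0 < 1 / ((p:ℝ) - 2) := by
      apply div_pos one_pos; linarith
    linarith
  have hP0 : 0 < P := by linarith
  set t := L / 2 - 3 * l with htdef
  have hDl : D ≤ D * l := by nlinarith
  have htD : (L / 2) * (1 - k * l / L) ≤ t - D := by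
    have e : (L / 2) * (1 - k * l / L) = L / 2 - k * l / 2 := by field_simp
    rw [e, hk, htdef]
    nlinarith
  have hs1 : k * l / L ≤ 1 / 2 := by
    rw [div_le_iff₀ hLpos]; linarith
  have hs0 : 0 ≤ k * l / L := by positivity
  set s := k * l / L with hs
  have htDpos : 0 < (L / 2) * (1 - s) := by
    apply mul_pos (by linarith) (by linarith)
  have htpos : 0 < t := by linarith
  set y := Real.exp t with hy
  have hy1 : 1 ≤ y := Real.one_le_exp htpos.le
  have hlogy : Real.log y = t := Real.log_exp t
  set z := ⌊y⌋₊ with hz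
  have hz1 : 1 ≤ z := Nat.one_le_floor_iff _ |>.2 hy1
  have hzy : (z:ℝ) ≤ y := Nat.floor_le (by linarith)
  have hz1' : (1:ℝ) ≤ z := by exact_mod_cast hz1
  have main := sieve_main hz1 hh S hS hp hh0
  have hG := G_h_ge z hh hh0
  have hlow := G_lower hy1
  have hGpos : 0 < ∑ l ∈ Dz z, gm (vh h) l := G_pos hz1 (fun p hp => vh_pos hh hp)
  rw [hlogy] at hlow
  set G := ∑ l ∈ Dz z, gm (vh h) l with hGdef
  have hGP : (Bc * t ^ 2 - 2 * t * Bl) / 4 ≤ G * P := hlow.trans hG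
  -- main term
  have hX1 : (⌊X⌋₊ : ℝ) ≤ X := Nat.floor_le hX.le
  have hA : L ^ 2 ≤ 16 * tw * P * (1 + 6 * s) * G := by
    have h1 : tw * ((Bc * t ^ 2 - 2 * t * Bl) / 4) = t * (t - D) / 4 := by
      have : tw * ((Bc * t ^ 2 - 2 * t * Bl) / 4) = ((Bc * tw) * t ^ 2 - t * (2 * Bl * tw)) / 4 := by ring
      rw [this, htw, hD]; ring
    have h2 : t * (t - D) / 4 ≤ tw * (G * P) := by
      rw [← h1]; exact mul_le_mul_of_nonneg_left hGP ht.le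
    have h3 : ((L / 2) * (1 - s)) ^ 2 ≤ t * (t - D) := by
      rw [sq]
      apply mul_le_mul _ htD htDpos.le htpos.le
      linarith
    have h4 := inv_sq_bound hs0 hs1
    have h5 : L ^ 2 * (1 - s) ^ 2 ≤ 16 * (tw * (G * P)) := by nlinarith
    calc L ^ 2 ≤ L ^ 2 * ((1 + 6 * s) * (1 - s) ^ 2) := le_mul_of_one_le_right (by positivity) h4
      _ = (1 + 6 * s) * (L ^ 2 * (1 - s) ^ 2) := by ring
      _ ≤ (1 + 6 * s) * (16 * (tw * (G * P))) := mul_le_mul_of_nonneg_left h5 (by linarith)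
      _ = _ := by ring
  have hM : (⌊X⌋₊ : ℝ) / G ≤ 16 * tw * P * (X / L ^ 2) * (1 + 6 * s) := by
    refine (div_le_div_of_nonneg_right hX1 hGpos.le).trans ?_
    rw [div_le_iff₀ hGpos]
    have h1 : X = (X / L ^ 2) * L ^ 2 := by field_simp
    calc X = (X / L ^ 2) * L ^ 2 := h1
      _ ≤ (X / L ^ 2) * (16 * tw * P * (1 + 6 * s) * G) :=
          mul_le_mul_of_nonneg_left hA (by positivity)
      _ = _ := by ring
  -- error term
  have hlz : Real.log z ≤ L / 2 := by
    have := Real.log_le_log (by linarith) hzy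
    rw [hlogy] at this
    linarith
  have hlz0 : 0 ≤ Real.log z := Real.log_nonneg hz1'
  have hyy : y ^ 2 = X / L ^ 6 := by
    have e1 : X = Real.exp L := (Real.exp_log hX).symm
    have e2 : L = Real.exp l := (Real.exp_log hLpos).symm
    have e3 : L ^ 6 = Real.exp (6 * l) := by
      conv_lhs => rw [e2]
      rw [← Real.exp_nat_mul]; norm_num
    rw [e3]
    conv_rhs => rw [e1]
    rw [← Real.exp_sub, hy, ← Real.exp_nat_mul]
    congr 1
    rw [htdef]; push_cast; ring
  have hE : ((z:ℝ) * (1 + Real.log z)) ^ 2 ≤ X / L ^ 4 := by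
    have h1 : (z:ℝ) * (1 + Real.log z) ≤ y * L :=
      mul_le_mul hzy (by linarith) (by linarith) (by linarith)
    calc ((z:ℝ) * (1 + Real.log z)) ^ 2 ≤ (y * L) ^ 2 := by
          apply pow_le_pow_left₀ _ h1
          apply mul_nonneg <;> linarith
      _ = y ^ 2 * L ^ 2 := by ring
      _ = X / L ^ 4 := by rw [hyy]; field_simp
  have hE2 : (z:ℝ) ≤ ((z:ℝ) * (1 + Real.log z)) ^ 2 := by
    have h1 : (z:ℝ) ≤ (z:ℝ) * (1 + Real.log z) := le_mul_of_one_le_right (by linarith) (by linarith)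
    refine h1.trans (le_self_pow₀ (by linarith) (by norm_num))
  have hErr : 2 * (X / L ^ 4) ≤ 16 * tw * P * (X / L ^ 2) * (1 / (8 * tw) * (l / L)) := by
    have e : 16 * tw * P * (X / L ^ 2) * (1 / (8 * tw) * (l / L)) = (2 * (X / L ^ 4)) * (P * l * L) := by
      field_simp; ring
    rw [e]
    apply le_mul_of_one_le_right (by positivity)
    have h1 : 1 ≤ P * l := by nlinarith
    nlinarith
  have hfin : 16 * tw * P * (X / L ^ 2) * (1 + (6 * k + 1 / (8 * tw)) * (l / L)) =
      16 * tw * P * (X / L ^ 2) * (1 + 6 * s) + 16 * tw * P * (X / L ^ 2) * (1 / (8 * tw) * (l / L)) := by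
    rw [hs]; ring
  rw [hfin]
  linarith

lemma final (tw : ℝ) (htw : Bc * tw = 1) (c : ℝ) (hc1 : 1 / 2 ≤ c) (hc2 : c < 1) :
    ∃ C : ℝ, 0 < C ∧ ∃ x₀ : ℝ, ∀ x ≥ x₀, ∀ h : ℕ, 2 ∣ h → 2 ≤ h → (h : ℝ) < x ^ (1 - c) →
      ∀ S : Finset ℕ, (∀ q ∈ S, 2 < q ∧ (q : ℝ) < x / h ∧ q.Prime ∧ (q * h + 1).Prime) →
        (S.card : ℝ) ≤
          16 * tw * (∏ p ∈ h.primeFactors.filter (fun p => 2 < p), (1 + 1 / ((p : ℝ) - 2))) *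
            ((x / h) / (Real.log (x / h)) ^ 2) * (1 + C * Real.log (Real.log x) / Real.log x) := by
  obtain ⟨ht, K, hK, L0, hL03, H⟩ := H_bound tw htw
  refine ⟨2 * K, by positivity, Real.exp (2 * L0), ?_⟩
  intro x hx h hh hh2 hhx S hS
  have hx0 : 0 < x := (Real.exp_pos _).trans_le hx
  have hlx : 2 * L0 ≤ Real.log x := (Real.le_log_iff_exp_le hx0).2 hx
  have hh0 : (0:ℝ) < h := by exact_mod_cast (by omega : 0 < h)
  have hh1 : (1:ℝ) ≤ h := by exact_mod_cast (by omega : 1 ≤ h)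
  have hlh : Real.log h ≤ (1 - c) * Real.log x := by
    rw [← Real.log_rpow hx0]
    exact Real.log_le_log hh0 hhx.le
  have hlh0 : 0 ≤ Real.log h := Real.log_nonneg hh1
  have hX : 0 < x / h := by positivity
  have hlX : Real.log (x / h) = Real.log x - Real.log h := Real.log_div hx0.ne' hh0.ne'
  have hlo : Real.log x / 2 ≤ Real.log (x / h) := by rw [hlX]; nlinarith
  have hhi : Real.log (x / h) ≤ Real.log x := by rw [hlX]; linarith
  refine (H (x / h) h hX (by linarith) hh (by omega) S ?_ ?_).trans ?_
  · intro q hq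
    obtain ⟨h1, h2, -, -⟩ := hS q hq
    exact Finset.mem_Ioc.2 ⟨by omega, Nat.le_floor h2.le⟩
  · intro q hq
    obtain ⟨-, -, h1, h2⟩ := hS q hq
    exact ⟨h1, h2⟩
  · have hP0 : 0 ≤ ∏ p ∈ h.primeFactors.filter (fun p => 2 < p), (1 + 1 / ((p : ℝ) - 2)) := by
      apply Finset.prod_nonneg
      intro p hp
      have h2 : 2 < p := (Finset.mem_filter.1 hp).2
      have h2' : (2:ℝ) < p := by exact_mod_cast h2
      have : 0 < 1 / ((p:ℝ) - 2) := by
        apply div_pos one_pos; linarith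
      linarith
    apply mul_le_mul_of_nonneg_left
    · have hL1 : 0 < Real.log (x / h) := by linarith
      have hll : Real.log (Real.log (x / h)) ≤ Real.log (Real.log x) := Real.log_le_log hL1 hhi
      have hll0 : 0 ≤ Real.log (Real.log x) := Real.log_nonneg (by linarith)
      have h1 : Real.log (Real.log (x / h)) / Real.log (x / h) ≤
          Real.log (Real.log x) / (Real.log x / 2) :=
        div_le_div₀ hll0 hll (by linarith) hlo
      have h2 := mul_le_mul_of_nonneg_left h1 hK.le
      have e : K * (Real.log (Real.log x) / (Real.log x / 2)) =
          2 * K * Real.log (Real.log x) / Real.log x := by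
        field_simp
      linarith
    · positivity

end

/-- Sieve bound for the number of primes `2 < q < x/h` with `qh + 1` also prime. -/
theorem sieve_bound_qh_add_one (c : ℝ) (hc1 : 1 / 2 ≤ c) (hc2 : c < 1) :
    ∃ C : ℝ, 0 < C ∧ ∃ x₀ : ℝ, ∀ x ≥ x₀,
      ∀ h : ℕ, 2 ∣ h → 2 ≤ h → (h : ℝ) < x ^ (1 - c) →
        (((Finset.range (⌊x / h⌋₊ + 1)).filter
            (fun q : ℕ => 2 < q ∧ (q : ℝ) < x / h ∧ q.Prime ∧ (q * h + 1).Prime)).card : ℝ) ≤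
          16 * twinConst *
            (∏ p ∈ h.primeFactors.filter (fun p => 2 < p), (1 + 1 / ((p : ℝ) - 2))) *
            ((x / h) / (Real.log (x / h)) ^ 2) *
            (1 + C * Real.log (Real.log x) / Real.log x) := by
  obtain ⟨C, hC, x₀, H⟩ := final twinConst (twin_mul twinConst (by
    unfold twinConst
    congr)) c hc1 hc2
  refine ⟨C, hC, x₀, ?_⟩
  intro x hx h h2 hh hhx
  have := H x hx h h2 hh hhx ((Finset.range (⌊x / h⌋₊ + 1)).filter
            (fun q : ℕ => 2 < q ∧ (q : ℝ) < x / h ∧ q.Prime ∧ (q * h + 1).Prime))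
            (fun q hq => (Finset.mem_filter.1 hq).2)
  convert this
end

section
/- Fix c with 1/2 ≤ c < 1. For every ε > 0 there exists x₀ such that for all x ≥ x₀: T'_c(x) ≤ (1 + ε)·16·𝔖·Σ_{h < x^{1−c}, h even} ∏_{p | h, p > 2}(1 + 1/(p − 2)) · (x/h)/(log(x/h))². -/
open Real Finset

attribute [local instance] Classical.propDecidable

/-- `Pplus n` is the largest prime factor of `n`, with the convention `Pplus 1 = 1`. -/
noncomputable def Pplus (n : ℕ) : ℕ := if n = 1 then 1 else n.primeFactors.sup id

/-- `T' c x = #{p ≤ x : p prime, P⁺(p-1) ≥ x^c}`. -/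
noncomputable def T' (c x : ℝ) : ℕ :=
  ((Finset.range (⌊x⌋₊ + 1)).filter
    (fun p : ℕ => p.Prime ∧ x ^ c ≤ (Pplus (p - 1) : ℝ))).card

/-- Sum of `∏ f` over subsets of `Q` whose product is at most `z`. -/
noncomputable def SS (f : ℕ → ℝ) (Q : Finset ℕ) (z : ℝ) : ℝ :=
  ∑ U ∈ Q.powerset, if (∏ p ∈ U, (p : ℝ)) ≤ z then ∏ p ∈ U, f p else 0

lemma SS_nonneg {f : ℕ → ℝ} {Q : Finset ℕ} (hf : ∀ p ∈ Q, 0 ≤ f p) (z : ℝ) : 0 ≤ SS f Q z := by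
  refine Finset.sum_nonneg fun U hU => ?_
  split_ifs
  · exact Finset.prod_nonneg fun p hp => hf p (Finset.mem_powerset.1 hU hp)
  · exact le_rfl

lemma SS_mono {f : ℕ → ℝ} {Q : Finset ℕ} (hf : ∀ p ∈ Q, 0 ≤ f p) {z w : ℝ} (h : z ≤ w) :
    SS f Q z ≤ SS f Q w := by
  refine Finset.sum_le_sum fun U hU => ?_
  have : 0 ≤ ∏ p ∈ U, f p := Finset.prod_nonneg fun p hp => hf p (Finset.mem_powerset.1 hU hp)
  split_ifs with h1 h2
  · exact le_rfl
  · exact absurd (h1.trans h) h2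
  · exact this
  · exact le_rfl

lemma SS_mono_f {f g : ℕ → ℝ} {Q : Finset ℕ} (hf : ∀ p ∈ Q, 0 ≤ f p) (hfg : ∀ p ∈ Q, f p ≤ g p)
    (z : ℝ) : SS f Q z ≤ SS g Q z := by
  refine Finset.sum_le_sum fun U hU => ?_
  split_ifs with h1
  · exact Finset.prod_le_prod (fun p hp => hf p (Finset.mem_powerset.1 hU hp))
      (fun p hp => hfg p (Finset.mem_powerset.1 hU hp))
  · exact le_rfl

lemma SS_insert (f : ℕ → ℝ) {Q : Finset ℕ} {p : ℕ} (hp : p ∉ Q) (hp0 : 0 < p) (z : ℝ) :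
    SS f (insert p Q) z = SS f Q z + f p * SS f Q (z / p) := by
  unfold SS
  rw [Finset.sum_powerset_insert hp, Finset.mul_sum]
  congr 1
  refine Finset.sum_congr rfl fun U hU => ?_
  have hpU : p ∉ U := fun h => hp (Finset.mem_powerset.1 hU h)
  have hp' : (0 : ℝ) < p := by exact_mod_cast hp0
  rw [Finset.prod_insert hpU, Finset.prod_insert hpU, mul_ite, mul_zero]
  simp only [le_div_iff₀' hp']

lemma SS_compare {f f' : ℕ → ℝ} (Q : Finset ℕ) (hQ : ∀ p ∈ Q, 0 < p) (hf' : ∀ p ∈ Q, 0 ≤ f' p)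
    (hff : ∀ p ∈ Q, f' p ≤ f p) :
    ∀ z : ℝ, 0 ≤ z → (∏ p ∈ Q, (1 + f' p)) * SS f Q z ≤ (∏ p ∈ Q, (1 + f p)) * SS f' Q z := by
  induction Q using Finset.induction_on with
  | empty => intro z _; simp [SS]
  | insert p Q hp ih =>
    intro z hz
    have ih' := ih (fun q hq => hQ q (Finset.mem_insert_of_mem hq))
      (fun q hq => hf' q (Finset.mem_insert_of_mem hq))
      (fun q hq => hff q (Finset.mem_insert_of_mem hq))
    have hp0 := hQ p (Finset.mem_insert_self _ _)
    have h1 := hf' p (Finset.mem_insert_self _ _)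
    have h2 := hff p (Finset.mem_insert_self _ _)
    have hp1 : (1 : ℝ) ≤ p := by exact_mod_cast hp0
    have hzp : z / p ≤ z := div_le_self hz hp1
    rw [SS_insert f hp hp0, SS_insert f' hp hp0, Finset.prod_insert hp, Finset.prod_insert hp]
    have a := ih' z hz
    have b := ih' (z / p) (by positivity)
    have m : SS f' Q (z / p) ≤ SS f' Q z :=
      SS_mono (fun q hq => hf' q (Finset.mem_insert_of_mem hq)) hzp
    set B' := ∏ p ∈ Q, (1 + f' p)
    set B := ∏ p ∈ Q, (1 + f p)
    have hB : 0 ≤ B := Finset.prod_nonneg fun q hq => by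
      have := hf' q (Finset.mem_insert_of_mem hq)
      have := hff q (Finset.mem_insert_of_mem hq)
      linarith
    have e1 : (1 + f' p) * (B' * SS f Q z) ≤ (1 + f' p) * (B * SS f' Q z) :=
      mul_le_mul_of_nonneg_left a (by linarith)
    have e2 : (1 + f' p) * f p * (B' * SS f Q (z / p)) ≤ (1 + f' p) * f p * (B * SS f' Q (z / p)) :=
      mul_le_mul_of_nonneg_left b (mul_nonneg (by linarith) (by linarith))
    have e3 : 0 ≤ B * ((f p - f' p) * (SS f' Q z - SS f' Q (z / p))) :=
      mul_nonneg hB (mul_nonneg (by linarith) (by linarith))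
    nlinarith

lemma SS_union_lower {f : ℕ → ℝ} (R W : Finset ℕ) (hd : Disjoint W R)
    (hf : ∀ p ∈ W ∪ R, 0 ≤ f p) (hQ : ∀ p ∈ W, 0 < p) :
    ∀ z : ℝ, 0 ≤ z → (∏ p ∈ W, (1 + f p)) * SS f R (z / ∏ p ∈ W, (p : ℝ)) ≤ SS f (W ∪ R) z := by
  induction W using Finset.induction_on with
  | empty => intro z _; simp
  | insert p W hp ih =>
    intro z hz
    have hd' := Finset.disjoint_insert_left.1 hd
    have hp0 := hQ p (Finset.mem_insert_self _ _)
    have hp1 : (1 : ℝ) ≤ p := by exact_mod_cast hp0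
    have hzp : z / p ≤ z := div_le_self hz hp1
    have hpf : 0 ≤ f p := hf p (by simp)
    have hf2 : ∀ q ∈ W ∪ R, 0 ≤ f q := fun q hq => hf q (by
      rw [Finset.insert_union]; exact Finset.mem_insert_of_mem hq)
    have a := ih hd'.2 hf2 (fun q hq => hQ q (Finset.mem_insert_of_mem hq)) (z / p) (by positivity)
    have hn : p ∉ W ∪ R := by simp [hp, hd'.1]
    have m := SS_mono hf2 hzp
    rw [Finset.insert_union, SS_insert f hn hp0, Finset.prod_insert hp, Finset.prod_insert hp,
      ← div_div]
    have := mul_le_mul_of_nonneg_left a (by linarith : 0 ≤ 1 + f p)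
    nlinarith

lemma SS_union_upper {f : ℕ → ℝ} (R W : Finset ℕ) (hd : Disjoint W R)
    (hf : ∀ p ∈ W ∪ R, 0 ≤ f p) (hQ : ∀ p ∈ W, 0 < p) :
    ∀ z : ℝ, 0 ≤ z → SS f (W ∪ R) z ≤ (∏ p ∈ W, (1 + f p)) * SS f R z := by
  induction W using Finset.induction_on with
  | empty => intro z _; simp
  | insert p W hp ih =>
    intro z hz
    have hd' := Finset.disjoint_insert_left.1 hd
    have hp0 := hQ p (Finset.mem_insert_self _ _)
    have hp1 : (1 : ℝ) ≤ p := by exact_mod_cast hp0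
    have hzp : z / p ≤ z := div_le_self hz hp1
    have hpf : 0 ≤ f p := hf p (by simp)
    have hf2 : ∀ q ∈ W ∪ R, 0 ≤ f q := fun q hq => hf q (by
      rw [Finset.insert_union]; exact Finset.mem_insert_of_mem hq)
    have a := ih hd'.2 hf2 (fun q hq => hQ q (Finset.mem_insert_of_mem hq)) z hz
    have hn : p ∉ W ∪ R := by simp [hp, hd'.1]
    have m := SS_mono hf2 hzp
    rw [Finset.insert_union, SS_insert f hn hp0, Finset.prod_insert hp]
    have := mul_le_mul_of_nonneg_left a (by linarith : 0 ≤ 1 + f p)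
    nlinarith

lemma SS_pos {f : ℕ → ℝ} {Q : Finset ℕ} (hf : ∀ p ∈ Q, 0 ≤ f p) {z : ℝ} (hz : 1 ≤ z) :
    0 < SS f Q z := by
  have h : (if (∏ p ∈ (∅ : Finset ℕ), (p : ℝ)) ≤ z then ∏ p ∈ (∅ : Finset ℕ), f p else 0) ≤
      SS f Q z := by
    refine Finset.single_le_sum (f := fun U : Finset ℕ => if (∏ p ∈ U, (p : ℝ)) ≤ z
      then ∏ p ∈ U, f p else 0) (fun U hU => ?_) (Finset.empty_mem_powerset Q)
    split_ifs
    · exact Finset.prod_nonneg fun p hp => hf p (Finset.mem_powerset.1 hU hp)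
    · exact le_rfl
  simp [hz] at h
  linarith

lemma sum_sign_Icc (W M : Finset ℕ) :
    ∑ U ∈ M.powerset with W ⊆ U, (-1 : ℝ) ^ U.card = if W = M then (-1 : ℝ) ^ W.card else 0 := by
  by_cases hWM : W ⊆ M
  · have h1 : (M.powerset.filter fun U => W ⊆ U) = (M \ W).powerset.image (W ∪ ·) := by
      rw [← Finset.Icc_eq_image_powerset hWM]
      ext U
      simp [and_comm]
    rw [h1, Finset.sum_image]
    · have h2 : ∀ U ∈ (M \ W).powerset, (-1 : ℝ) ^ (W ∪ U).card =
          (-1 : ℝ) ^ W.card * (-1 : ℝ) ^ U.card := by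
        intro U hU
        rw [Finset.card_union_of_disjoint, pow_add]
        exact Finset.disjoint_of_subset_right (Finset.mem_powerset.1 hU) Finset.disjoint_sdiff
      rw [Finset.sum_congr rfl h2, ← Finset.mul_sum]
      have h3 := Finset.sum_powerset_neg_one_pow_card (x := M \ W)
      have h4 : ∑ U ∈ (M \ W).powerset, (-1 : ℝ) ^ U.card = if M \ W = ∅ then 1 else 0 := by
        have := congrArg (Int.cast : ℤ → ℝ) h3
        push_cast at this
        rw [this]
      rw [h4]
      have h5 : M \ W = ∅ ↔ W = M := by
        rw [Finset.sdiff_eq_empty_iff_subset]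
        exact ⟨fun h => Finset.Subset.antisymm hWM h, fun h => h ▸ Finset.Subset.refl _⟩
      simp only [h5]
      split_ifs <;> simp
    · intro U hU V hV h
      simp only [Finset.coe_powerset, Set.mem_preimage, Set.mem_powerset_iff, Finset.coe_subset] at hU hV
      have e : ∀ X : Finset ℕ, X ⊆ M \ W → (W ∪ X) \ W = X := by
        intro X hX
        rw [Finset.union_sdiff_cancel_left]
        exact Finset.disjoint_of_subset_right hX Finset.disjoint_sdiff
      rw [← e U (by simpa using hU), ← e V (by simpa using hV)]
      exact congrArg (· \ W) h
  · rw [if_neg (by rintro rfl; exact hWM (Finset.Subset.refl _))]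
    refine Finset.sum_eq_zero fun U hU => ?_
    simp only [Finset.mem_filter, Finset.mem_powerset] at hU
    exact absurd (hU.2.trans hU.1) hWM

lemma sum_superset {g : ℕ → ℝ} {Q U : Finset ℕ} (hU : U ⊆ Q) (hQ : ∀ p ∈ Q, 0 < p) (z : ℝ) :
    (∑ M ∈ Q.powerset with U ⊆ M, if (∏ p ∈ M, (p : ℝ)) ≤ z then ∏ p ∈ M, g p else 0) =
      (∏ p ∈ U, g p) * SS g (Q \ U) (z / ∏ p ∈ U, (p : ℝ)) := by
  have h1 : (Q.powerset.filter fun M => U ⊆ M) = (Q \ U).powerset.image (U ∪ ·) := by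
    rw [← Finset.Icc_eq_image_powerset hU]
    ext U
    simp [and_comm]
  have hpos : 0 < ∏ p ∈ U, (p : ℝ) :=
    Finset.prod_pos fun p hp => by exact_mod_cast hQ p (hU hp)
  rw [h1, Finset.sum_image]
  · unfold SS
    rw [Finset.mul_sum]
    refine Finset.sum_congr rfl fun V hV => ?_
    have hd : Disjoint U V :=
      Finset.disjoint_of_subset_right (Finset.mem_powerset.1 hV) Finset.disjoint_sdiff
    rw [Finset.prod_union hd, Finset.prod_union hd, mul_ite, mul_zero]
    simp only [le_div_iff₀' hpos]
  · intro X hX Y hY h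
    have e : ∀ X : Finset ℕ, X ∈ (Q \ U).powerset → (U ∪ X) \ U = X := by
      intro X hX
      rw [Finset.union_sdiff_cancel_left]
      exact Finset.disjoint_of_subset_right (Finset.mem_powerset.1 hX) Finset.disjoint_sdiff
    rw [← e X (by exact_mod_cast hX), ← e Y (by exact_mod_cast hY)]
    exact congrArg (· \ U) h

lemma selberg_weights (Q : Finset ℕ) (hQ : ∀ p ∈ Q, 0 < p) (ν g : ℕ → ℝ)
    (hν0 : ∀ p ∈ Q, 0 < ν p) (hg0 : ∀ p ∈ Q, 0 < g p) (hνg : ∀ p ∈ Q, (1 + g p) * ν p = g p)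
    (z : ℝ) (hz : 1 ≤ z) :
    ∃ lam : Finset ℕ → ℝ, lam ∅ = 1 ∧ (∀ U ⊆ Q, |lam U| ≤ 1) ∧
      (∀ U : Finset ℕ, z < ∏ p ∈ U, (p : ℝ) → lam U = 0) ∧
      ∑ U ∈ Q.powerset, ∑ V ∈ Q.powerset, lam U * lam V * ∏ p ∈ U ∪ V, ν p = 1 / SS g Q z := by
  set G := SS g Q z with hG
  have hGpos : 0 < G := SS_pos (fun p hp => (hg0 p hp).le) hz
  set k : Finset ℕ → ℝ := fun M => if (∏ p ∈ M, (p : ℝ)) ≤ z then ∏ p ∈ M, g p else 0 with hk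
  set H : Finset ℕ → ℝ := fun U => ∑ M ∈ Q.powerset with U ⊆ M, k M with hH
  have hGk : G = ∑ M ∈ Q.powerset, k M := rfl
  have hνU : ∀ U ⊆ Q, 0 < ∏ p ∈ U, ν p := fun U hU => Finset.prod_pos fun p hp => hν0 p (hU hp)
  refine ⟨fun U => (-1) ^ U.card * H U / (G * ∏ p ∈ U, ν p), ?_, ?_, ?_, ?_⟩
  · simp only [hH, Finset.card_empty, Finset.prod_empty, Finset.empty_subset, Finset.filter_true]
    rw [← hGk]
    field_simp
  · intro U hU
    have h1 : H U = (∏ p ∈ U, g p) * SS g (Q \ U) (z / ∏ p ∈ U, (p : ℝ)) := sum_superset hU hQ z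
    have h2 := SS_union_lower (f := g) (Q \ U) U Finset.disjoint_sdiff
      (fun p hp => (hg0 p (by rw [Finset.union_sdiff_of_subset hU] at hp; exact hp)).le)
      (fun p hp => hQ p (hU hp)) z (by linarith)
    rw [Finset.union_sdiff_of_subset hU] at h2
    have h3 : (∏ p ∈ U, (1 + g p)) * ∏ p ∈ U, ν p = ∏ p ∈ U, g p := by
      rw [← Finset.prod_mul_distrib]
      exact Finset.prod_congr rfl fun p hp => hνg p (hU hp)
    have h4 : 0 ≤ SS g (Q \ U) (z / ∏ p ∈ U, (p : ℝ)) :=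
      SS_nonneg (fun p hp => (hg0 p (Finset.sdiff_subset hp)).le) _
    have h5 : 0 ≤ ∏ p ∈ U, g p := Finset.prod_nonneg fun p hp => (hg0 p (hU hp)).le
    have h6 : 0 ≤ H U := by rw [h1]; positivity
    have h7 := hνU U hU
    rw [abs_div, abs_mul, abs_pow, abs_neg, abs_one, one_pow, one_mul, abs_of_nonneg h6,
      abs_of_pos (by positivity), div_le_one (by positivity), h1, ← h3]
    nlinarith
  · intro U hU
    have : H U = 0 := by
      refine Finset.sum_eq_zero fun M hM => ?_
      simp only [Finset.mem_filter, Finset.mem_powerset] at hM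
      have : (∏ p ∈ U, (p : ℝ)) ≤ ∏ p ∈ M, (p : ℝ) := by
        refine Finset.prod_le_prod_of_subset_of_one_le hM.2 (fun p _ => by positivity) ?_
        intro p hp _
        exact_mod_cast hQ p (hM.1 hp)
      simp only [hk]
      rw [if_neg (by linarith)]
    simp [this]
  · set a : Finset ℕ → ℝ := fun U => (-1) ^ U.card * H U / G with ha
    set b : Finset ℕ → ℝ := fun W => ∏ p ∈ W, (g p)⁻¹ with hb
    have step1 : ∀ U ∈ Q.powerset, ∀ V ∈ Q.powerset,
        ((-1) ^ U.card * H U / (G * ∏ p ∈ U, ν p)) * ((-1) ^ V.card * H V / (G * ∏ p ∈ V, ν p)) *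
          ∏ p ∈ U ∪ V, ν p =
        ∑ W ∈ Q.powerset, b W * ((if W ⊆ U then a U else 0) * (if W ⊆ V then a V else 0)) := by
      intro U hU V hV
      rw [Finset.mem_powerset] at hU hV
      have hU' := hνU U hU
      have hV' := hνU V hV
      have hI' := hνU (U ∩ V) (Finset.inter_subset_left.trans hU)
      have e1 : (∏ p ∈ U ∪ V, ν p) * ∏ p ∈ U ∩ V, ν p = (∏ p ∈ U, ν p) * ∏ p ∈ V, ν p :=
        Finset.prod_union_inter
      have e2 : (∏ p ∈ U ∩ V, ν p)⁻¹ = ∑ W ∈ (U ∩ V).powerset, b W := by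
        rw [hb, ← Finset.prod_one_add, ← Finset.prod_inv_distrib]
        refine Finset.prod_congr rfl fun p hp => ?_
        have hpQ := hU (Finset.mem_inter.1 hp).1
        have := hνg p hpQ
        have := hν0 p hpQ
        have := hg0 p hpQ
        field_simp
        linarith
      have e3 : ∑ W ∈ Q.powerset, b W * ((if W ⊆ U then a U else 0) * (if W ⊆ V then a V else 0))
          = ∑ W ∈ (U ∩ V).powerset, b W * (a U * a V) := by
        have : (U ∩ V).powerset = Q.powerset.filter fun W => W ⊆ U ∧ W ⊆ V := by
          ext W
          simp only [Finset.mem_powerset, Finset.mem_filter, Finset.subset_inter_iff]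
          exact ⟨fun h => ⟨h.1.trans hU, h⟩, fun h => h.2⟩
        rw [this, Finset.sum_filter]
        refine Finset.sum_congr rfl fun W _ => ?_
        by_cases h1 : W ⊆ U <;> by_cases h2 : W ⊆ V <;> simp [h1, h2]
      rw [e3, ← Finset.sum_mul, ← e2]
      have e4 : (∏ p ∈ U ∪ V, ν p) = (∏ p ∈ U, ν p) * (∏ p ∈ V, ν p) * (∏ p ∈ U ∩ V, ν p)⁻¹ := by
        rw [← e1]; field_simp
      rw [e4]
      simp only [ha]
      field_simp
    rw [Finset.sum_congr rfl fun U hU => Finset.sum_congr rfl fun V hV => step1 U hU V hV]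
    have step2 : ∑ U ∈ Q.powerset, ∑ V ∈ Q.powerset, ∑ W ∈ Q.powerset,
        b W * ((if W ⊆ U then a U else 0) * (if W ⊆ V then a V else 0)) =
        ∑ W ∈ Q.powerset, b W * (∑ U ∈ Q.powerset, if W ⊆ U then a U else 0) ^ 2 := by
      have : ∀ W ∈ Q.powerset, b W * (∑ U ∈ Q.powerset, if W ⊆ U then a U else 0) ^ 2 =
          ∑ U ∈ Q.powerset, ∑ V ∈ Q.powerset,
            b W * ((if W ⊆ U then a U else 0) * (if W ⊆ V then a V else 0)) := by
        intro W _
        rw [sq, Finset.sum_mul_sum, Finset.mul_sum]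
        exact Finset.sum_congr rfl fun U _ => Finset.mul_sum _ _ _
      rw [Finset.sum_congr rfl this]
      symm
      rw [Finset.sum_comm]
      exact Finset.sum_congr rfl fun U _ => Finset.sum_comm
    rw [step2]
    have step3 : ∀ W ∈ Q.powerset, (∑ U ∈ Q.powerset, if W ⊆ U then a U else 0) =
        (-1) ^ W.card * k W / G := by
      intro W hW
      have e1 : ∀ U ∈ Q.powerset, (if W ⊆ U then a U else 0) =
          ∑ M ∈ Q.powerset, (k M / G) * (if U ⊆ M ∧ W ⊆ U then (-1) ^ U.card else 0) := by
        intro U _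
        by_cases h : W ⊆ U
        · simp only [h, if_true, and_true, ha, hH]
          rw [Finset.sum_filter, Finset.mul_sum, Finset.sum_div]
          refine Finset.sum_congr rfl fun M _ => ?_
          split_ifs
          · ring
          · simp
        · simp [h]
      rw [Finset.sum_congr rfl e1, Finset.sum_comm]
      have e2 : ∀ M ∈ Q.powerset, ∑ U ∈ Q.powerset,
          (k M / G) * (if U ⊆ M ∧ W ⊆ U then (-1 : ℝ) ^ U.card else 0) =
          if W = M then (-1 : ℝ) ^ W.card * k W / G else 0 := by
        intro M hM
        rw [← Finset.mul_sum, ← Finset.sum_filter]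
        have : (Q.powerset.filter fun U => U ⊆ M ∧ W ⊆ U) = M.powerset.filter fun U => W ⊆ U := by
          ext U
          simp only [Finset.mem_powerset, Finset.mem_filter]
          exact ⟨fun h => h.2, fun h => ⟨h.1.trans (Finset.mem_powerset.1 hM), h⟩⟩
        rw [this, sum_sign_Icc]
        split_ifs with h
        · rw [h]; ring
        · simp
      rw [Finset.sum_congr rfl e2, Finset.sum_ite_eq, if_pos hW]
    have step4 : ∀ W ∈ Q.powerset, b W * (∑ U ∈ Q.powerset, if W ⊆ U then a U else 0) ^ 2 =
        k W / G ^ 2 := by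
      intro W hW
      rw [step3 W hW, div_pow, mul_pow, ← pow_mul, mul_comm W.card 2, pow_mul]
      simp only [even_two, Even.neg_pow, one_pow, one_mul, hk, hb]
      have : (∏ p ∈ W, (g p)⁻¹) * ∏ p ∈ W, g p = 1 := by
        rw [← Finset.prod_mul_distrib]
        exact Finset.prod_eq_one fun p hp =>
          inv_mul_cancel₀ (hg0 p (Finset.mem_powerset.1 hW hp)).ne'
      split_ifs
      · rw [mul_div_assoc', sq, ← mul_assoc, this, one_mul]
      · simp
    rw [Finset.sum_congr rfl step4, ← Finset.sum_div, ← hGk]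
    field_simp

/-- Abstract Selberg sieve upper bound. -/
lemma selberg_bound (Q : Finset ℕ) (hQ : ∀ p ∈ Q, 0 < p) (ν g : ℕ → ℝ)
    (hν0 : ∀ p ∈ Q, 0 < ν p) (hg0 : ∀ p ∈ Q, 0 < g p) (hνg : ∀ p ∈ Q, (1 + g p) * ν p = g p)
    (z : ℝ) (hz : 1 ≤ z) (A : Finset ℕ) (D : ℕ → ℕ → Prop) (y : ℝ)
    (hA : ∀ U ⊆ Q, |((A.filter fun n => ∀ p ∈ U, D p n).card : ℝ) - y * ∏ p ∈ U, ν p| ≤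
      2 ^ U.card) :
    ((A.filter fun n => ∀ p ∈ Q, ¬ D p n).card : ℝ) ≤
      y / SS g Q z + (SS (fun _ => 2) Q z) ^ 2 := by
  obtain ⟨lam, h0, h1, h2, h3⟩ := selberg_weights Q hQ ν g hν0 hg0 hνg z hz
  set X : ℕ → Finset ℕ → ℝ := fun n U => if ∀ p ∈ U, D p n then lam U else 0 with hX
  have step1 : ((A.filter fun n => ∀ p ∈ Q, ¬ D p n).card : ℝ) ≤
      ∑ n ∈ A, (∑ U ∈ Q.powerset, X n U) ^ 2 := by
    rw [Finset.card_filter, Nat.cast_sum]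
    refine Finset.sum_le_sum fun n _ => ?_
    by_cases h : ∀ p ∈ Q, ¬ D p n
    · have : ∑ U ∈ Q.powerset, X n U = 1 := by
        rw [Finset.sum_eq_single ∅]
        · simp [hX, h0]
        · intro U hU hne
          obtain ⟨p, hp⟩ := Finset.nonempty_iff_ne_empty.2 hne
          simp only [hX]
          rw [if_neg]
          exact fun h' => h p (Finset.mem_powerset.1 hU hp) (h' p hp)
        · intro h'; exact absurd (Finset.empty_mem_powerset Q) h'
      rw [this, if_pos h]; simp
    · rw [if_neg h]; simp; positivity
  have step2 : ∑ n ∈ A, (∑ U ∈ Q.powerset, X n U) ^ 2 =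
      ∑ U ∈ Q.powerset, ∑ V ∈ Q.powerset, lam U * lam V *
        ((A.filter fun n => ∀ p ∈ U ∪ V, D p n).card : ℝ) := by
    have e : ∀ n ∈ A, (∑ U ∈ Q.powerset, X n U) ^ 2 =
        ∑ U ∈ Q.powerset, ∑ V ∈ Q.powerset, X n U * X n V := by
      intro n _; rw [sq, Finset.sum_mul_sum]
    rw [Finset.sum_congr rfl e, Finset.sum_comm]
    refine Finset.sum_congr rfl fun U _ => ?_
    rw [Finset.sum_comm]
    refine Finset.sum_congr rfl fun V _ => ?_
    rw [Finset.card_filter, Nat.cast_sum, Finset.mul_sum]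
    refine Finset.sum_congr rfl fun n _ => ?_
    have : (∀ p ∈ U ∪ V, D p n) ↔ (∀ p ∈ U, D p n) ∧ (∀ p ∈ V, D p n) := by
      simp only [Finset.mem_union]
      exact ⟨fun h => ⟨fun p hp => h p (Or.inl hp), fun p hp => h p (Or.inr hp)⟩,
        fun h p hp => hp.elim (h.1 p) (h.2 p)⟩
    simp only [hX, this]
    by_cases a : ∀ p ∈ U, D p n
    · by_cases b : ∀ p ∈ V, D p n
      · rw [if_pos a, if_pos b, if_pos ⟨a, b⟩]; simp
      · have hn : ¬ ((∀ p ∈ U, D p n) ∧ (∀ p ∈ V, D p n)) := fun h => b h.2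
        rw [if_neg hn, if_neg b]; simp
    · have hn : ¬ ((∀ p ∈ U, D p n) ∧ (∀ p ∈ V, D p n)) := fun h => a h.1
      rw [if_neg hn, if_neg a]; simp
  have step3 : ∀ U ∈ Q.powerset, ∀ V ∈ Q.powerset, lam U * lam V *
        ((A.filter fun n => ∀ p ∈ U ∪ V, D p n).card : ℝ) ≤
        y * (lam U * lam V * ∏ p ∈ U ∪ V, ν p) +
        (if (∏ p ∈ U, (p : ℝ)) ≤ z then ∏ p ∈ U, (2 : ℝ) else 0) *
        (if (∏ p ∈ V, (p : ℝ)) ≤ z then ∏ p ∈ V, (2 : ℝ) else 0) := by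
    intro U hU V hV
    rw [Finset.mem_powerset] at hU hV
    split_ifs with c1 c2
    · have e1 := hA (U ∪ V) (Finset.union_subset hU hV)
      have e2 : (2 : ℝ) ^ (U ∪ V).card ≤ 2 ^ U.card * 2 ^ V.card := by
        rw [← pow_add]
        exact pow_le_pow_right₀ (by norm_num) (Finset.card_union_le _ _)
      have e3 : |lam U * lam V| ≤ 1 := by
        rw [abs_mul]
        exact mul_le_one₀ (h1 U hU) (abs_nonneg _) (h1 V hV)
      set N := ((A.filter fun n => ∀ p ∈ U ∪ V, D p n).card : ℝ)
      have e4 : lam U * lam V * (N - y * ∏ p ∈ U ∪ V, ν p) ≤ 2 ^ U.card * 2 ^ V.card := by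
        refine (le_abs_self _).trans ?_
        rw [abs_mul]
        refine (mul_le_of_le_one_left (abs_nonneg _) e3).trans (e1.trans e2)
      simp only [Finset.prod_const]
      linarith
    · rw [h2 V (not_le.1 c2)]; simp
    · rw [h2 U (not_le.1 c1)]; simp
    · rw [h2 U (not_le.1 c1)]; simp
  refine step1.trans (step2.le.trans ((Finset.sum_le_sum fun U hU => Finset.sum_le_sum
    fun V hV => step3 U hU V hV).trans ?_))
  simp only [Finset.sum_add_distrib, ← Finset.mul_sum]
  rw [h3, ← Finset.sum_mul, sq]
  unfold SS
  rw [mul_one_div]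

lemma card_modEq_bound (y : ℝ) (hy : 0 ≤ y) (q : ℕ) (hq : 0 < q) (a : ℕ) :
    |(((Finset.range (⌊y⌋₊ + 1)).filter fun n => n ≡ a [MOD q]).card : ℝ) - y / q| ≤ 1 := by
  have h1 := Nat.count_modEq_card (⌊y⌋₊ + 1) hq a
  rw [Nat.count_eq_card_filter_range] at h1
  have h2 := Nat.floor_le hy
  have h3 := Nat.lt_floor_add_one y
  have hq' : (0 : ℝ) < q := by exact_mod_cast hq
  have hq1 : (1 : ℝ) ≤ q := by exact_mod_cast hq
  set C := ((Finset.range (⌊y⌋₊ + 1)).filter fun n => n ≡ a [MOD q]).card with hC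
  have h4 := Nat.div_add_mod (⌊y⌋₊ + 1) q
  have h5 := Nat.mod_lt (⌊y⌋₊ + 1) hq
  have h1' : C = (⌊y⌋₊ + 1) / q + if a % q < (⌊y⌋₊ + 1) % q then 1 else 0 := by
    rw [← h1, hC]
  set b := (⌊y⌋₊ + 1) / q
  set m := (⌊y⌋₊ + 1) % q
  have u1 : q * C ≤ ⌊y⌋₊ + q := by
    rw [h1']
    split_ifs with h
    · have : q * (b + 1) = q * b + q := by ring
      omega
    · rw [add_zero]; omega
  have u2 : ⌊y⌋₊ + 1 ≤ q * C + q := by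
    rw [h1', mul_add]
    omega
  have u1' : (q : ℝ) * C ≤ ⌊y⌋₊ + q := by exact_mod_cast u1
  have u2' : (⌊y⌋₊ : ℝ) + 1 ≤ q * C + q := by exact_mod_cast u2
  have e : y / q * q = y := by field_simp
  rw [abs_le]
  constructor
  · by_contra hcon
    push Not at hcon
    nlinarith
  · by_contra hcon
    push Not at hcon
    nlinarith

lemma card_sieve_bound (y : ℝ) (hy : 0 ≤ y) (D : ℕ → ℕ → Prop) (R : ℕ → Finset ℕ) (U : Finset ℕ)
    (hU : ∀ p ∈ U, p.Prime) (hR : ∀ p ∈ U, ∀ r ∈ R p, r < p)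
    (hD : ∀ p ∈ U, ∀ n, D p n ↔ n % p ∈ R p) :
    ∀ q : ℕ, 0 < q → (∀ p ∈ U, Nat.Coprime q p) → ∀ a : ℕ,
    |(((Finset.range (⌊y⌋₊ + 1)).filter fun n => n ≡ a [MOD q] ∧ ∀ p ∈ U, D p n).card : ℝ)
      - y / q * ∏ p ∈ U, ((R p).card : ℝ) / p| ≤ ∏ p ∈ U, ((R p).card : ℝ) := by
  induction U using Finset.induction_on with
  | empty =>
    intro q hq _ a
    have := card_modEq_bound y hy q hq a
    simpa using this
  | insert p U hp ih =>
    intro q hq hcop a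
    have ih' := ih (fun r hr => hU r (Finset.mem_insert_of_mem hr))
      (fun r hr => hR r (Finset.mem_insert_of_mem hr))
      (fun r hr => hD r (Finset.mem_insert_of_mem hr))
    have hpp := hU p (Finset.mem_insert_self _ _)
    have hRp := hR p (Finset.mem_insert_self _ _)
    have hDp := hD p (Finset.mem_insert_self _ _)
    have hqp := hcop p (Finset.mem_insert_self _ _)
    set S := (Finset.range (⌊y⌋₊ + 1)).filter
      fun n => n ≡ a [MOD q] ∧ ∀ r ∈ insert p U, D r n with hS
    have hmap : ∀ n ∈ S, n % p ∈ R p := by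
      intro n hn
      rw [hS, Finset.mem_filter] at hn
      exact (hDp n).1 (hn.2.2 p (Finset.mem_insert_self _ _))
    have hcard := Finset.card_eq_sum_card_fiberwise (f := fun n => n % p) (s := S) (t := R p) hmap
    have hfib : ∀ r ∈ R p, ∃ b : ℕ, (S.filter fun n => n % p = r) =
        (Finset.range (⌊y⌋₊ + 1)).filter fun n => n ≡ b [MOD (q * p)] ∧ ∀ r ∈ U, D r n := by
      intro r hr
      refine ⟨Nat.chineseRemainder hqp a r, ?_⟩
      have hc := (Nat.chineseRemainder hqp a r).2
      ext n
      simp only [hS, Finset.mem_filter, Finset.mem_insert, forall_eq_or_imp]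
      rw [← Nat.modEq_and_modEq_iff_modEq_mul hqp]
      have hrp : r % p = r := Nat.mod_eq_of_lt (hRp r hr)
      constructor
      · rintro ⟨⟨h1, h2, h3, h4⟩, h5⟩
        refine ⟨h1, ⟨h2.trans hc.1.symm, ?_⟩, h4⟩
        refine Nat.ModEq.trans ?_ hc.2.symm
        rw [Nat.ModEq, h5, hrp]
      · rintro ⟨h1, ⟨h2, h3⟩, h4⟩
        have h5 : n % p = r := by
          have := h3.trans hc.2
          rw [Nat.ModEq, hrp] at this
          exact this
        exact ⟨⟨h1, h2.trans hc.1, (hDp n).2 (h5 ▸ hr), h4⟩, h5⟩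
    have hbd : ∀ r ∈ R p, |((S.filter fun n => n % p = r).card : ℝ)
        - y / (q * p) * ∏ p ∈ U, ((R p).card : ℝ) / p| ≤ ∏ p ∈ U, ((R p).card : ℝ) := by
      intro r hr
      obtain ⟨b, hb⟩ := hfib r hr
      rw [hb]
      have := ih' (q * p) (Nat.mul_pos hq hpp.pos) (fun s hs => by
        refine Nat.Coprime.mul_left (hcop s (Finset.mem_insert_of_mem hs)) ?_
        rw [Nat.coprime_primes hpp (hU s (Finset.mem_insert_of_mem hs))]
        rintro rfl
        exact hp hs) b
      push_cast at this
      exact this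
    have hp0 : (0 : ℝ) < p := by exact_mod_cast hpp.pos
    have hq0 : (0 : ℝ) < q := by exact_mod_cast hq
    rw [Finset.prod_insert hp, Finset.prod_insert hp, hcard]
    push_cast
    have e : y / q * (((R p).card : ℝ) / p * ∏ p ∈ U, ((R p).card : ℝ) / p) =
        ∑ r ∈ R p, y / (q * p) * ∏ p ∈ U, ((R p).card : ℝ) / p := by
      rw [Finset.sum_const, nsmul_eq_mul]
      generalize (∏ p ∈ U, ((R p).card : ℝ) / p) = X
      generalize ((R p).card : ℝ) = Y
      clear * - hp0 hq0
      field_simp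
    rw [e, ← Finset.sum_sub_distrib]
    refine (Finset.abs_sum_le_sum_abs _ _).trans ((Finset.sum_le_sum hbd).trans ?_)
    rw [Finset.sum_const, nsmul_eq_mul]

/-- residues of `n` mod `p` with `p ∣ n (h n + 1)` -/
noncomputable def resid (h p : ℕ) : Finset ℕ := (Finset.range p).filter fun n => p ∣ n * (h * n + 1)

lemma resid_iff (h p n : ℕ) (hp : 0 < p) : p ∣ n * (h * n + 1) ↔ n % p ∈ resid h p := by
  unfold resid
  simp only [Finset.mem_filter, Finset.mem_range, Nat.mod_lt n hp, true_and]
  refine (Nat.ModEq.dvd_iff ?_ (dvd_refl p))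
  have h0 : n ≡ n % p [MOD p] := (Nat.mod_modEq n p).symm
  exact h0.mul ((h0.mul_left h).add_right 1)

lemma card_resid_dvd {h p : ℕ} (hp : p.Prime) (hph : p ∣ h) : (resid h p).card = 1 := by
  rw [Finset.card_eq_one]
  refine ⟨0, ?_⟩
  ext n
  simp only [resid, Finset.mem_filter, Finset.mem_range, Finset.mem_singleton]
  constructor
  · rintro ⟨h1, h2⟩
    rcases hp.dvd_mul.1 h2 with h3 | h3
    · exact Nat.eq_zero_of_dvd_of_lt h3 h1
    · exfalso
      have h4 : p ∣ 1 := (Nat.dvd_add_right (hph.mul_right n)).1 h3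
      exact hp.one_lt.ne' (Nat.dvd_one.1 h4)
  · rintro rfl
    exact ⟨hp.pos, by simp⟩

lemma card_resid_not_dvd {h p : ℕ} (hp : p.Prime) (hph : ¬ p ∣ h) : (resid h p).card = 2 := by
  have : Fact p.Prime := ⟨hp⟩
  have hh : (h : ZMod p) ≠ 0 := by rwa [Ne, ZMod.natCast_eq_zero_iff]
  set r : ZMod p := -(h : ZMod p)⁻¹ with hr
  have hr0 : r ≠ 0 := by rw [hr]; simpa using hh
  have hrv : r.val ≠ 0 := by rwa [Ne, ZMod.val_eq_zero]
  have : resid h p = {0, r.val} := by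
    ext n
    simp only [resid, Finset.mem_filter, Finset.mem_range, Finset.mem_singleton, Finset.mem_insert]
    rw [hp.dvd_mul, ← ZMod.natCast_eq_zero_iff (h * n + 1) p]
    have key : ((h * n + 1 : ℕ) : ZMod p) = 0 ↔ (n : ZMod p) = r := by
      push_cast
      rw [hr]
      constructor
      · intro e
        have : (h : ZMod p) * n = -1 := by linear_combination e
        field_simp
        linear_combination this
      · intro e
        rw [e]
        field_simp
        ring
    rw [key]
    constructor
    · rintro ⟨h1, h2 | h2⟩
      · left; exact Nat.eq_zero_of_dvd_of_lt h2 h1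
      · right; rw [← h2, ZMod.val_natCast_of_lt h1]
    · rintro (rfl | rfl)
      · exact ⟨hp.pos, by simp⟩
      · exact ⟨ZMod.val_lt r, Or.inr (by simp)⟩
  rw [this, Finset.card_pair hrv.symm]

lemma two_pow_card_le_divisors {U : Finset ℕ} (hU : ∀ p ∈ U, p.Prime) :
    2 ^ U.card ≤ (∏ p ∈ U, p).divisors.card := by
  rw [← Finset.card_powerset]
  refine Finset.card_le_card_of_injOn (fun V => ∏ p ∈ V, p) ?_ ?_
  · intro V hV
    have hV' : V ⊆ U := by simpa using hV
    simp only [Finset.mem_coe, Nat.mem_divisors]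
    exact ⟨Finset.prod_dvd_prod_of_subset _ _ _ hV',
      Finset.prod_ne_zero_iff.2 fun p hp => (hU p hp).ne_zero⟩
  · intro V hV W hW h
    have hV' : V ⊆ U := by simpa using hV
    have hW' : W ⊆ U := by simpa using hW
    rw [← Nat.primeFactors_prod fun p hp => hU p (hV' hp),
      ← Nat.primeFactors_prod fun p hp => hU p (hW' hp)]
    exact congrArg _ h

lemma SS_two_le (Q : Finset ℕ) (hQ : ∀ p ∈ Q, p.Prime) (z : ℝ) (hz : 1 ≤ z) :
    SS (fun _ => 2) Q z ≤ z * (1 + Real.log z) := by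
  have h0 : SS (fun _ => 2) Q z ≤ ∑ n ∈ Finset.Ioc 0 ⌊z⌋₊, (n.divisors.card : ℝ) := by
    unfold SS
    rw [← Finset.sum_filter]
    have e : ∀ U ∈ Q.powerset.filter (fun U : Finset ℕ => (∏ p ∈ U, (p : ℝ)) ≤ z),
        ∏ p ∈ U, (2 : ℝ) ≤ ((∏ p ∈ U, p).divisors.card : ℝ) := by
      intro U hU
      rw [Finset.mem_filter, Finset.mem_powerset] at hU
      rw [Finset.prod_const]
      exact_mod_cast two_pow_card_le_divisors fun p hp => hQ p (hU.1 hp)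
    refine (Finset.sum_le_sum e).trans ?_
    have hinj : Set.InjOn (fun U : Finset ℕ => ∏ p ∈ U, p)
        (Q.powerset.filter (fun U : Finset ℕ => (∏ p ∈ U, (p : ℝ)) ≤ z) : Finset (Finset ℕ)) := by
      intro V hV W hW h
      rw [Finset.mem_coe, Finset.mem_filter, Finset.mem_powerset] at hV hW
      rw [← Nat.primeFactors_prod fun p hp => hQ p (hV.1 hp),
        ← Nat.primeFactors_prod fun p hp => hQ p (hW.1 hp)]
      exact congrArg _ h
    rw [← Finset.sum_image (f := fun n : ℕ => (n.divisors.card : ℝ)) hinj]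
    refine Finset.sum_le_sum_of_subset_of_nonneg ?_ (fun _ _ _ => by positivity)
    intro n hn
    rw [Finset.mem_image] at hn
    obtain ⟨U, hU, rfl⟩ := hn
    rw [Finset.mem_filter, Finset.mem_powerset] at hU
    rw [Finset.mem_Ioc]
    refine ⟨Finset.prod_pos fun p hp => (hQ p (hU.1 hp)).pos, Nat.le_floor ?_⟩
    push_cast
    exact hU.2
  refine h0.trans ?_
  have h1 := ArithmeticFunction.sum_Ioc_sigma0_eq_sum_div ⌊z⌋₊
  simp only [ArithmeticFunction.sigma_zero_apply] at h1
  have h2 : ∑ n ∈ Finset.Ioc 0 ⌊z⌋₊, (n.divisors.card : ℝ) =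
      ((∑ n ∈ Finset.Ioc 0 ⌊z⌋₊, (⌊z⌋₊ / n) : ℕ) : ℝ) := by
    rw [← h1]; push_cast; rfl
  rw [h2]
  push_cast
  have h3 : ∀ n ∈ Finset.Ioc 0 ⌊z⌋₊, ((⌊z⌋₊ / n : ℕ) : ℝ) ≤ z * (n : ℝ)⁻¹ := by
    intro n _
    refine Nat.cast_div_le.trans ?_
    rw [div_eq_mul_inv]
    exact mul_le_mul_of_nonneg_right (Nat.floor_le (by linarith)) (by positivity)
  refine (Finset.sum_le_sum h3).trans ?_
  rw [← Finset.mul_sum]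
  refine mul_le_mul_of_nonneg_left ?_ (by linarith)
  have h4 := harmonic_floor_le_one_add_log z hz
  rw [harmonic_eq_sum_Icc] at h4
  push_cast at h4
  exact h4

/-- the divisor-type local factor -/
noncomputable def tloc (p : ℕ) : ℝ := 1 / (1 - 1 / (p : ℝ)) ^ 2 - 1

lemma sum_tloc_le (p : ℕ) (hp : 2 ≤ p) (K : ℕ) :
    ∑ k ∈ Finset.Ico 1 K, ((k : ℝ) + 1) / (p : ℝ) ^ k ≤ tloc p := by
  have hp' : (2 : ℝ) ≤ p := by exact_mod_cast hp
  set x : ℝ := 1 / p with hx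
  have hx0 : 0 < x := by positivity
  have hx1 : x < 1 := by rw [hx, div_lt_one (by linarith)]; linarith
  have hn : ‖x‖ < 1 := by rw [Real.norm_eq_abs, abs_of_pos hx0]; exact hx1
  have h1 := (hasSum_coe_mul_geometric_of_norm_lt_one hn).add (hasSum_geometric_of_norm_lt_one hn)
  have h2 : x / (1 - x) ^ 2 + (1 - x)⁻¹ = 1 / (1 - x) ^ 2 := by
    have : 1 - x ≠ 0 := by linarith
    field_simp
    ring
  rw [h2] at h1
  have h3 := sum_le_hasSum (insert 0 (Finset.Ico 1 K)) (fun i _ => by positivity) h1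
  rw [Finset.sum_insert (by simp)] at h3
  simp only [Nat.cast_zero, zero_mul, pow_zero, zero_add] at h3
  unfold tloc
  have h4 : ∑ k ∈ Finset.Ico 1 K, ((k : ℝ) + 1) / (p : ℝ) ^ k =
      ∑ k ∈ Finset.Ico 1 K, ((k : ℝ) * x ^ k + x ^ k) := by
    refine Finset.sum_congr rfl fun k _ => ?_
    rw [hx, one_div, inv_pow]
    ring
  rw [h4]
  linarith

lemma tloc_nonneg (p : ℕ) (hp : 2 ≤ p) : 0 ≤ tloc p := by
  simpa using sum_tloc_le p hp 0

/-- sum of `τ(n)/n` over `n ≤ z` composed of primes of `Q` -/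
noncomputable def smoothSum (Q : Finset ℕ) (z : ℝ) : ℝ :=
  ∑ n ∈ (Finset.Ioc 0 ⌊z⌋₊).filter (fun n => n.primeFactors ⊆ Q), (n.divisors.card : ℝ) / n

lemma smoothSum_mono (Q : Finset ℕ) {z w : ℝ} (h : z ≤ w) : smoothSum Q z ≤ smoothSum Q w := by
  refine Finset.sum_le_sum_of_subset_of_nonneg ?_ (fun _ _ _ => by positivity)
  exact Finset.filter_subset_filter _ (Finset.Ioc_subset_Ioc_right (Nat.floor_le_floor h))

lemma smoothSum_fiber (Q : Finset ℕ) (p : ℕ) (hp : p.Prime) (hpQ : p ∉ Q) (z : ℝ) (hz : 0 ≤ z)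
    (k : ℕ) :
    ∑ n ∈ ((Finset.Ioc 0 ⌊z⌋₊).filter (fun n => n.primeFactors ⊆ insert p Q)).filter
      (fun n => n.factorization p = k), (n.divisors.card : ℝ) / n ≤
      ((k : ℝ) + 1) / (p : ℝ) ^ k * smoothSum Q (z / (p : ℝ) ^ k) := by
  have hp0 : (0 : ℝ) < p := by exact_mod_cast hp.pos
  unfold smoothSum
  rw [Finset.mul_sum]
  set S := ((Finset.Ioc 0 ⌊z⌋₊).filter (fun n => n.primeFactors ⊆ insert p Q)).filter
      (fun n => n.factorization p = k) with hS
  have hmem : ∀ n ∈ S, 0 < n ∧ (n : ℝ) ≤ z ∧ n.primeFactors ⊆ insert p Q ∧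
      p ^ k * (n / p ^ k) = n ∧ ¬ p ∣ (n / p ^ k) := by
    intro n hn
    simp only [hS, Finset.mem_filter, Finset.mem_Ioc] at hn
    obtain ⟨⟨⟨h1, h2⟩, h3⟩, h4⟩ := hn
    refine ⟨h1, (Nat.le_floor_iff hz).1 h2, h3, ?_, ?_⟩
    · rw [← h4]; exact Nat.ordProj_mul_ordCompl_eq_self n p
    · rw [← h4]; exact Nat.not_dvd_ordCompl hp h1.ne'
  have hval : ∀ n ∈ S, (n.divisors.card : ℝ) / n =
      ((k : ℝ) + 1) / (p : ℝ) ^ k * (((n / p ^ k).divisors.card : ℝ) / (n / p ^ k : ℕ)) := by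
    intro n hn
    obtain ⟨h1, h2, h3, h4, h5⟩ := hmem n hn
    have hc : Nat.Coprime (p ^ k) (n / p ^ k) := ((Nat.Prime.coprime_iff_not_dvd hp).2 h5).pow_left k
    have e1 := hc.card_divisors_mul
    rw [h4, Nat.divisors_prime_pow hp, Finset.card_map, Finset.card_range] at e1
    rw [e1]
    have e2 : (n : ℝ) = (p : ℝ) ^ k * ((n / p ^ k : ℕ) : ℝ) := by exact_mod_cast h4.symm
    rw [e2]
    push_cast
    rw [mul_div_mul_comm]
  rw [Finset.sum_congr rfl hval]
  have hinj : Set.InjOn (fun n => n / p ^ k) (S : Set ℕ) := by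
    intro m hm n hn h
    rw [← (hmem m hm).2.2.2.1, ← (hmem n hn).2.2.2.1]
    exact congrArg (p ^ k * ·) h
  rw [← Finset.sum_image (f := fun m : ℕ =>
    ((k : ℝ) + 1) / (p : ℝ) ^ k * ((m.divisors.card : ℝ) / m)) hinj]
  refine Finset.sum_le_sum_of_subset_of_nonneg ?_ (fun _ _ _ => by positivity)
  intro m hm
  rw [Finset.mem_image] at hm
  obtain ⟨n, hn, rfl⟩ := hm
  obtain ⟨h1, h2, h3, h4, h5⟩ := hmem n hn
  rw [Finset.mem_filter, Finset.mem_Ioc]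
  have hpos : 0 < n / p ^ k := by
    rcases Nat.eq_zero_or_pos (n / p ^ k) with h | h
    · rw [h] at h4; omega
    · exact h
  refine ⟨⟨hpos, Nat.le_floor ?_⟩, ?_⟩
  · rw [le_div_iff₀' (by positivity)]
    have e2 : (p : ℝ) ^ k * ((n / p ^ k : ℕ) : ℝ) = n := by exact_mod_cast h4
    rw [e2]; exact h2
  · intro q hq
    rw [Nat.mem_primeFactors] at hq
    have hqn : q ∈ n.primeFactors := by
      rw [Nat.mem_primeFactors]
      exact ⟨hq.1, hq.2.1.trans (Dvd.intro_left _ h4), h1.ne'⟩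
    rcases Finset.mem_insert.1 (h3 hqn) with h | h
    · exact absurd (h ▸ hq.2.1) h5
    · exact h

lemma smoothSum_le_SS (Q : Finset ℕ) (hQ : ∀ p ∈ Q, p.Prime) :
    ∀ z : ℝ, 0 ≤ z → smoothSum Q z ≤ SS tloc Q z := by
  induction Q using Finset.induction_on with
  | empty =>
    intro z hz
    by_cases h1 : 1 ≤ z
    · have : smoothSum ∅ z ≤ ∑ n ∈ ({1} : Finset ℕ), (n.divisors.card : ℝ) / n := by
        refine Finset.sum_le_sum_of_subset_of_nonneg ?_ (fun _ _ _ => by positivity)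
        intro n hn
        simp only [Finset.mem_filter, Finset.mem_Ioc, Finset.subset_empty,
          Nat.primeFactors_eq_empty] at hn
        simp only [Finset.mem_singleton]
        omega
      simp at this
      simpa [SS, h1] using this
    · have : ⌊z⌋₊ = 0 := Nat.floor_eq_zero.2 (by linarith)
      simp [SS, h1, smoothSum, this]
  | insert p Q hp ih =>
    intro z hz
    have hpp := hQ p (Finset.mem_insert_self _ _)
    have hQ' : ∀ q ∈ Q, q.Prime := fun q hq => hQ q (Finset.mem_insert_of_mem hq)
    have ih' := ih hQ'
    have hp1 : (1 : ℝ) ≤ p := by exact_mod_cast hpp.one_lt.le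
    rw [SS_insert _ hp hpp.pos]
    set T := (Finset.Ioc 0 ⌊z⌋₊).filter (fun n => n.primeFactors ⊆ insert p Q) with hT
    set K := ⌊z⌋₊ + 1
    have hmap : ∀ n ∈ T, n.factorization p ∈ Finset.range K := by
      intro n hn
      simp only [hT, Finset.mem_filter, Finset.mem_Ioc] at hn
      rw [Finset.mem_range]
      have := Nat.factorization_lt (n := n) p hn.1.1.ne'
      omega
    have e0 : smoothSum (insert p Q) z = ∑ k ∈ Finset.range K, ∑ n ∈ T.filter
        (fun n => n.factorization p = k), (n.divisors.card : ℝ) / n :=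
      (Finset.sum_fiberwise_of_maps_to hmap _).symm
    rw [e0, Finset.range_eq_Ico, Finset.sum_eq_sum_Ico_succ_bot (by omega)]
    have f0 := smoothSum_fiber Q p hpp hp z hz 0
    simp only [Nat.cast_zero, zero_add, pow_zero, div_one, one_mul] at f0
    have f1 : ∀ k ∈ Finset.Ico 1 K, ∑ n ∈ T.filter
        (fun n => n.factorization p = k), (n.divisors.card : ℝ) / n ≤
        ((k : ℝ) + 1) / (p : ℝ) ^ k * SS tloc Q (z / p) := by
      intro k hk
      rw [Finset.mem_Ico] at hk
      refine (smoothSum_fiber Q p hpp hp z hz k).trans ?_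
      refine mul_le_mul_of_nonneg_left ?_ (by positivity)
      refine (smoothSum_mono Q ?_).trans (ih' (z / p) (by positivity))
      refine div_le_div_of_nonneg_left hz (by linarith) ?_
      exact le_self_pow₀ hp1 (by omega)
    refine add_le_add (f0.trans (ih' z hz)) ((Finset.sum_le_sum f1).trans ?_)
    rw [← Finset.sum_mul]
    exact mul_le_mul_of_nonneg_right (sum_tloc_le p hpp.two_le K)
      (SS_nonneg (fun q hq => tloc_nonneg q (hQ' q hq).two_le) _)

lemma sum_divisors_div_lower (y : ℝ) (hy : 1 ≤ y) :
    (Real.log y) ^ 2 / 2 ≤ ∑ n ∈ Finset.Ioc 0 ⌊y⌋₊, (n.divisors.card : ℝ) / n := by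
  set f : ArithmeticFunction ℝ := ⟨fun n => (n : ℝ)⁻¹, by simp⟩ with hf
  have hfa : ∀ n, f n = (n : ℝ)⁻¹ := fun n => rfl
  have e1 : ∀ n ∈ Finset.Ioc 0 ⌊y⌋₊, (n.divisors.card : ℝ) / n = (f * f) n := by
    intro n _
    rw [ArithmeticFunction.mul_apply]
    have : ∀ x ∈ n.divisorsAntidiagonal, f x.1 * f x.2 = (n : ℝ)⁻¹ := by
      intro x hx
      rw [Nat.mem_divisorsAntidiagonal] at hx
      rw [hfa, hfa, ← hx.1]
      push_cast
      rw [mul_inv]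
    rw [Finset.sum_congr rfl this, Finset.sum_const, nsmul_eq_mul, div_eq_mul_inv,
      ← Nat.map_div_right_divisors, Finset.card_map]
  rw [Finset.sum_congr rfl e1, ArithmeticFunction.sum_Ioc_mul_eq_sum_sum]
  have hN : 1 ≤ ⌊y⌋₊ := Nat.le_floor (by simpa using hy)
  have hNy : (⌊y⌋₊ : ℝ) ≤ y := Nat.floor_le (by linarith)
  have hyN : y < ⌊y⌋₊ + 1 := Nat.lt_floor_add_one y
  have e2 : ∀ n ∈ Finset.Ioc 0 ⌊y⌋₊, (n : ℝ)⁻¹ * Real.log (y / n) ≤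
      f n * ∑ m ∈ Finset.Ioc 0 (⌊y⌋₊ / n), f m := by
    intro n hn
    rw [hfa]
    refine mul_le_mul_of_nonneg_left ?_ (by positivity)
    have h := log_le_harmonic_floor (y / n) (by positivity)
    rw [Nat.floor_div_natCast, harmonic_eq_sum_Icc] at h
    push_cast at h
    exact h
  refine le_trans ?_ (Finset.sum_le_sum e2)
  -- telescoping
  have key : ∀ M : ℕ, 1 ≤ M → M ≤ ⌊y⌋₊ → (Real.log y) ^ 2 / 2 ≤
      ∑ n ∈ Finset.Ioc 0 M, (n : ℝ)⁻¹ * Real.log (y / n) + Real.log (y / M) ^ 2 / 2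
        - (M : ℝ)⁻¹ * Real.log (y / M) := by
    intro M hM
    induction M, hM using Nat.le_induction with
    | base => intro _; simp
    | succ M hM ih =>
      intro hMy
      have ih' := ih (by omega)
      rw [Finset.sum_Ioc_succ_top (by omega)]
      have hM0 : (0 : ℝ) < M := by exact_mod_cast hM
      have hM1 : ((M + 1 : ℕ) : ℝ) ≤ y := le_trans (by exact_mod_cast hMy) hNy
      have l1 : Real.log (y / M) = Real.log y - Real.log M :=
        Real.log_div (by linarith) hM0.ne'
      have l2 : Real.log (y / (M + 1 : ℕ)) = Real.log y - Real.log (M + 1 : ℕ) :=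
        Real.log_div (by linarith) (by positivity)
      have l3 : Real.log (M + 1 : ℕ) - Real.log M ≤ (M : ℝ)⁻¹ := by
        rw [← Real.log_div (by positivity) hM0.ne']
        refine (Real.log_le_sub_one_of_pos (by positivity)).trans (le_of_eq ?_)
        push_cast
        field_simp
        ring
      have l4 : Real.log M ≤ Real.log (M + 1 : ℕ) :=
        Real.log_le_log hM0 (by push_cast; linarith)
      have l5 : 0 ≤ Real.log (y / (M + 1 : ℕ)) :=
        Real.log_nonneg (by rw [le_div_iff₀ (by positivity)]; linarith)
      set A := Real.log (y / M)
      set B := Real.log (y / (M + 1 : ℕ))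
      have hAB : 0 ≤ A - B := by linarith
      have hAB' : A - B ≤ (M : ℝ)⁻¹ := by linarith
      have : A ^ 2 / 2 - B ^ 2 / 2 ≤ (M : ℝ)⁻¹ * A := by nlinarith
      linarith
  have k := key ⌊y⌋₊ hN le_rfl
  have hN0 : (0 : ℝ) < ⌊y⌋₊ := by exact_mod_cast hN
  have l1 : 0 ≤ Real.log (y / ⌊y⌋₊) :=
    Real.log_nonneg (by rw [le_div_iff₀ hN0]; linarith)
  have l2 : Real.log (y / ⌊y⌋₊) ≤ (⌊y⌋₊ : ℝ)⁻¹ := by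
    refine (Real.log_le_sub_one_of_pos (by positivity)).trans ?_
    rw [div_sub_one hN0.ne', div_le_iff₀ hN0, inv_mul_cancel₀ hN0.ne']
    linarith
  nlinarith

lemma SS_tloc_lower (Q : Finset ℕ) (hQ : ∀ p ∈ Q, p.Prime) (y : ℝ) (hy : 1 ≤ y)
    (hQy : ∀ p : ℕ, p.Prime → (p : ℝ) ≤ y → p ∈ Q) : (Real.log y) ^ 2 / 2 ≤ SS tloc Q y := by
  refine le_trans ?_ (smoothSum_le_SS Q hQ y (by linarith))
  refine (sum_divisors_div_lower y hy).trans (le_of_eq ?_)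
  unfold smoothSum
  rw [Finset.filter_true_of_mem]
  intro n hn p hp
  rw [Finset.mem_Ioc] at hn
  rw [Nat.mem_primeFactors] at hp
  refine hQy p hp.1 (le_trans ?_ (Nat.floor_le (by linarith)))
  exact_mod_cast (Nat.le_of_dvd hn.1 hp.2.1).trans hn.2

/-- local factor of the twin prime constant -/
noncomputable def tw (p : ℕ) : ℝ := if 2 < p then 1 - 1 / ((p : ℝ) - 1) ^ 2 else 1

lemma tw_pos (p : ℕ) : 0 < tw p := by
  unfold tw
  split_ifs with h
  · have : (3 : ℝ) ≤ p := by exact_mod_cast h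
    rw [sub_pos, div_lt_one (by nlinarith)]
    nlinarith
  · norm_num

lemma summable_tw : Summable fun p : Nat.Primes => ‖tw p - 1‖ := by
  have h1 : Summable fun n : ℕ => 4 * (1 / (n : ℝ) ^ 2) :=
    (Real.summable_one_div_nat_pow.2 (by norm_num)).mul_left 4
  have h2 : Summable fun p : Nat.Primes => 4 * (1 / ((p : ℕ) : ℝ) ^ 2) :=
    h1.comp_injective Nat.Primes.coe_nat_injective
  refine Summable.of_nonneg_of_le (fun _ => norm_nonneg _) (fun p => ?_) h2
  unfold tw
  split_ifs with h
  · have h3 : (3 : ℝ) ≤ (p : ℕ) := by exact_mod_cast h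
    have e : (1 : ℝ) - 1 / (((p : ℕ) : ℝ) - 1) ^ 2 - 1 = - (1 / (((p : ℕ) : ℝ) - 1) ^ 2) := by ring
    rw [e, norm_neg, Real.norm_of_nonneg (by positivity), mul_one_div,
      div_le_div_iff₀ (by nlinarith) (by positivity)]
    nlinarith
  · simp

lemma twinConst_eq : twinConst = ∏' p : Nat.Primes, tw p := rfl

lemma hasProd_tw : HasProd (fun p : Nat.Primes => tw p) twinConst := by
  have := multipliable_one_add_of_summable summable_tw
  simp only [add_sub_cancel] at this
  rw [twinConst_eq]
  exact this.hasProd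

lemma twinConst_pos : 0 < twinConst := by
  have h1 := tprod_one_add_ne_zero_of_summable (f := fun p : Nat.Primes => tw p - 1)
    (fun p => by simpa using (tw_pos p).ne') summable_tw
  simp only [add_sub_cancel] at h1
  refine lt_of_le_of_ne ?_ (Ne.symm h1)
  refine ge_of_tendsto' hasProd_tw fun s => ?_
  exact Finset.prod_nonneg fun p _ => (tw_pos p).le

lemma exists_W (ε : ℝ) (hε : 0 < ε) : ∃ W : Finset ℕ, (∀ p ∈ W, p.Prime) ∧ 2 ∈ W ∧
    ∏ p ∈ W, tw p ≤ (1 + ε) * twinConst := by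
  have hlt : twinConst < (1 + ε) * twinConst := by nlinarith [twinConst_pos]
  have h1 := hasProd_tw.eventually_le_const hlt
  rw [SummationFilter.unconditional, Filter.eventually_atTop] at h1
  obtain ⟨s, hs⟩ := h1
  obtain ⟨t, ht⟩ : ∃ t : Finset Nat.Primes, t = insert (⟨2, Nat.prime_two⟩ : Nat.Primes) s := ⟨_, rfl⟩
  have h2 := hs t (by rw [ht]; exact Finset.subset_insert _ _)
  refine ⟨t.image (fun p : Nat.Primes => (p : ℕ)), ?_, ?_, ?_⟩
  · intro p hp
    rw [Finset.mem_image] at hp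
    obtain ⟨q, _, rfl⟩ := hp
    exact q.2
  · rw [Finset.mem_image]
    exact ⟨⟨2, Nat.prime_two⟩, by rw [ht]; exact Finset.mem_insert_self _ _, rfl⟩
  · exact le_trans (le_of_eq (Finset.prod_image
      (fun a _ b _ h => Nat.Primes.coe_nat_injective h))) h2

/-- Selberg `g` for the sequence `n (h n + 1)`. -/
noncomputable def gh (h p : ℕ) : ℝ := if p ∣ h then 1 / ((p : ℝ) - 1) else 2 / ((p : ℝ) - 2)

lemma three_le_of_not_dvd {h p : ℕ} (hh : 2 ∣ h) (hp : p.Prime) (hph : ¬ p ∣ h) :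
    (3 : ℝ) ≤ p := by
  have : p ≠ 2 := by rintro rfl; exact hph hh
  have := hp.two_le
  exact_mod_cast (by omega : 3 ≤ p)

lemma gh_pos {h p : ℕ} (hh : 2 ∣ h) (hp : p.Prime) : 0 < gh h p := by
  unfold gh
  have h2 : (2 : ℝ) ≤ p := by exact_mod_cast hp.two_le
  split_ifs with h1
  · exact div_pos one_pos (by linarith)
  · have := three_le_of_not_dvd hh hp h1
    exact div_pos two_pos (by linarith)

/-- primes up to `z` -/
noncomputable def PQ (z : ℝ) : Finset ℕ := (Finset.range (⌊z⌋₊ + 1)).filter Nat.Prime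

lemma mem_PQ {z : ℝ} (hz : 0 ≤ z) {p : ℕ} : p ∈ PQ z ↔ p.Prime ∧ (p : ℝ) ≤ z := by
  unfold PQ
  rw [Finset.mem_filter, Finset.mem_range, Nat.lt_succ_iff, Nat.le_floor_iff hz, and_comm]

lemma dvd_two_iff {p : ℕ} (hp : p.Prime) : p ∣ 2 ↔ p = 2 :=
  Nat.prime_dvd_prime_iff_eq hp Nat.prime_two

lemma one_add_tloc {p : ℕ} (hp : p.Prime) :
    1 + tloc p = (1 + gh 2 p) * tw p * (if p = 2 then 2 else 1) := by
  unfold tloc gh tw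
  simp only [dvd_two_iff hp]
  by_cases h2 : p = 2
  · subst h2; norm_num
  · have h3 : 2 < p := lt_of_le_of_ne hp.two_le (Ne.symm h2)
    have h3' : (3 : ℝ) ≤ p := by exact_mod_cast h3
    rw [if_neg h2, if_pos h3, if_neg h2]
    have a1 : (p : ℝ) - 1 ≠ 0 := by linarith
    have a2 : (p : ℝ) - 2 ≠ 0 := by linarith
    have a0 : (p : ℝ) ≠ 0 := by linarith
    field_simp
    ring

lemma tloc_le_gh {p : ℕ} (hp : p.Prime) (h2 : p ≠ 2) : tloc p ≤ gh 2 p := by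
  unfold tloc gh
  simp only [dvd_two_iff hp]
  rw [if_neg h2]
  have h3 : 2 < p := lt_of_le_of_ne hp.two_le (Ne.symm h2)
  have h3' : (3 : ℝ) ≤ p := by exact_mod_cast h3
  have a1 : (p : ℝ) - 1 ≠ 0 := by linarith
  have a2 : 0 < (p : ℝ) - 2 := by linarith
  have a0 : (p : ℝ) ≠ 0 := by linarith
  have e : 1 / (1 - 1 / (p : ℝ)) ^ 2 - 1 = (2 * p - 1) / ((p : ℝ) - 1) ^ 2 := by
    field_simp
    ring
  rw [e, div_le_div_iff₀ (by nlinarith) a2]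
  nlinarith

lemma G2_lower_aux (W : Finset ℕ) (hW : ∀ p ∈ W, p.Prime) (h2 : 2 ∈ W) (z : ℝ)
    (hz : (∏ p ∈ W, (p : ℝ)) ≤ z) :
    Real.log (z / ∏ p ∈ W, (p : ℝ)) ^ 2 ≤ 4 * (∏ p ∈ W, tw p) * SS (gh 2) (PQ z) z := by
  have hPpos : 1 ≤ ∏ p ∈ W, (p : ℝ) :=
    Finset.one_le_prod fun p hp => by exact_mod_cast (hW p hp).one_lt.le
  set P := ∏ p ∈ W, (p : ℝ) with hP
  have hz0 : 0 ≤ z := by linarith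
  have hWQ : W ⊆ PQ z := by
    intro p hp
    rw [mem_PQ hz0]
    refine ⟨hW p hp, le_trans ?_ hz⟩
    have : p ∣ ∏ q ∈ W, q := Finset.dvd_prod_of_mem (fun q => q) hp
    have h3 := Nat.le_of_dvd (Finset.prod_pos fun q hq => (hW q hq).pos) this
    have h3' : (p : ℝ) ≤ ((∏ q ∈ W, q : ℕ) : ℝ) := Nat.cast_le.2 h3
    rw [Nat.cast_prod] at h3'
    exact h3'
  have hQ : ∀ p ∈ PQ z, p.Prime := fun p hp => ((mem_PQ hz0).1 hp).1
  have hun : W ∪ (PQ z \ W) = PQ z := Finset.union_sdiff_of_subset hWQ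
  have hy : 1 ≤ z / P := by rw [le_div_iff₀ (by linarith)]; linarith
  have hyz : z / P ≤ z := div_le_self hz0 hPpos
  have s1 := SS_union_lower (f := gh 2) (PQ z \ W) W Finset.disjoint_sdiff
    (by rw [hun]; exact fun p hp => (gh_pos dvd_rfl (hQ p hp)).le) (fun p hp => (hW p hp).pos) z hz0
  have s2 := SS_union_upper (f := tloc) (PQ z \ W) W Finset.disjoint_sdiff
    (by rw [hun]; exact fun p hp => tloc_nonneg p (hQ p hp).two_le) (fun p hp => (hW p hp).pos)
    (z / P) (by linarith)
  rw [hun] at s1 s2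
  have s3 : SS tloc (PQ z \ W) (z / P) ≤ SS (gh 2) (PQ z \ W) (z / P) := by
    refine SS_mono_f (fun p hp => ?_) (fun p hp => ?_) _
    · exact tloc_nonneg p (hQ p (Finset.sdiff_subset hp)).two_le
    · refine tloc_le_gh (hQ p (Finset.sdiff_subset hp)) ?_
      rintro rfl
      exact (Finset.mem_sdiff.1 hp).2 h2
  have s4 := SS_tloc_lower (PQ z) hQ (z / P) hy
    (fun p hp hpy => (mem_PQ hz0).2 ⟨hp, hpy.trans hyz⟩)
  have s5 : ∏ p ∈ W, (1 + tloc p) = (∏ p ∈ W, (1 + gh 2 p)) * (∏ p ∈ W, tw p) * 2 := by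
    rw [Finset.prod_congr rfl fun p hp => one_add_tloc (hW p hp), Finset.prod_mul_distrib,
      Finset.prod_mul_distrib, Finset.prod_ite_eq', if_pos h2]
  rw [s5] at s2
  have p1 : 0 < ∏ p ∈ W, tw p := Finset.prod_pos fun p _ => tw_pos p
  have p2 : 0 < ∏ p ∈ W, (1 + gh 2 p) := Finset.prod_pos fun p hp => by
    have := gh_pos (h := 2) dvd_rfl (hW p hp); linarith
  have s6 : (∏ p ∈ W, (1 + gh 2 p)) * (∏ p ∈ W, tw p) * 2 * SS tloc (PQ z \ W) (z / P) ≤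
      (∏ p ∈ W, tw p) * 2 * SS (gh 2) (PQ z) z := by
    calc _ = (∏ p ∈ W, tw p) * 2 * ((∏ p ∈ W, (1 + gh 2 p)) * SS tloc (PQ z \ W) (z / P)) := by ring
      _ ≤ _ := by
        refine mul_le_mul_of_nonneg_left (le_trans ?_ s1) (by positivity)
        exact mul_le_mul_of_nonneg_left s3 p2.le
  linarith

lemma G2_lower (ε : ℝ) (hε : 0 < ε) : ∃ z₀ : ℝ, ∀ z ≥ z₀,
    Real.log z ^ 2 ≤ (1 + ε) ^ 3 * 4 * twinConst * SS (gh 2) (PQ z) z := by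
  obtain ⟨W, hW, h2, hWt⟩ := exists_W ε hε
  have hPpos : 1 ≤ ∏ p ∈ W, (p : ℝ) :=
    Finset.one_le_prod fun p hp => by exact_mod_cast (hW p hp).one_lt.le
  set P := ∏ p ∈ W, (p : ℝ) with hP
  have h3 := Real.tendsto_log_atTop.eventually_ge_atTop ((1 + ε) * Real.log P / ε)
  obtain ⟨z₁, hz₁⟩ := Filter.eventually_atTop.1 h3
  refine ⟨max z₁ P, fun z hz => ?_⟩
  have hzP : P ≤ z := (le_max_right _ _).trans hz
  have hl := hz₁ z ((le_max_left _ _).trans hz)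
  rw [div_le_iff₀ hε] at hl
  have a := G2_lower_aux W hW h2 z hzP
  have e : Real.log (z / P) = Real.log z - Real.log P :=
    Real.log_div (by linarith) (by linarith)
  have hlz : 0 ≤ Real.log z := Real.log_nonneg (by linarith)
  have b : Real.log z ≤ (1 + ε) * Real.log (z / P) := by rw [e]; linarith
  have hG : 0 ≤ SS (gh 2) (PQ z) z :=
    SS_nonneg (fun p hp => (gh_pos dvd_rfl ((mem_PQ (by linarith)).1 hp).1).le) _
  calc Real.log z ^ 2 ≤ ((1 + ε) * Real.log (z / P)) ^ 2 := pow_le_pow_left₀ hlz b 2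
    _ = (1 + ε) ^ 2 * Real.log (z / P) ^ 2 := by ring
    _ ≤ (1 + ε) ^ 2 * (4 * (∏ p ∈ W, tw p) * SS (gh 2) (PQ z) z) :=
        mul_le_mul_of_nonneg_left a (by positivity)
    _ ≤ (1 + ε) ^ 2 * (4 * ((1 + ε) * twinConst) * SS (gh 2) (PQ z) z) := by gcongr
    _ = _ := by ring

/-- the singular factor at `h` -/
noncomputable def Ch (h : ℕ) : ℝ :=
  ∏ p ∈ h.primeFactors.filter (fun p => 2 < p), (1 + 1 / ((p : ℝ) - 2))

lemma one_le_Ch_factor {p : ℕ} (hp : 2 < p) : 1 ≤ 1 + 1 / ((p : ℝ) - 2) := by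
  have : (3 : ℝ) ≤ p := by exact_mod_cast hp
  have : 0 < 1 / ((p : ℝ) - 2) := div_pos one_pos (by linarith)
  linarith

lemma one_le_Ch (h : ℕ) : 1 ≤ Ch h :=
  Finset.one_le_prod fun _ hp => one_le_Ch_factor (Finset.mem_filter.1 hp).2

lemma Gh_lower (h : ℕ) (hh : 2 ∣ h) (h0 : 0 < h) (z : ℝ) (hz : 1 ≤ z) :
    SS (gh 2) (PQ z) z ≤ Ch h * SS (gh h) (PQ z) z := by
  have hz0 : 0 ≤ z := by linarith
  have hQ : ∀ p ∈ PQ z, p.Prime := fun p hp => ((mem_PQ hz0).1 hp).1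
  have c := SS_compare (f := gh 2) (f' := gh h) (PQ z) (fun p hp => (hQ p hp).pos)
    (fun p hp => (gh_pos hh (hQ p hp)).le) (fun p hp => by
      have hpp := hQ p hp
      have h2 : (2 : ℝ) ≤ p := by exact_mod_cast hpp.two_le
      unfold gh
      simp only [dvd_two_iff hpp]
      by_cases e : p = 2
      · subst e; simp [hh]
      · have h3 : 2 < p := lt_of_le_of_ne hpp.two_le (Ne.symm e)
        have h3' : (3 : ℝ) ≤ p := by exact_mod_cast h3
        rw [if_neg e]
        split_ifs
        · rw [div_le_div_iff₀ (by linarith) (by linarith)]; linarith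
        · exact le_rfl) z hz0
  have e1 : ∀ p ∈ PQ z, 1 + gh 2 p = (1 + gh h p) *
      (if p ∣ h ∧ 2 < p then 1 + 1 / ((p : ℝ) - 2) else 1) := by
    intro p hp
    have hpp := hQ p hp
    unfold gh
    simp only [dvd_two_iff hpp]
    by_cases e : p = 2
    · subst e; simp [hh]
    · have h3 : 2 < p := lt_of_le_of_ne hpp.two_le (Ne.symm e)
      have h3' : (3 : ℝ) ≤ p := by exact_mod_cast h3
      have a1 : (p : ℝ) - 1 ≠ 0 := by linarith
      have a2 : (p : ℝ) - 2 ≠ 0 := by linarith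
      by_cases hd : p ∣ h
      · simp only [e, hd, h3, if_true, if_false, and_self]
        field_simp
        ring
      · simp only [e, hd, if_false, false_and, mul_one]
  rw [Finset.prod_congr rfl e1, Finset.prod_mul_distrib, mul_assoc] at c
  have p1 : 0 < ∏ p ∈ PQ z, (1 + gh h p) := Finset.prod_pos fun p hp => by
    have := gh_pos hh (hQ p hp); linarith
  have c2 := le_of_mul_le_mul_left c p1
  refine c2.trans (mul_le_mul_of_nonneg_right ?_
    (SS_nonneg (fun p hp => (gh_pos hh (hQ p hp)).le) _))
  rw [← Finset.prod_filter]
  unfold Ch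
  refine Finset.prod_le_prod_of_subset_of_one_le ?_ ?_ ?_
  · intro p hp
    rw [Finset.mem_filter] at hp ⊢
    exact ⟨Nat.mem_primeFactors.2 ⟨hQ p hp.1, hp.2.1, h0.ne'⟩, hp.2.2⟩
  · intro p hp
    exact zero_le_one.trans (one_le_Ch_factor (Finset.mem_filter.1 hp).2.2)
  · intro p hp _
    exact one_le_Ch_factor (Finset.mem_filter.1 hp).2

lemma sieve_h (h : ℕ) (hh : 2 ∣ h) (y z : ℝ) (hy : 0 ≤ y) (hz : 1 ≤ z) :
    (((Finset.range (⌊y⌋₊ + 1)).filter fun n => ∀ p ∈ PQ z, ¬ p ∣ n * (h * n + 1)).card : ℝ) ≤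
      y / SS (gh h) (PQ z) z + (z * (1 + Real.log z)) ^ 2 := by
  have hz0 : 0 ≤ z := by linarith
  have hQ : ∀ p ∈ PQ z, p.Prime := fun p hp => ((mem_PQ hz0).1 hp).1
  have hcard2 : ∀ p ∈ PQ z, (resid h p).card ≤ 2 := by
    intro p hp
    by_cases hd : p ∣ h
    · rw [card_resid_dvd (hQ p hp) hd]; norm_num
    · rw [card_resid_not_dvd (hQ p hp) hd]
  have s := selberg_bound (PQ z) (fun p hp => (hQ p hp).pos)
    (fun p => ((resid h p).card : ℝ) / p) (gh h) ?_ (fun p hp => gh_pos hh (hQ p hp)) ?_ z hz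
    (Finset.range (⌊y⌋₊ + 1)) (fun p n => p ∣ n * (h * n + 1)) y ?_
  · refine le_trans (le_of_eq (by congr!)) (s.trans ?_)
    have t := SS_two_le (PQ z) hQ z hz
    have t0 : 0 ≤ SS (fun _ => 2) (PQ z) z := SS_nonneg (fun _ _ => by norm_num) _
    have := pow_le_pow_left₀ t0 t 2
    linarith
  · intro p hp
    have hp0 : (0 : ℝ) < p := by exact_mod_cast (hQ p hp).pos
    by_cases hd : p ∣ h
    · simp only [card_resid_dvd (hQ p hp) hd]; positivity
    · simp only [card_resid_not_dvd (hQ p hp) hd]; positivity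
  · intro p hp
    have h2 : (2 : ℝ) ≤ p := by exact_mod_cast (hQ p hp).two_le
    by_cases hd : p ∣ h
    · simp only [card_resid_dvd (hQ p hp) hd, gh, if_pos hd]
      have a1 : (p : ℝ) - 1 ≠ 0 := by linarith
      have a0 : (p : ℝ) ≠ 0 := by linarith
      push_cast
      field_simp
      ring
    · have h3 := three_le_of_not_dvd hh (hQ p hp) hd
      simp only [card_resid_not_dvd (hQ p hp) hd, gh, if_neg hd]
      have a1 : (p : ℝ) - 2 ≠ 0 := by linarith
      have a0 : (p : ℝ) ≠ 0 := by linarith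
      push_cast
      field_simp
      ring
  · intro U hU
    have b := card_sieve_bound y hy (fun p n => p ∣ n * (h * n + 1)) (resid h) U
      (fun p hp => hQ p (hU hp))
      (fun p _ r hr => Finset.mem_range.1 (Finset.mem_filter.1 hr).1)
      (fun p hp n => resid_iff h p n (hQ p (hU hp)).pos) 1 one_pos
      (fun p _ => Nat.coprime_one_left p) 0
    simp only [Nat.modEq_one, true_and, Nat.cast_one, div_one] at b
    refine le_trans (le_of_eq (by congr!)) (b.trans ?_)
    rw [← Finset.prod_const]
    exact Finset.prod_le_prod (fun _ _ => by positivity)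
      (fun p hp => by exact_mod_cast hcard2 p (hU hp))

lemma pairs_bound_aux (h : ℕ) (hh : 2 ∣ h) (h0 : 0 < h) (y z : ℝ) (hy : 0 ≤ y) (hz : 1 ≤ z) :
    (((Finset.range (⌊y⌋₊ + 1)).filter fun q => q.Prime ∧ (h * q + 1).Prime).card : ℝ) ≤
      y / SS (gh h) (PQ z) z + (z * (1 + Real.log z)) ^ 2 + (z + 1) := by
  have hz0 : 0 ≤ z := by linarith
  have hsub : ((Finset.range (⌊y⌋₊ + 1)).filter fun q => q.Prime ∧ (h * q + 1).Prime) ⊆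
      ((Finset.range (⌊y⌋₊ + 1)).filter fun n => ∀ p ∈ PQ z, ¬ p ∣ n * (h * n + 1)) ∪
      Finset.range (⌊z⌋₊ + 1) := by
    intro q hq
    rw [Finset.mem_filter] at hq
    rw [Finset.mem_union]
    by_cases hqz : q ∈ Finset.range (⌊z⌋₊ + 1)
    · exact Or.inr hqz
    · left
      rw [Finset.mem_filter]
      refine ⟨hq.1, fun p hp hd => hqz ?_⟩
      unfold PQ at hp
      rw [Finset.mem_filter, Finset.mem_range] at hp
      rw [Finset.mem_range]
      rcases hp.2.dvd_mul.1 hd with h1 | h1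
      · rw [(Nat.prime_dvd_prime_iff_eq hp.2 hq.2.1).1 h1] at hp; exact hp.1
      · have := (Nat.prime_dvd_prime_iff_eq hp.2 hq.2.2).1 h1
        have : q ≤ h * q := Nat.le_mul_of_pos_left q h0
        omega
  have c1 := (Finset.card_le_card hsub).trans (Finset.card_union_le _ _)
  have c2 : (((Finset.range (⌊y⌋₊ + 1)).filter fun q => q.Prime ∧ (h * q + 1).Prime).card : ℝ) ≤
      (((Finset.range (⌊y⌋₊ + 1)).filter fun n => ∀ p ∈ PQ z, ¬ p ∣ n * (h * n + 1)).card : ℝ) +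
      ((Finset.range (⌊z⌋₊ + 1)).card : ℝ) := by exact_mod_cast c1
  rw [Finset.card_range] at c2
  push_cast at c2
  have := sieve_h h hh y z hy hz
  have := Nat.floor_le hz0
  linarith

lemma exists_delta (ε : ℝ) (hε : 0 < ε) : ∃ δ : ℝ, 0 < δ ∧ δ ≤ 1 ∧ (1 + δ) ^ 5 + δ ≤ 1 + ε := by
  refine ⟨min 1 (ε / 32), by positivity, min_le_left _ _, ?_⟩
  have h0 : 0 < min 1 (ε / 32) := by positivity
  have h1 : min 1 (ε / 32) ≤ 1 := min_le_left _ _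
  have h2 : min 1 (ε / 32) ≤ ε / 32 := min_le_right _ _
  generalize min 1 (ε / 32) = δ at *
  have a2 : δ ^ 2 ≤ δ := by nlinarith
  have a3 : δ ^ 3 ≤ δ := by nlinarith
  have a4 : δ ^ 4 ≤ δ := by nlinarith
  have a5 : δ ^ 5 ≤ δ := by nlinarith
  have e : (1 + δ) ^ 5 = 1 + 5 * δ + 10 * δ ^ 2 + 10 * δ ^ 3 + 5 * δ ^ 4 + δ ^ 5 := by ring
  rw [e]; linarith

set_option maxHeartbeats 1000000 in
lemma pairs_bound (ε : ℝ) (hε : 0 < ε) : ∃ y₀ : ℝ, ∀ y ≥ y₀, ∀ h : ℕ, 2 ∣ h → 0 < h →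
    (((Finset.range (⌊y⌋₊ + 1)).filter fun q => q.Prime ∧ (h * q + 1).Prime).card : ℝ) ≤
      (1 + ε) * 16 * twinConst * (Ch h * (y / Real.log y ^ 2)) := by
  obtain ⟨δ, hδ, hδ1, hδε⟩ := exists_delta ε hε
  have hT := twinConst_pos
  obtain ⟨z₀, hz₀⟩ := G2_lower δ hδ
  obtain ⟨a, ha⟩ : ∃ a : ℝ, a = 1 / (2 * (1 + δ)) := ⟨_, rfl⟩
  have ha0 : 0 < a := by rw [ha]; positivity
  have ha1 : 2 * a < 1 := by
    rw [ha, mul_one_div, div_lt_one (by positivity)]; linarith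
  have ha2 : a * (2 * (1 + δ)) = 1 := by rw [ha]; field_simp
  have e1 := (tendsto_rpow_atTop ha0).eventually_ge_atTop z₀
  have e2 := Real.tendsto_log_atTop.eventually_ge_atTop 1
  have hC : 0 < δ * 16 * twinConst / 12 := by positivity
  have e3 := (isLittleO_log_rpow_rpow_atTop (4 : ℝ) (by linarith : 0 < 1 - 2 * a)).bound hC
  obtain ⟨y₀, hy₀⟩ := Filter.eventually_atTop.1
    ((e1.and e2).and (e3.and (Filter.eventually_ge_atTop 1)))
  refine ⟨y₀, fun y hy h hh h0 => ?_⟩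
  obtain ⟨⟨f1, f2⟩, f3, f4⟩ := hy₀ y hy
  have hy0 : 0 < y := by linarith
  have hl : 0 < Real.log y := by linarith
  have hz1 : 1 ≤ y ^ a := Real.one_le_rpow f4 ha0.le
  have hlz : Real.log (y ^ a) = a * Real.log y := Real.log_rpow hy0 a
  have hz2 : (y ^ a) ^ 2 = y ^ (2 * a) := by
    rw [← Real.rpow_natCast, ← Real.rpow_mul hy0.le]; norm_num; ring_nf
  have hg := hz₀ _ f1
  have hGh := Gh_lower h hh h0 _ hz1
  have hb := pairs_bound_aux h hh h0 y _ hy0.le hz1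
  have hQ : ∀ p ∈ PQ (y ^ a), p.Prime := fun p hp => ((mem_PQ (by linarith)).1 hp).1
  have hGpos : 0 < SS (gh h) (PQ (y ^ a)) (y ^ a) :=
    SS_pos (fun p hp => (gh_pos hh (hQ p hp)).le) hz1
  have hCh := one_le_Ch h
  generalize SS (gh h) (PQ (y ^ a)) (y ^ a) = G at *
  generalize SS (gh 2) (PQ (y ^ a)) (y ^ a) = G2 at *
  rw [hlz] at hg hb
  generalize (y ^ a) = z at *
  -- main term
  have m1 : Real.log y ^ 2 ≤ (1 + δ) ^ 5 * 16 * twinConst * (Ch h * G) := by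
    have : Real.log y ^ 2 = (2 * (1 + δ)) ^ 2 * (a * Real.log y) ^ 2 := by
      rw [← mul_pow, ← mul_assoc, mul_comm _ a, ha2, one_mul]
    rw [this]
    calc (2 * (1 + δ)) ^ 2 * (a * Real.log y) ^ 2
        ≤ (2 * (1 + δ)) ^ 2 * ((1 + δ) ^ 3 * 4 * twinConst * (Ch h * G)) := by
          refine mul_le_mul_of_nonneg_left (hg.trans ?_) (by positivity)
          exact mul_le_mul_of_nonneg_left hGh (by positivity)
      _ = _ := by ring
  have m2 : y / G ≤ (1 + δ) ^ 5 * 16 * twinConst * (Ch h * (y / Real.log y ^ 2)) := by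
    rw [div_le_iff₀ hGpos]
    calc y = Real.log y ^ 2 * (y / Real.log y ^ 2) := by field_simp
      _ ≤ (1 + δ) ^ 5 * 16 * twinConst * (Ch h * G) * (y / Real.log y ^ 2) :=
          mul_le_mul_of_nonneg_right m1 (by positivity)
      _ = _ := by ring
  -- error term
  have r1 : Real.log y ^ 4 * z ^ 2 * 12 ≤ δ * 16 * twinConst * y := by
    have n1 : Real.log y ^ (4 : ℝ) = Real.log y ^ 4 := by
      rw [← Real.rpow_natCast]; norm_num
    rw [n1, Real.norm_of_nonneg (by positivity), Real.norm_of_nonneg (by positivity)] at f3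
    have n2 : y ^ (1 - 2 * a) * z ^ 2 = y := by
      rw [hz2, ← Real.rpow_add hy0]; simp
    calc Real.log y ^ 4 * z ^ 2 * 12
        ≤ δ * 16 * twinConst / 12 * y ^ (1 - 2 * a) * z ^ 2 * 12 := by gcongr
      _ = δ * 16 * twinConst * (y ^ (1 - 2 * a) * z ^ 2) := by ring
      _ = _ := by rw [n2]
  have r2 : (z * (1 + a * Real.log y)) ^ 2 + (z + 1) ≤ 12 * z ^ 2 * Real.log y ^ 2 := by
    have k1 : z + 1 ≤ 2 * z ^ 2 := by nlinarith
    have k2 : 1 ≤ Real.log y ^ 2 := by nlinarith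
    have k3 : 1 + a * Real.log y ≤ 2 * Real.log y := by
      have : a * Real.log y ≤ 1 * Real.log y := mul_le_mul_of_nonneg_right (by linarith) hl.le
      linarith
    have k4 : (z * (1 + a * Real.log y)) ^ 2 ≤ (z * (2 * Real.log y)) ^ 2 := by gcongr
    have k5 : 2 * z ^ 2 * 1 ≤ 2 * z ^ 2 * Real.log y ^ 2 := by gcongr
    have k6 : 0 ≤ z ^ 2 * Real.log y ^ 2 := by positivity
    have k7 : (z * (2 * Real.log y)) ^ 2 = 4 * (z ^ 2 * Real.log y ^ 2) := by ring
    rw [k7] at k4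
    linarith
  have r3 : (z * (1 + a * Real.log y)) ^ 2 + (z + 1) ≤
      δ * 16 * twinConst * (Ch h * (y / Real.log y ^ 2)) := by
    refine r2.trans ?_
    have : 12 * z ^ 2 * Real.log y ^ 2 ≤ δ * 16 * twinConst * (1 * (y / Real.log y ^ 2)) := by
      rw [one_mul, ← mul_div_assoc, le_div_iff₀ (by positivity)]
      linarith
    refine this.trans ?_
    gcongr
  have X0 : 0 ≤ 16 * twinConst * (Ch h * (y / Real.log y ^ 2)) := by positivity
  calc _ ≤ _ := hb
    _ ≤ ((1 + δ) ^ 5 + δ) * (16 * twinConst * (Ch h * (y / Real.log y ^ 2))) := by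
        linarith
    _ ≤ (1 + ε) * (16 * twinConst * (Ch h * (y / Real.log y ^ 2))) :=
        mul_le_mul_of_nonneg_right hδε X0
    _ = _ := by ring

lemma Pplus_mem {n : ℕ} (hn : n ≠ 1) (h : 0 < Pplus n) : Pplus n ∈ n.primeFactors := by
  unfold Pplus at *
  rw [if_neg hn] at *
  have hne : n.primeFactors.Nonempty := by
    rw [Finset.nonempty_iff_ne_empty]
    intro e
    rw [e] at h
    simp at h
  obtain ⟨p, hp, e⟩ := Finset.exists_mem_eq_sup _ hne id
  rw [e]
  exact hp

/-- For fixed `1/2 ≤ c < 1`,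
`T'_c(x) ≤ (1+o(1))·16·𝔖·Σ_{h < x^{1−c}, h even} ∏_{p∣h, p>2}(1+1/(p−2))·(x/h)/(log(x/h))²`. -/
theorem T'_le_sieve_sum (c : ℝ) (hc1 : 1 / 2 ≤ c) (hc2 : c < 1) :
    ∀ ε > (0 : ℝ), ∃ x₀ : ℝ, ∀ x ≥ x₀,
      (T' c x : ℝ) ≤ (1 + ε) * 16 * twinConst *
        ∑ h ∈ (Finset.range (⌈x ^ (1 - c)⌉₊ + 1)).filter
            (fun h : ℕ => 2 ∣ h ∧ 0 < h ∧ (h : ℝ) < x ^ (1 - c)),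
          (∏ p ∈ h.primeFactors.filter (fun p => 2 < p), (1 + 1 / ((p : ℝ) - 2))) *
            ((x / h) / (Real.log (x / h)) ^ 2) := by
  intro ε hε
  obtain ⟨y₀, hy₀⟩ := pairs_bound ε hε
  have hc0 : 0 < c := by linarith
  have e1 := (tendsto_rpow_atTop hc0).eventually_ge_atTop (max 3 y₀)
  obtain ⟨x₀, hx₀⟩ := Filter.eventually_atTop.1 (e1.and (Filter.eventually_ge_atTop 1))
  refine ⟨x₀, fun x hx => ?_⟩
  obtain ⟨f1, f2⟩ := hx₀ x hx
  have hx0 : 0 < x := by linarith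
  have hxc3 : 3 ≤ x ^ c := (le_max_left _ _).trans f1
  have hxy : y₀ ≤ x ^ c := (le_max_right _ _).trans f1
  have hxx : x ^ (1 - c) * x ^ c = x := by rw [← Real.rpow_add hx0]; simp
  set H := (Finset.range (⌈x ^ (1 - c)⌉₊ + 1)).filter
            (fun h : ℕ => 2 ∣ h ∧ 0 < h ∧ (h : ℝ) < x ^ (1 - c)) with hH
  have hsub : ((Finset.range (⌊x⌋₊ + 1)).filter
      (fun p : ℕ => p.Prime ∧ x ^ c ≤ (Pplus (p - 1) : ℝ))) ⊆
      H.biUnion fun h => ((Finset.range (⌊x / h⌋₊ + 1)).filter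
        fun q => q.Prime ∧ (h * q + 1).Prime).image fun q => h * q + 1 := by
    intro p hp
    rw [Finset.mem_filter, Finset.mem_range, Nat.lt_succ_iff, Nat.le_floor_iff hx0.le] at hp
    obtain ⟨hpx, hpp, hP⟩ := hp
    have hP3 : (3 : ℝ) ≤ (Pplus (p - 1) : ℝ) := hxc3.trans hP
    have hP3' : 3 ≤ Pplus (p - 1) := by exact_mod_cast hP3
    have hn1 : p - 1 ≠ 1 := by
      intro e
      rw [e] at hP3'
      simp [Pplus] at hP3'
    have hmem := Pplus_mem hn1 (by omega)
    generalize Pplus (p - 1) = q at *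
    obtain ⟨hq, hqd, hne⟩ := Nat.mem_primeFactors.1 hmem
    obtain ⟨h, hh⟩ := hqd
    have hp1 : h * q + 1 = p := by
      have := hpp.two_le
      rw [mul_comm, ← hh]; omega
    have hpodd : Odd p := hpp.odd_of_ne_two (by omega)
    have hqodd : Odd q := hq.odd_of_ne_two (by omega)
    have hheven : 2 ∣ h := by
      have hev : 2 ∣ q * h := by
        rw [← hh]
        obtain ⟨k, hk⟩ := hpodd
        exact ⟨k, by omega⟩
      rcases Nat.prime_two.dvd_mul.1 hev with h1 | h1
      · obtain ⟨k, hk⟩ := hqodd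
        omega
      · exact h1
    have hh0 : 0 < h := by
      rcases Nat.eq_zero_or_pos h with e | e
      · subst e; omega
      · exact e
    have hh0' : (0 : ℝ) < h := by exact_mod_cast hh0
    have hR : (h : ℝ) * q + 1 ≤ x := by
      refine le_trans (le_of_eq ?_) hpx
      exact_mod_cast hp1
    have hlt : (h : ℝ) < x ^ (1 - c) := by
      have : (h : ℝ) * x ^ c < x ^ (1 - c) * x ^ c := by
        rw [hxx]
        have : (h : ℝ) * x ^ c ≤ h * q := mul_le_mul_of_nonneg_left hP hh0'.le
        linarith
      exact lt_of_mul_lt_mul_right this (by positivity)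
    rw [Finset.mem_biUnion]
    refine ⟨h, ?_, ?_⟩
    · rw [hH, Finset.mem_filter, Finset.mem_range, Nat.lt_succ_iff]
      refine ⟨?_, hheven, hh0, hlt⟩
      have := hlt.le.trans (Nat.le_ceil _)
      exact_mod_cast this
    · rw [Finset.mem_image]
      refine ⟨q, ?_, hp1⟩
      rw [Finset.mem_filter, Finset.mem_range, Nat.lt_succ_iff, Nat.le_floor_iff (by positivity),
        le_div_iff₀ hh0']
      refine ⟨by nlinarith, hq, ?_⟩
      rw [hp1]; exact hpp
  have c1 : T' c x ≤ ∑ h ∈ H, ((Finset.range (⌊x / h⌋₊ + 1)).filter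
        fun q => q.Prime ∧ (h * q + 1).Prime).card := by
    unfold T'
    refine le_trans (le_of_eq (by congr!)) ((Finset.card_le_card hsub).trans
      (Finset.card_biUnion_le.trans ?_))
    exact Finset.sum_le_sum fun h _ => Finset.card_image_le
  have c2 : (T' c x : ℝ) ≤ ∑ h ∈ H, (((Finset.range (⌊x / h⌋₊ + 1)).filter
        fun q => q.Prime ∧ (h * q + 1).Prime).card : ℝ) := by exact_mod_cast c1
  refine c2.trans ?_
  rw [Finset.mul_sum]
  refine Finset.sum_le_sum fun h hmem => ?_
  rw [hH, Finset.mem_filter] at hmem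
  obtain ⟨_, hev, hpos, hlt⟩ := hmem
  have hh0' : (0 : ℝ) < h := by exact_mod_cast hpos
  have hy : y₀ ≤ x / h := by
    refine hxy.trans ?_
    rw [le_div_iff₀ hh0']
    calc x ^ c * h ≤ x ^ c * x ^ (1 - c) := mul_le_mul_of_nonneg_left hlt.le (by positivity)
      _ = x := by rw [mul_comm]; exact hxx
  have := hy₀ (x / h) hy h hev hpos
  unfold Ch at this
  convert this using 6
end

section
/- For every positive integer h, ∏_{p | h, p > 2} (1 + 1/(p − 2)) ≤ 2·∏_{p | h, p > 2} (1 + 1/p), where both products range over the odd prime divisors of h and an empty product equals 1. -/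
open Real Finset

attribute [local instance] Classical.propDecidable

/-- Telescoping product over the odd numbers `3, 5, …, 2n+1`. -/
theorem telescoping_aux (n : ℕ) :
    ∏ k ∈ Finset.range n, ((1 + 1 / (((2 * k + 3 : ℕ) : ℝ) - 2)) / (1 + 1 / ((2 * k + 3 : ℕ) : ℝ)))
      = (2 * n + 1) / (n + 1) := by
  induction n with
  | zero => simp
  | succ n ih =>
    rw [Finset.prod_range_succ, ih]
    push_cast
    have e : (2 * (n : ℝ) + 3 - 2) = 2 * n + 1 := by ring
    rw [e]
    have h1 : (2 * (n : ℝ) + 1) ≠ 0 := by positivity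
    have h2 : (2 * (n : ℝ) + 3) ≠ 0 := by positivity
    have h3 : ((n : ℝ) + 1) ≠ 0 := by positivity
    have h4 : ((n : ℝ) + 1 + 1) ≠ 0 := by positivity
    have h5 : (1 + 1 / (2 * (n : ℝ) + 3)) = 2 * (n + 1 + 1) / (2 * n + 3) := by
      field_simp; ring
    have h6 : (1 + 1 / (2 * (n : ℝ) + 1)) = 2 * (n + 1) / (2 * n + 1) := by
      field_simp; ring
    rw [h5, h6]
    field_simp
    ring

/-- For every positive integer `h`,
`∏_{p ∣ h, p > 2} (1 + 1/(p − 2)) ≤ 2 · ∏_{p ∣ h, p > 2} (1 + 1/p)`. -/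
theorem prod_one_add_inv_sub_two_le (h : ℕ) (hh : 0 < h) :
    (∏ p ∈ h.primeFactors.filter (fun p => 2 < p), (1 + 1 / ((p : ℝ) - 2))) ≤
      2 * ∏ p ∈ h.primeFactors.filter (fun p => 2 < p), (1 + 1 / (p : ℝ)) := by
  have hpos : 0 < ∏ p ∈ h.primeFactors.filter (fun p => 2 < p), (1 + 1 / (p : ℝ)) :=
    Finset.prod_pos fun p _ => by positivity
  rw [← div_le_iff₀ hpos, ← Finset.prod_div_distrib]
  have hsub : h.primeFactors.filter (fun p => 2 < p) ⊆
      (Finset.range h).image (fun k => 2 * k + 3) := by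
    intro p hp
    rw [Finset.mem_filter] at hp
    obtain ⟨hp, h2⟩ := hp
    have hle := Nat.le_of_mem_primeFactors hp
    obtain ⟨m, hm⟩ := (Nat.prime_of_mem_primeFactors hp).odd_of_ne_two (by omega)
    rw [Finset.mem_image]
    exact ⟨m - 1, Finset.mem_range.2 (by omega), by omega⟩
  have hone : ∀ p : ℕ, p ∈ (Finset.range h).image (fun k => 2 * k + 3) →
      (1 : ℝ) ≤ (1 + 1 / ((p : ℝ) - 2)) / (1 + 1 / (p : ℝ)) := by
    intro p hp
    obtain ⟨k, -, rfl⟩ := Finset.mem_image.1 hp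
    rw [one_le_div (by positivity)]
    have : (0 : ℝ) ≤ k := by positivity
    push_cast
    gcongr
    · linarith
    · linarith
  refine (Finset.prod_le_prod_of_subset_of_one_le hsub
    (fun p hp => zero_le_one.trans (hone p (hsub hp))) (fun p hp _ => hone p hp)).trans ?_
  rw [Finset.prod_image (by intro a _ b _ hab; simpa using hab), telescoping_aux,
    div_le_iff₀ (by positivity)]
  linarith
end
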